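/- arXiv:2410.07098 — 4 statements merged into one kernel-verified Lean document; each statement's English description precedes it below -/
import Mathlib

section
/- Let k ≥ 1 and let N be a positive integer with the following Ramsey property: for every red-blue coloring of all pairs of a linearly ordered N-element set there exist k elements such that the coloring induced on those k elements (with the inherited order) is admissible. Then for every η > 0 there exists c > 0 such that for all sufficiently large n the following holds: if G is an ordered graph on n vertices containing no induced monotone path P_{2k}, and the complement Ḡ contains at least η·n^N copies of K_N, then Ḡ contains K_2[t] with t = ⌈c·n/log n⌉. -/
/-- The number of `r`-element vertex subsets of `G` inducing a complete subgraph
(copies of `K_r`). -/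
noncomputable def cliqueCount {V : Type*} [Fintype V] (G : SimpleGraph V) (r : ℕ) : ℕ :=
  Set.ncard {s : Finset V | s.card = r ∧ G.IsClique (s : Set V)}

/-- `G` contains `K_r[t]`: `r` pairwise disjoint vertex sets of size `t` with all
pairs of vertices from distinct sets adjacent. -/
def ContainsBlowup {V : Type*} (G : SimpleGraph V) (r t : ℕ) : Prop :=
  ∃ A : Fin r → Finset V,
    (∀ i, (A i).card = t) ∧
    (∀ i j, i ≠ j → Disjoint (A i) (A j)) ∧
    (∀ i j, i ≠ j → ∀ x ∈ A i, ∀ y ∈ A j, G.Adj x y)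

/-- The ordered graph `G` on `Fin n` contains an induced monotone path with `m`
vertices: `v 0 < v 1 < ⋯ < v (m-1)` with adjacency exactly between consecutive
vertices. -/
def HasIndMonPath {n : ℕ} (G : SimpleGraph (Fin n)) (m : ℕ) : Prop :=
  ∃ v : Fin m → Fin n, StrictMono v ∧
    ∀ i j : Fin m, G.Adj (v i) (v j) ↔ ((i : ℕ) + 1 = (j : ℕ) ∨ (j : ℕ) + 1 = (i : ℕ))

/-- The color of the pair `{x, y}` under `χ`, where `χ i j` is only meaningful
for `i < j` (`true` = red, `false` = blue). -/
def colorOf {k : ℕ} (χ : Fin k → Fin k → Bool) (x y : Fin k) : Bool :=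
  if x < y then χ x y else χ y x

/-- `(a, b)` is a directed edge of the dependency digraph `D(χ)`: there are
consecutive vertices `i, i+1` with `b ∈ {i, i+1}`, `a ∉ {i, i+1}`,
`χ(i, i+1)` red, and both pairs `{i, a}`, `{i+1, a}` blue. -/
def DepEdge {k : ℕ} (χ : Fin k → Fin k → Bool) (a b : Fin k) : Prop :=
  ∃ i i' : Fin k, (i : ℕ) + 1 = (i' : ℕ) ∧ (b = i ∨ b = i') ∧ a ≠ i ∧ a ≠ i' ∧
    χ i i' = true ∧ colorOf χ i a = false ∧ colorOf χ i' a = false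

/-- `χ` is admissible: its dependency digraph has no directed cycle. -/
def Admissible {k : ℕ} (χ : Fin k → Fin k → Bool) : Prop :=
  ∀ a : Fin k, ¬ Relation.TransGen (DepEdge χ) a a

/-!
If `Gᶜ` has no `K_2[t]`, then any two disjoint sets of `t` vertices span an edge of `G`, so halving
a set of starting points while adding `3 * t` new vertices produces, inside every set of about
`t * log t` vertices, a vertex from which monotone paths reach `t` vertices. If some large set were
sparse in `G`, an induced monotone path could be extended again and again by passing to such a
vertex among the new neighbours of the ball around its end; hence without `P_{2k}` every large set
is dense in `G`, and contains an ordered pair of halves that is dense in `G` hereditarily.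

Szemerédi's regularity lemma applied to `Gᶜ` and the many copies of `K_N` give `N` consecutive parts
whose pairs are regular and dense in `Gᶜ`, each split into two such halves. Colour a pair of parts
red if `Gᶜ` is almost complete between them, so that `G` is dense between the parts of a blue pair,
and pick `k` parts with admissible colouring. The path `P_{2k}` with two vertices in each part is
embedded greedily. The only obstacle is a path edge between consecutive red parts `i` and `i + 1`,
which comes from the absence of `K_2[t]` and has to be embedded in one step; the common
neighbourhood of its two ends in a part `j` is large unless both `j, i` and `j, i + 1` are blue.
Embedding along the acyclic dependency digraph avoids this case.
-/

open Finset

section Order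

variable {V ι : Type*} [LinearOrder V]

/-- `A` precedes `B` in the vertex order: every element of `A` is smaller than every element of
`B`. -/
def Precedes (A B : Finset V) : Prop := ∀ a ∈ A, ∀ b ∈ B, a < b

lemma Precedes.mono {A A' B B' : Finset V} (h : Precedes A B) (hA : A' ⊆ A) (hB : B' ⊆ B) :
    Precedes A' B' := fun a ha b hb => h a (hA ha) b (hB hb)

lemma Precedes.disjoint {A B : Finset V} (h : Precedes A B) : Disjoint A B :=
  disjoint_left.2 fun a ha hb => lt_irrefl a (h a ha a hb)

lemma exists_initial_segment (D : Finset V) {a : ℕ} (ha : a ≤ #D) :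
    ∃ D₁ ⊆ D, #D₁ = a ∧ Precedes D₁ (D \ D₁) := by
  induction D using Finset.induction_on_max with
  | empty => exact ⟨∅, subset_rfl, (Nat.le_zero.1 ha).symm, by simp [Precedes]⟩
  | insert m D hm ih =>
    have hmD : m ∉ D := fun h => lt_irrefl m (hm m h)
    rw [card_insert_of_notMem hmD] at ha
    obtain rfl | ha := ha.eq_or_lt
    · exact ⟨insert m D, subset_rfl, card_insert_of_notMem hmD, by simp [Precedes]⟩
    · obtain ⟨D₁, hD₁, hcard, hprec⟩ := ih (Nat.lt_succ_iff.1 ha)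
      refine ⟨D₁, hD₁.trans (subset_insert m D), hcard, fun x hx y hy => ?_⟩
      obtain ⟨hy, hyD₁⟩ := mem_sdiff.1 hy
      obtain rfl | hy := mem_insert.1 hy
      exacts [hm x (hD₁ hx), hprec x hx y (mem_sdiff.2 ⟨hy, hyD₁⟩)]

-- Cut off first the initial segment, among those of the right sizes, that ends earliest.
lemma exists_separated_of_mul_le {q : ι → ℕ} (hq : ∀ i, 0 < q i) (s : Finset ι)
    (X : ι → Finset V) (hX : ∀ i, #s * q i ≤ #(X i)) :
    ∃ Y : ι → Finset V, (∀ i, Y i ⊆ X i) ∧ (∀ i ∈ s, #(Y i) = q i) ∧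
      ∀ i ∈ s, ∀ j ∈ s, i ≠ j → Precedes (Y i) (Y j) ∨ Precedes (Y j) (Y i) := by
  classical
  induction s using Finset.strongInduction generalizing X with
  | H s ih =>
    obtain rfl | hs := s.eq_empty_or_nonempty
    · exact ⟨X, fun i => subset_rfl, by simp, by simp⟩
    choose D hDX hDcard hD using fun i => exists_initial_segment (X i)
      ((Nat.le_mul_of_pos_left (q i) hs.card_pos).trans (hX i))
    obtain ⟨i, hi, hmin⟩ := exists_min_image s (fun i => (D i).max) hs
    have hbefore : ∀ j ∈ s, Precedes (D i) (X j \ D j) := fun j hj x hx y hy => by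
      have hDj : (D j).Nonempty := card_pos.1 (hDcard j ▸ hq j)
      have hx_le : x ≤ (D j).max' hDj := WithBot.coe_le_coe.1
        ((le_max hx).trans ((hmin j hj).trans_eq (coe_max' hDj).symm))
      exact hx_le.trans_lt (hD j _ (max'_mem _ _) y hy)
    obtain ⟨Y, hYX, hYcard, hY⟩ := ih (s.erase i) (erase_ssubset hi) (fun j => X j \ D j)
      fun j => by
        rw [card_sdiff_of_subset (hDX j), hDcard, card_erase_of_mem hi, Nat.sub_one_mul]
        exact Nat.sub_le_sub_right (hX j) _
    have hbeforeY : ∀ j ∈ s, Precedes (D i) (Y j) :=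
      fun j hj => (hbefore j hj).mono subset_rfl (hYX j)
    refine ⟨Function.update Y i (D i), fun j => ?_, fun j hj => ?_, fun a ha b hb hab => ?_⟩
    · obtain rfl | hji := eq_or_ne j i
      · simpa using hDX j
      · simpa [hji] using (hYX j).trans sdiff_subset
    · obtain rfl | hji := eq_or_ne j i
      · simpa using hDcard j
      · simpa [hji] using hYcard j (mem_erase.2 ⟨hji, hj⟩)
    · obtain rfl | hai := eq_or_ne a i
      · simpa [hab.symm] using Or.inl (hbeforeY b hb)
      obtain rfl | hbi := eq_or_ne b i
      · simpa [hai] using Or.inr (hbeforeY a ha)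
      simpa [hai, hbi] using hY a (mem_erase.2 ⟨hai, ha⟩) b (mem_erase.2 ⟨hbi, hb⟩) hab

lemma exists_separated [Fintype ι] (X : ι → Finset V) (hX : ∀ i, Fintype.card ι ≤ #(X i)) :
    ∃ Y : ι → Finset V, (∀ i, Y i ⊆ X i) ∧ (∀ i, #(X i) ≤ 2 * Fintype.card ι * #(Y i)) ∧
      ∀ i j, i ≠ j → Precedes (Y i) (Y j) ∨ Precedes (Y j) (Y i) := by
  classical
  obtain h | h := isEmpty_or_nonempty ι
  · exact ⟨X, fun i => subset_rfl, h.elim, h.elim⟩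
  have hpos : 0 < Fintype.card ι := Fintype.card_pos
  obtain ⟨Y, hYX, hYcard, hY⟩ := exists_separated_of_mul_le
    (fun i => Nat.div_pos (hX i) hpos) univ X fun i => Nat.mul_div_le _ _
  refine ⟨Y, hYX, fun i => ?_, fun i j => hY i (mem_univ i) j (mem_univ j)⟩
  rw [hYcard i (mem_univ i), mul_assoc, two_mul]
  have hround := Nat.lt_mul_div_succ #(X i) hpos
  have hone := Nat.mul_le_mul_left (Fintype.card ι) (Nat.div_pos (hX i) hpos)
  rw [mul_add] at hround
  exact hround.le.trans (Nat.add_le_add_left hone _)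

lemma exists_sorted {N : ℕ} (X : Fin N → Finset V) (hX : ∀ i, N ≤ #(X i)) :
    ∃ (τ : Equiv.Perm (Fin N)) (Y : Fin N → Finset V), (∀ i, Y i ⊆ X (τ i)) ∧
      (∀ i, #(X (τ i)) ≤ 2 * N * #(Y i)) ∧ ∀ i j, i < j → Precedes (Y i) (Y j) := by
  obtain ⟨Y, hYX, hYcard, hY⟩ := exists_separated X (by simpa using hX)
  rw [Fintype.card_fin] at hYcard
  have hne : ∀ i, (Y i).Nonempty := fun i => nonempty_iff_ne_empty.2 fun h =>
    (i.pos.trans_le (hX i)).not_ge (by simpa [h] using hYcard i)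
  let τ := Tuple.sort fun i => (Y i).min' (hne i)
  have hmin : Monotone fun i => (Y (τ i)).min' (hne (τ i)) :=
    Tuple.monotone_sort fun i => (Y i).min' (hne i)
  refine ⟨τ, fun i => Y (τ i), fun i => hYX _, fun i => hYcard _, fun i j hij => ?_⟩
  refine (hY _ _ (τ.injective.ne hij.ne)).resolve_right fun hji => ?_
  exact (hmin hij.le).not_gt (hji _ (min'_mem _ _) _ (min'_mem _ _))

end Order

section BipartiteHoleFree

variable {V : Type*} {G : SimpleGraph V} {t : ℕ}

/-- A graph is free of bipartite holes of size `t` if any two disjoint sets of at least `t` vertices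
span an edge between them. -/
def BipartiteHoleFree (G : SimpleGraph V) (t : ℕ) : Prop :=
  ∀ ⦃A B : Finset V⦄, Disjoint A B → t ≤ #A → t ≤ #B → ∃ a ∈ A, ∃ b ∈ B, G.Adj a b

lemma BipartiteHoleFree.pos (hG : BipartiteHoleFree G t) : 0 < t := by
  by_contra! ht
  obtain ⟨a, ha, -⟩ := hG (disjoint_empty_left ∅) ht ht
  exact notMem_empty a ha

lemma BipartiteHoleFree.of_not_containsBlowup (h : ¬ ContainsBlowup Gᶜ 2 t) :
    BipartiteHoleFree G t := by
  contrapose! h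
  simp only [BipartiteHoleFree, not_forall, not_exists, not_and] at h
  obtain ⟨A, B, hAB, hA, hB, hnadj⟩ := h
  obtain ⟨A', hA', hAcard⟩ := exists_subset_card_eq hA
  obtain ⟨B', hB', hBcard⟩ := exists_subset_card_eq hB
  have hdisj : Disjoint A' B' := hAB.mono hA' hB'
  have hcompl : ∀ x ∈ A', ∀ y ∈ B', Gᶜ.Adj x y := fun x hx y hy =>
    (G.compl_adj x y).2 ⟨disjoint_left.1 hdisj hx ∘ (· ▸ hy), hnadj x (hA' hx) y (hB' hy)⟩
  refine ⟨![A', B'], ?_, ?_, ?_⟩ <;> simp only [Fin.forall_fin_two]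
  · exact ⟨hAcard, hBcard⟩
  · simpa using ⟨hdisj, hdisj.symm⟩
  · simpa using ⟨hcompl, fun x hx y hy => (hcompl y hy x hx).symm⟩

open scoped Classical in
lemma BipartiteHoleFree.card_lt_card_filter_add (hG : BipartiteHoleFree G t) {A E : Finset V}
    (hAE : Disjoint A E) (hA : t ≤ #A) : #E < #{e ∈ E | ∃ a ∈ A, G.Adj a e} + t := by
  rw [← card_filter_add_card_filter_not (s := E) fun e => ∃ a ∈ A, G.Adj a e]
  refine Nat.add_lt_add_left (not_le.1 fun hE => ?_) _
  obtain ⟨a, ha, e, he, hae⟩ := hG (hAE.mono_right (filter_subset _ E)) hA hE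
  exact (mem_filter.1 he).2 ⟨a, ha, hae⟩

end BipartiteHoleFree

section MonotoneBall

open scoped Classical

variable {V : Type*} [LinearOrder V] {G : SimpleGraph V} {T D : Finset V} {r t : ℕ}

/-- The vertices reachable from `T` by a monotone path with at most `r` edges all of whose vertices
after the first one lie in `D`. -/
noncomputable def monotoneBall (G : SimpleGraph V) (T D : Finset V) : ℕ → Finset V
  | 0 => T
  | r + 1 => monotoneBall G T D r ∪ {y ∈ D | ∃ u ∈ monotoneBall G T D r, u < y ∧ G.Adj u y}

lemma mem_monotoneBall_succ {y : V} :
    y ∈ monotoneBall G T D (r + 1) ↔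
      y ∈ monotoneBall G T D r ∨ y ∈ D ∧ ∃ u ∈ monotoneBall G T D r, u < y ∧ G.Adj u y := by
  rw [monotoneBall, mem_union, mem_filter]

lemma monotoneBall_mono (G : SimpleGraph V) (T D : Finset V) : Monotone (monotoneBall G T D) :=
  monotone_nat_of_le_succ fun _ => subset_union_left

lemma monotoneBall_subset (G : SimpleGraph V) (T D : Finset V) (r : ℕ) :
    monotoneBall G T D r ⊆ T ∪ D := by
  induction r with
  | zero => exact subset_union_left
  | succ r ih => exact union_subset ih ((filter_subset _ D).trans subset_union_right)

lemma monotoneBall_subset_monotoneBall {D' : Finset V} (hD : D ⊆ D') :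
    monotoneBall G T D r ⊆ monotoneBall G T D' r := by
  induction r with
  | zero => exact subset_rfl
  | succ r ih =>
    intro y hy
    rw [mem_monotoneBall_succ] at hy ⊢
    exact hy.imp (@ih y) fun ⟨hyD, u, hu, huy⟩ => ⟨hD hyD, u, ih hu, huy⟩

lemma monotoneBall_empty (G : SimpleGraph V) (D : Finset V) (r : ℕ) : monotoneBall G ∅ D r = ∅ := by
  induction r with
  | zero => rfl
  | succ r ih => simp [monotoneBall, ih]

lemma monotoneBall_union (G : SimpleGraph V) (T T' D : Finset V) (r : ℕ) :
    monotoneBall G (T ∪ T') D r = monotoneBall G T D r ∪ monotoneBall G T' D r := by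
  induction r with
  | zero => rfl
  | succ r ih =>
    ext y
    simp only [mem_union, mem_monotoneBall_succ, ih, or_and_right, exists_or, and_or_left]
    exact or_or_or_comm

lemma monotoneBall_singleton_subset_succ {p x : V} (hx : x ∈ D) (hpx : p < x) (hadj : G.Adj p x) :
    monotoneBall G {x} D r ⊆ monotoneBall G {p} D (r + 1) := by
  induction r with
  | zero =>
    exact singleton_subset_iff.2 <|
      mem_monotoneBall_succ.2 (Or.inr ⟨hx, p, mem_singleton_self p, hpx, hadj⟩)
  | succ r ih =>
    intro y hy
    exact mem_monotoneBall_succ.2 <| (mem_monotoneBall_succ.1 hy).imp (@ih y)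
      fun ⟨hyD, u, hu, huy⟩ => ⟨hyD, u, ih hu, huy⟩

lemma filter_adj_subset_monotoneBall_succ {E : Finset V} (hprec : Precedes (T ∪ D) E) :
    {e ∈ E | ∃ a ∈ monotoneBall G T D r, G.Adj a e} ⊆ monotoneBall G T (D ∪ E) (r + 1) := by
  intro e he
  obtain ⟨heE, a, ha, hae⟩ := mem_filter.1 he
  exact mem_monotoneBall_succ.2 <| Or.inr ⟨mem_union_right D heE, a,
    monotoneBall_subset_monotoneBall subset_union_left ha,
    hprec a (monotoneBall_subset G T D r ha) e heE, hae⟩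

-- The ball around `T` meets all but `t` of the next `3 * t` vertices, so half of `T` reaches `t`.
lemma BipartiteHoleFree.exists_card_le_two_pow_of_mul_le (hG : BipartiteHoleFree G t) {L : ℕ}
    (ht : t ≤ 2 ^ L) {i : ℕ} (hi : i ≤ L) (hD : t * (3 * i + 1) ≤ #D) :
    ∃ T ⊆ D, #T ≤ 2 ^ (L - i) ∧ ∃ r, t ≤ #(monotoneBall G T D r) := by
  induction i generalizing D with
  | zero =>
    obtain ⟨T, hTD, hT⟩ := exists_subset_card_eq (n := t) (by simpa using hD)
    exact ⟨T, hTD, hT.trans_le ht, 0, hT.ge⟩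
  | succ i ih =>
    have hsplit : t * (3 * (i + 1) + 1) = t * (3 * i + 1) + 3 * t := by ring
    obtain ⟨D₁, hD₁, hD₁card, hprec⟩ := exists_initial_segment D
      ((Nat.le_add_right _ _).trans (hsplit ▸ hD))
    obtain ⟨T, hTD₁, hT, r, hr⟩ := ih (Nat.le_of_succ_le hi) hD₁card.ge
    have hball : monotoneBall G T D₁ r ⊆ D₁ :=
      (monotoneBall_subset G T D₁ r).trans (union_subset hTD₁ subset_rfl)
    have hreached := hG.card_lt_card_filter_add ((disjoint_sdiff (t := D)).mono_left hball) hr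
    rw [card_sdiff_of_subset hD₁] at hreached
    obtain ⟨T₁, hT₁, hT₁card⟩ := exists_subset_card_eq (Nat.div_le_self #T 2)
    have hT₂card := card_sdiff_of_subset hT₁
    have hpow : 2 ^ (L - i) = 2 * 2 ^ (L - (i + 1)) := by
      rw [← pow_succ', Nat.sub_add_eq, Nat.sub_add_cancel (Nat.le_sub_of_add_le' hi)]
    have hcover : {e ∈ D \ D₁ | ∃ a ∈ monotoneBall G T D₁ r, G.Adj a e} ⊆
        monotoneBall G T₁ D (r + 1) ∪ monotoneBall G (T \ T₁) D (r + 1) := by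
      rw [← monotoneBall_union, union_sdiff_of_subset hT₁]
      simpa only [union_sdiff_of_subset hD₁] using
        filter_adj_subset_monotoneBall_succ (hprec.mono (union_subset hTD₁ subset_rfl) subset_rfl)
    have hcard := (card_le_card hcover).trans (card_union_le _ _)
    obtain h | h := le_or_gt t #(monotoneBall G T₁ D (r + 1))
    · exact ⟨T₁, hT₁.trans (hTD₁.trans hD₁), by omega, r + 1, h⟩
    · exact ⟨T \ T₁, sdiff_subset.trans (hTD₁.trans hD₁), by omega, r + 1, by omega⟩

lemma BipartiteHoleFree.exists_expanding_vertex (hG : BipartiteHoleFree G t)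
    (hD : t * (3 * Nat.clog 2 t + 1) ≤ #D) : ∃ x ∈ D, ∃ r, t ≤ #(monotoneBall G {x} D r) := by
  obtain ⟨T, hTD, hT, r, hr⟩ :=
    hG.exists_card_le_two_pow_of_mul_le (Nat.le_pow_clog one_lt_two t) le_rfl hD
  have hne : #T ≠ 0 := fun h => hG.pos.not_ge <| by
    rwa [card_eq_zero.1 h, monotoneBall_empty, card_empty] at hr
  obtain ⟨x, rfl⟩ := card_eq_one.1 (le_antisymm (by simpa using hT) (Nat.one_le_iff_ne_zero.2 hne))
  exact ⟨x, singleton_subset_iff.1 hTD, r, hr⟩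

end MonotoneBall

section InducedPaths

variable {V : Type*} [LinearOrder V] {G : SimpleGraph V} {P : Finset V} {y : V}

/-- `IndPathTo G P y` says that some induced monotone path of `G` has last vertex `y` and the
vertices in `P` before it; such a path has `#P + 1` vertices. -/
inductive IndPathTo (G : SimpleGraph V) : Finset V → V → Prop
  | single (y : V) : IndPathTo G ∅ y
  | snoc {P : Finset V} {u y : V} (hP : IndPathTo G P u) (huy : u < y) (hadj : G.Adj u y)
      (hnadj : ∀ z ∈ P, ¬ G.Adj z y) : IndPathTo G (insert u P) y

lemma IndPathTo.lt_of_mem (h : IndPathTo G P y) : ∀ z ∈ P, z < y := by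
  induction h with
  | single y => simp
  | snoc _ huy _ _ ih => simpa using ⟨huy, fun z hz => (ih z hz).trans huy⟩

lemma IndPathTo.card_insert (h : IndPathTo G P y) : #(insert y P) = #P + 1 :=
  card_insert_of_notMem fun hy => lt_irrefl y (h.lt_of_mem y hy)

lemma IndPathTo.exists_card_eq (h : IndPathTo G P y) {m : ℕ} (hm : m ≤ #P) :
    ∃ P' y', IndPathTo G P' y' ∧ #P' = m := by
  induction h with
  | single y => exact ⟨∅, y, .single y, (Nat.le_zero.1 hm).symm⟩
  | @snoc P u y hP huy hadj hnadj ih =>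
    rw [hP.card_insert] at hm
    obtain rfl | hm := hm.eq_or_lt
    · exact ⟨_, y, .snoc hP huy hadj hnadj, hP.card_insert⟩
    · exact ih (Nat.lt_succ_iff.1 hm)

lemma IndPathTo.exists_strictMono (h : IndPathTo G P y) :
    ∃ v : Fin (#P + 1) → V, (StrictMono v ∧ ∀ i j : Fin (#P + 1),
      G.Adj (v i) (v j) ↔ ((i : ℕ) + 1 = j ∨ (j : ℕ) + 1 = i)) ∧
      v (Fin.last #P) = y ∧ ∀ i : Fin #P, v i.castSucc ∈ P := by
  induction h with
  | single y =>
    rw [card_empty]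
    exact ⟨fun _ => y, ⟨Subsingleton.strictMono (α := Fin 1) _, by simp⟩, rfl, Fin.elim0⟩
  | @snoc P u y hP huy hadj hnadj ih =>
    obtain ⟨v, ⟨hmono, hv⟩, hlast, hinit⟩ := ih
    have hv_mem : ∀ i, v i ∈ insert u P := Fin.lastCases (by simp [hlast])
      fun i => mem_insert_of_mem (hinit i)
    have hlt : ∀ i, v i < y := fun i => by
      obtain hi | hi := mem_insert.1 (hv_mem i)
      exacts [hi ▸ huy, (hP.lt_of_mem _ hi).trans huy]
    have hv_adj : ∀ i, G.Adj (v i) y ↔ (i : ℕ) = #P := Fin.lastCases (by simpa [hlast])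
      fun i => by simpa [i.isLt.ne] using hnadj _ (hinit i)
    have hne : ∀ i : Fin (#P + 1), #P + 1 + 1 ≠ i := fun i => by omega
    rw [hP.card_insert]
    refine ⟨Fin.snoc v y, ⟨?_, ?_⟩, Fin.snoc_last .., fun i => by simpa using hv_mem i⟩
    · intro i j hij
      cases j using Fin.lastCases with
      | last =>
        obtain ⟨i, rfl⟩ := Fin.exists_castSucc_eq.2 hij.ne
        simpa using hlt i
      | cast j =>
        obtain ⟨i, rfl⟩ := Fin.exists_castSucc_eq.2 (hij.trans (Fin.castSucc_lt_last j)).ne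
        simpa using hmono hij
    · intro i j
      cases i using Fin.lastCases <;> cases j using Fin.lastCases <;>
        simp [hv, hv_adj, hne, G.adj_comm y]

end InducedPaths

lemma IndPathTo.card_lt_of_not_hasIndMonPath {n m : ℕ} {G : SimpleGraph (Fin n)}
    (hG : ¬ HasIndMonPath G m) {P : Finset (Fin n)} {y : Fin n} (h : IndPathTo G P y) :
    #P + 1 < m := by
  contrapose! hG
  obtain _ | m := m
  · exact ⟨Fin.elim0, Subsingleton.strictMono _, fun i => i.elim0⟩
  · obtain ⟨P', y', hP', rfl⟩ := h.exists_card_eq (Nat.le_of_succ_le_succ hG)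
    obtain ⟨v, hv, -⟩ := hP'.exists_strictMono
    exact ⟨v, hv⟩

section SparseGraphs

open scoped Classical

variable {V : Type*} [LinearOrder V] {G : SimpleGraph V} {U P D E : Finset V} {p : V} {h t : ℕ}

lemma IndPathTo.exists_extend_monotoneBall (hP : IndPathTo G P p)
    (hD : ∀ z ∈ P, ∀ y ∈ D, ¬ G.Adj z y) {r : ℕ} {y : V} (hy : y ∈ monotoneBall G {p} D (r + 1))
    (hyr : y ∉ monotoneBall G {p} D r) :
    ∃ Q ⊆ P ∪ monotoneBall G {p} D r, IndPathTo G Q y ∧ #Q = #P + r + 1 := by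
  induction r generalizing y with
  | zero =>
    obtain ⟨hyD, u, hu, huy, hadj⟩ := (mem_monotoneBall_succ.1 hy).resolve_left hyr
    obtain rfl := mem_singleton.1 hu
    refine ⟨insert u P, ?_, .snoc hP huy hadj fun z hz => hD z hz y hyD, hP.card_insert⟩
    exact insert_subset (mem_union_right P hu) subset_union_left
  | succ r ih =>
    obtain ⟨hyD, u, hu, huy, hadj⟩ := (mem_monotoneBall_succ.1 hy).resolve_left hyr
    have hur : u ∉ monotoneBall G {p} D r := fun h =>
      hyr (mem_monotoneBall_succ.2 (Or.inr ⟨hyD, u, h, huy, hadj⟩))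
    obtain ⟨Q, hQ, hQu, hQcard⟩ := ih hu hur
    refine ⟨insert u Q, insert_subset (mem_union_right P hu) (hQ.trans ?_),
      .snoc hQu huy hadj fun z hz hzy => ?_, by rw [hQu.card_insert, hQcard]; ring⟩
    · exact union_subset_union_right (monotoneBall_mono G {p} D r.le_succ)
    · obtain hz' | hz' := mem_union.1 (hQ hz)
      · exact hD z hz' y hyD hzy
      · exact hyr (mem_monotoneBall_succ.2
          (Or.inr ⟨hyD, z, hz', (hQu.lt_of_mem z hz).trans huy, hzy⟩))

lemma IndPathTo.monotoneBall_stable (hP : IndPathTo G P p)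
    (hD : ∀ z ∈ P, ∀ y ∈ D, ¬ G.Adj z y) (hpath : ∀ P y, IndPathTo G P y → #P + 1 < h) (r : ℕ) :
    monotoneBall G {p} D r ⊆ monotoneBall G {p} D h := by
  obtain hr | hr := le_total r h
  · exact monotoneBall_mono G {p} D hr
  induction r, hr using Nat.le_induction with
  | base => exact subset_rfl
  | succ r hr ih =>
    refine fun y hy => by_contra fun hyh => ?_
    obtain ⟨Q, -, hQ, hQcard⟩ := hP.exists_extend_monotoneBall hD hy fun hyr => hyh (ih hyr)
    have := hpath Q y hQ
    omega

lemma exists_lt_card_sdiff_succ {α : Type*} [DecidableEq α] (F : ℕ → Finset α) {a : ℕ}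
    (hF : #(F 0) + h * a < #(F h)) : ∃ j < h, a < #(F (j + 1) \ F j) := by
  by_contra! hstep
  refine hF.not_ge ?_
  suffices ∀ j ≤ h, #(F j) ≤ #(F 0) + j * a from this h le_rfl
  intro j hj
  induction j with
  | zero => simp
  | succ j ih =>
    have hcard := card_le_card_sdiff_add_card (s := F (j + 1)) (t := F j)
    have := hstep j hj
    have := ih (Nat.le_of_succ_le hj)
    rw [Nat.succ_mul]
    omega

/-- A stage in the construction of an induced monotone path inside `U`: the path ends at `p`, its
earlier vertices `P` have no neighbours in the unexplored sets `D` and `E`, and inside `D` the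
vertex `p` reaches at least `t` vertices, all of which lie before `E`. -/
structure IsFrontier (G : SimpleGraph V) (U : Finset V) (t : ℕ) (P : Finset V) (p : V)
    (D E : Finset V) : Prop where
  indPathTo : IndPathTo G P p
  mem : p ∈ U
  subset : D ∪ E ⊆ U
  anticomplete : ∀ z ∈ P, ∀ y ∈ D ∪ E, ¬ G.Adj z y
  precedes : Precedes (insert p D) E
  expanding : ∃ r, t ≤ #(monotoneBall G {p} D r)

lemma BipartiteHoleFree.exists_isFrontier (hG : BipartiteHoleFree G t) {X : ℕ}
    (hX : t * (3 * Nat.clog 2 t + 1) ≤ X) (hXU : X ≤ #U) :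
    ∃ p D E, IsFrontier G U t ∅ p D E ∧ #U ≤ #E + X := by
  obtain ⟨D, hD, hDcard, hprec⟩ := exists_initial_segment U hXU
  obtain ⟨p, hp, hexp⟩ := hG.exists_expanding_vertex (hX.trans hDcard.ge)
  refine ⟨p, D, U \ D, ⟨.single p, hD hp, by rw [union_sdiff_of_subset hD], by simp, ?_, hexp⟩, ?_⟩
  · rwa [insert_eq_of_mem hp]
  · rw [card_sdiff_of_subset hD, hDcard, Nat.sub_add_cancel hXU]

/-- The vertices of `E` adjacent to the monotone ball of radius `j` around `p` in `D`. -/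
noncomputable def attached (G : SimpleGraph V) (p : V) (D E : Finset V) (j : ℕ) : Finset V :=
  {e ∈ E | ∃ u ∈ monotoneBall G {p} D j, G.Adj u e}

lemma IsFrontier.exists_large_layer (hF : IsFrontier G U t P p D E) (hG : BipartiteHoleFree G t)
    (hpath : ∀ P y, IndPathTo G P y → #P + 1 < h) {X : ℕ} (htX : t ≤ X)
    (hdeg : ∀ u ∈ U, #{e ∈ U | G.Adj u e} ≤ X) (hE : 4 * h * X ≤ #E) :
    ∃ j, 2 * X ≤ #(attached G p D E (j + 1) \ attached G p D E j) := by
  obtain ⟨r, hr⟩ := hF.expanding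
  have hball : t ≤ #(monotoneBall G {p} D h) := hr.trans <| card_le_card <|
    hF.indPathTo.monotoneBall_stable
      (fun z hz y hy => hF.anticomplete z hz y (mem_union_left E hy)) hpath r
  have hdisj : Disjoint (monotoneBall G {p} D h) E :=
    (hF.precedes.mono (monotoneBall_subset G {p} D h) subset_rfl).disjoint
  have hlast : #E < #(attached G p D E h) + t := hG.card_lt_card_filter_add hdisj hball
  have hfirst : #(attached G p D E 0) ≤ X := by
    refine (card_le_card fun e he => ?_).trans (hdeg p hF.mem)
    obtain ⟨heE, u, hu, hue⟩ := mem_filter.1 he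
    exact mem_filter.2 ⟨hF.subset (mem_union_right D heE), mem_singleton.1 hu ▸ hue⟩
  have hh : 0 < h := (Nat.zero_le _).trans_lt (hpath ∅ p (.single p))
  have hXh : X ≤ h * X := Nat.le_mul_of_pos_left X hh
  have hbudget : #(attached G p D E 0) + h * (2 * X) < #(attached G p D E h) := by
    rw [mul_assoc] at hE
    rw [Nat.mul_left_comm]
    omega
  obtain ⟨j, -, hj⟩ := exists_lt_card_sdiff_succ _ hbudget
  exact ⟨j, hj.le⟩

lemma IsFrontier.extend (hF : IsFrontier G U t P p D E) {j r : ℕ} {x : V} {D' : Finset V}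
    (hD' : D' ⊆ attached G p D E (j + 1) \ attached G p D E j)
    (hprec : Precedes D' ((attached G p D E (j + 1) \ attached G p D E j) \ D'))
    (hx : x ∈ D') (hr : t ≤ #(monotoneBall G {x} D' r)) :
    ∃ Q u, #P < #Q ∧
      IsFrontier G U t Q u D' ((attached G p D E (j + 1) \ attached G p D E j) \ D') := by
  set L := attached G p D E (j + 1) \ attached G p D E j
  have hLE : L ⊆ E := sdiff_subset.trans (filter_subset _ E)
  obtain ⟨hx_att, hx_new⟩ := mem_sdiff.1 (hD' hx)
  obtain ⟨hxE, u, hu, hux⟩ := mem_filter.1 hx_att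
  have hu_new : u ∉ monotoneBall G {p} D j := fun h => hx_new (mem_filter.2 ⟨hxE, u, h, hux⟩)
  obtain ⟨Q, hQ, hQu, hQcard⟩ := hF.indPathTo.exists_extend_monotoneBall
    (fun z hz y hy => hF.anticomplete z hz y (mem_union_left E hy)) hu hu_new
  have hu_mem : u ∈ insert p D := monotoneBall_subset G {p} D _ hu
  refine ⟨Q, u, by omega, hQu, ?_, ?_, fun z hz y hy hzy => ?_, ?_, r + 1, ?_⟩
  · exact insert_subset hF.mem (subset_union_left.trans hF.subset) hu_mem
  · rw [union_sdiff_of_subset hD']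
    exact hLE.trans (subset_union_right.trans hF.subset)
  · rw [union_sdiff_of_subset hD'] at hy
    obtain hzP | hzB := mem_union.1 (hQ hz)
    · exact hF.anticomplete z hzP y (mem_union_right D (hLE hy)) hzy
    · exact (mem_sdiff.1 hy).2 (mem_filter.2 ⟨hLE hy, z, hzB, hzy⟩)
  · intro z hz e he
    obtain rfl | hz := mem_insert.1 hz
    · exact hF.precedes z hu_mem e (hLE (sdiff_subset he))
    · exact hprec z hz e he
  · exact hr.trans (card_le_card
      (monotoneBall_singleton_subset_succ hx (hF.precedes u hu_mem x hxE) hux))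

lemma IsFrontier.exists_longer (hF : IsFrontier G U t P p D E) (hG : BipartiteHoleFree G t)
    (hpath : ∀ P y, IndPathTo G P y → #P + 1 < h) {X : ℕ}
    (hX : t * (3 * Nat.clog 2 t + 1) ≤ X) (hdeg : ∀ u ∈ U, #{e ∈ U | G.Adj u e} ≤ X)
    (hE : 4 * h * X ≤ #E) :
    ∃ P' p' D' E', IsFrontier G U t P' p' D' E' ∧ #P < #P' ∧ X ≤ #E' := by
  have htX : t ≤ X := (Nat.le_mul_of_pos_right t (Nat.succ_pos _)).trans hX
  obtain ⟨j, hj⟩ := hF.exists_large_layer hG hpath htX hdeg hE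
  obtain ⟨D', hD', hD'card, hprec⟩ := exists_initial_segment _
    ((Nat.le_mul_of_pos_left X two_pos).trans hj)
  obtain ⟨x, hx, r, hr⟩ := hG.exists_expanding_vertex (hX.trans hD'card.ge)
  obtain ⟨Q, u, hcard, hQ⟩ := hF.extend hD' hprec hx hr
  refine ⟨Q, u, D', _, hQ, hcard, ?_⟩
  rw [card_sdiff_of_subset hD', hD'card]
  omega

lemma BipartiteHoleFree.exists_indPathTo (hG : BipartiteHoleFree G t) {W : ℕ}
    (hW : t * (3 * Nat.clog 2 t + 1) ≤ W) (hdeg : ∀ u ∈ U, #{e ∈ U | G.Adj u e} ≤ W)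
    (hU : ((4 * h) ^ h + 1) * W ≤ #U) : ∃ P y, IndPathTo G P y ∧ h ≤ #P + 1 := by
  by_contra! hpath
  have hstage : ∀ i ≤ h, ∃ P p D E, IsFrontier G U t P p D E ∧ i ≤ #P ∧
      (4 * h) ^ (h - i) * W ≤ #E := by
    intro i hi
    induction i with
    | zero =>
      rw [add_one_mul] at hU
      obtain ⟨p, D, E, hF, hE⟩ := hG.exists_isFrontier hW ((Nat.le_add_left _ _).trans hU)
      exact ⟨∅, p, D, E, hF, Nat.zero_le _, by rw [Nat.sub_zero]; omega⟩
    | succ i ih =>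
      obtain ⟨P, p, D, E, hF, hP, hE⟩ := ih (Nat.le_of_succ_le hi)
      have hWX : W ≤ (4 * h) ^ (h - (i + 1)) * W :=
        Nat.le_mul_of_pos_left W (pow_pos (by omega) _)
      rw [show h - i = h - (i + 1) + 1 by omega, pow_succ', mul_assoc] at hE
      obtain ⟨P', p', D', E', hF', hP', hE'⟩ :=
        hF.exists_longer hG hpath (hW.trans hWX) (fun u hu => (hdeg u hu).trans hWX) hE
      exact ⟨P', p', D', E', hF', hP.trans_lt hP', hE'⟩
  obtain ⟨P, p, D, E, hF, hP, -⟩ := hstage h le_rfl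
  have := hpath P p hF.indPathTo
  omega

end SparseGraphs

section EdgeCount

open scoped Classical

variable {V : Type*} {G : SimpleGraph V}

lemma card_interedges_eq_sum_card_filter (G : SimpleGraph V) (A B : Finset V) :
    #(G.interedges A B) = ∑ a ∈ A, #{b ∈ B | G.Adj a b} := by
  simp only [G.interedges_def, card_filter, sum_product]

lemma BipartiteHoleFree.card_filter_low_degree_lt [LinearOrder V] {h t : ℕ}
    (hG : BipartiteHoleFree G t) (hpath : ∀ P y, IndPathTo G P y → #P + 1 < h) {U : Finset V}
    (hU : 2 * ((4 * h) ^ h + 1) * (t * (3 * Nat.clog 2 t + 1)) ≤ #U) :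
    2 * #{u ∈ U | 2 * ((4 * h) ^ h + 1) * #{e ∈ U | G.Adj u e} ≤ #U} < #U := by
  set C := (4 * h) ^ h + 1
  set T := {u ∈ U | 2 * C * #{e ∈ U | G.Adj u e} ≤ #U}
  by_contra! hT
  have hC : 0 < C := Nat.succ_pos _
  have hdeg : ∀ u ∈ T, #{e ∈ T | G.Adj u e} ≤ #T / C := fun u hu => by
    have hdeg_le : #{e ∈ T | G.Adj u e} ≤ #{e ∈ U | G.Adj u e} :=
      card_le_card (filter_subset_filter _ (filter_subset _ U))
    have hlow := (mem_filter.1 hu).2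
    rw [Nat.le_div_iff_mul_le hC]
    nlinarith
  obtain ⟨P, y, hP, hPcard⟩ := hG.exists_indPathTo
    ((Nat.le_div_iff_mul_le hC).2 (by linarith)) hdeg (Nat.mul_div_le _ _)
  exact (hpath P y hP).not_ge hPcard

lemma BipartiteHoleFree.card_sq_le_mul_card_interedges [LinearOrder V] {h t : ℕ}
    (hG : BipartiteHoleFree G t) (hpath : ∀ P y, IndPathTo G P y → #P + 1 < h) {U : Finset V}
    (hU : 2 * ((4 * h) ^ h + 1) * (t * (3 * Nat.clog 2 t + 1)) ≤ #U) :
    #U ^ 2 ≤ 4 * ((4 * h) ^ h + 1) * #(G.interedges U U) := by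
  have hlow := hG.card_filter_low_degree_lt hpath hU
  set C := (4 * h) ^ h + 1
  have hsplit := card_filter_add_card_filter_not (s := U)
    fun u => 2 * C * #{e ∈ U | G.Adj u e} ≤ #U
  have hhigh : #{u ∈ U | ¬ 2 * C * #{e ∈ U | G.Adj u e} ≤ #U} * #U ≤
      2 * C * #(G.interedges U U) := by
    rw [card_interedges_eq_sum_card_filter, mul_sum, ← smul_eq_mul, ← sum_const]
    exact (sum_le_sum fun u hu => (not_le.1 (mem_filter.1 hu).2).le).trans
      (sum_le_sum_of_subset (filter_subset _ U))
  nlinarith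

end EdgeCount

section Regularity

open scoped Classical
open SzemerediRegularity

variable {V W : Type*}

lemma card_interedges_map (H : SimpleGraph W) (f : V ↪ W) (A B : Finset V) :
    #(H.interedges (A.map f) (B.map f)) = #((H.comap f).interedges A B) := by
  rw [← card_map (f.prodMap f)]
  congr 1
  ext ⟨x, y⟩
  simp only [SimpleGraph.mem_interedges_iff, mem_map, Function.Embedding.coe_prodMap, Prod.exists,
    SimpleGraph.comap_adj, Prod.map_apply, Prod.mk.injEq]
  aesop

lemma edgeDensity_map (H : SimpleGraph W) (f : V ↪ W) (A B : Finset V) :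
    H.edgeDensity (A.map f) (B.map f) = (H.comap f).edgeDensity A B := by
  simp only [SimpleGraph.edgeDensity_def, card_interedges_map, card_map]

lemma isUniform_map {H : SimpleGraph W} {f : V ↪ W} {ρ : ℝ} {A B : Finset V}
    (h : (H.comap f).IsUniform ρ A B) : H.IsUniform ρ (A.map f) (B.map f) := by
  intro A' hA B' hB hAcard hBcard
  obtain ⟨A', hA', rfl⟩ := subset_map_iff.1 hA
  obtain ⟨B', hB', rfl⟩ := subset_map_iff.1 hB
  simp only [card_map] at hAcard hBcard
  simpa only [edgeDensity_map] using h hA' hB' hAcard hBcard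

lemma card_le_mul_card_part [Fintype V] {P : Finpartition (univ : Finset V)}
    (hP : P.IsEquipartition) {m : ℕ} (hPm : #P.parts ≤ m) (hm : m ≤ Fintype.card V) (x : V) :
    Fintype.card V ≤ 2 * m * #(P.part x) := by
  have hpart := hP.average_le_card_part (P.part_mem.2 (mem_univ x))
  rw [card_univ] at hpart
  have hparts : 0 < #P.parts := card_pos.2 ⟨_, P.part_mem.2 (mem_univ x)⟩
  have hdiv : 1 ≤ Fintype.card V / #P.parts :=
    (Nat.one_le_div_iff hparts).2 (hPm.trans hm)
  calc Fintype.card V ≤ #P.parts * (Fintype.card V / #P.parts + 1) :=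
        (Nat.lt_mul_div_succ _ hparts).le
    _ ≤ m * (2 * #(P.part x)) := by gcongr; omega
    _ = 2 * m * #(P.part x) := by ring

/-- The ordered pairs of vertices in a common part, in an irregular pair of parts, or joined by an
edge of `H` in a pair of parts of density less than `δ`. -/
noncomputable def irregularPairs [Fintype V] (P : Finpartition (univ : Finset V))
    (H : SimpleGraph V) (ρ δ : ℝ) : Finset (V × V) :=
  ((P.nonUniforms H ρ).biUnion fun (A, B) => A ×ˢ B) ∪ P.parts.biUnion offDiag ∪
    (P.sparsePairs H δ).biUnion fun (A, B) => H.interedges A B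

lemma card_irregularPairs_le [Fintype V] [Nonempty V] {P : Finpartition (univ : Finset V)}
    (hP : P.IsEquipartition) {H : SimpleGraph V} {ρ δ : ℝ} (hρ : 0 < ρ) (hρδ : ρ ≤ δ / 2)
    (hparts : 1 / δ ≤ #P.parts) (hunif : P.IsUniform H ρ) :
    (#(irregularPairs P H ρ δ) : ℝ) ≤ 8 * δ * (Fintype.card V : ℝ) ^ 2 := by
  have hδ : 0 < δ := by linarith
  have hnonunif := (hP.sum_nonUniforms_lt univ_nonempty hρ hunif).le
  have hdiag := hP.card_biUnion_offDiag_le (ε := 4 * δ) (by positivity)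
    (by rwa [mul_comm, div_mul_cancel_right₀ four_ne_zero, ← one_div])
  have hsparse := hP.card_interedges_sparsePairs_le (G := H) hδ.le
  rw [card_univ] at hnonunif hdiag hsparse
  have hcard : #(irregularPairs P H ρ δ) ≤ _ :=
    (card_union_le _ _).trans (Nat.add_le_add_right (card_union_le _ _) _)
  calc (#(irregularPairs P H ρ δ) : ℝ) ≤ _ := Nat.cast_le.2 hcard
    _ ≤ 4 * ρ * (Fintype.card V : ℝ) ^ 2 + 4 * δ / 2 * (Fintype.card V : ℝ) ^ 2 +
        4 * δ * (Fintype.card V : ℝ) ^ 2 := by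
      rw [Nat.cast_add, Nat.cast_add]
      exact add_le_add (add_le_add hnonunif hdiag) hsparse
    _ = (4 * ρ + 6 * δ) * (Fintype.card V : ℝ) ^ 2 := by ring
    _ ≤ 8 * δ * (Fintype.card V : ℝ) ^ 2 := by gcongr; linarith

lemma regular_of_notMem_irregularPairs [Fintype V] {P : Finpartition (univ : Finset V)}
    {H : SimpleGraph V} {ρ δ : ℝ} {x y : V} (hxy : H.Adj x y)
    (hmem : (x, y) ∉ irregularPairs P H ρ δ) :
    Disjoint (P.part x) (P.part y) ∧ H.IsUniform ρ (P.part x) (P.part y) ∧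
      δ ≤ H.edgeDensity (P.part x) (P.part y) := by
  have hx := P.part_mem.2 (mem_univ x)
  have hy := P.part_mem.2 (mem_univ y)
  have hxx := P.mem_part (mem_univ x)
  have hyy := P.mem_part (mem_univ y)
  simp only [irregularPairs, mem_union, not_or] at hmem
  obtain ⟨⟨hnonunif, hdiag⟩, hsparse⟩ := hmem
  have hne : P.part x ≠ P.part y := fun h =>
    hdiag (mem_biUnion.2 ⟨_, hx, mem_offDiag.2 ⟨hxx, h ▸ hyy, hxy.ne⟩⟩)
  refine ⟨P.disjoint hx hy hne, by_contra fun h => ?_, not_lt.1 fun h => ?_⟩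
  · exact hnonunif (mem_biUnion.2 ⟨(_, _), (P.mk_mem_nonUniforms _).2 ⟨hx, hy, hne, h⟩,
      mem_product.2 ⟨hxx, hyy⟩⟩)
  · exact hsparse (mem_biUnion.2 ⟨(_, _), (P.mk_mem_sparsePairs _ _ _ _).2 ⟨hx, hy, hne, h⟩,
      H.mem_interedges_iff.2 ⟨hxx, hyy, hxy⟩⟩)

lemma exists_regular_parts {δ ρ : ℝ} (hδ : 0 < δ) (hρ : 0 < ρ) :
    ∃ M : ℕ, 0 < M ∧ ∀ {V : Type*} [Fintype V] (H : SimpleGraph V), M ≤ Fintype.card V →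
      ∃ (bad : Finset (V × V)) (π : V → Finset V),
        (#bad : ℝ) ≤ 8 * δ * (Fintype.card V : ℝ) ^ 2 ∧ (∀ x, Fintype.card V ≤ M * #(π x)) ∧
        ∀ x y, H.Adj x y → (x, y) ∉ bad → Disjoint (π x) (π y) ∧
          H.IsUniform ρ (π x) (π y) ∧ δ ≤ H.edgeDensity (π x) (π y) := by
  set ρ' := min ρ (δ / 2)
  have hρ' : 0 < ρ' := lt_min hρ (half_pos hδ)
  set m := max ⌈1 / δ⌉₊ (bound ρ' ⌈1 / δ⌉₊)
  have hm : 0 < m := lt_max_of_lt_right (bound_pos _ _)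
  refine ⟨2 * m, Nat.mul_pos two_pos hm, fun {V} _ H hV => ?_⟩
  have hmV : m ≤ Fintype.card V := (Nat.le_mul_of_pos_left m two_pos).trans hV
  have : Nonempty V := Fintype.card_pos_iff.1 (hm.trans_le hmV)
  obtain ⟨P, hP, hlower, hupper, hunif⟩ :=
    szemeredi_regularity H hρ' ((le_max_left _ _).trans hmV)
  refine ⟨irregularPairs P H ρ' δ, P.part, ?_, ?_, fun x y hxy hmem => ?_⟩
  · exact card_irregularPairs_le hP hρ' (min_le_right _ _) (Nat.ceil_le.1 hlower) hunif
  · exact card_le_mul_card_part hP (hupper.trans (le_max_right _ _)) hmV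
  · obtain ⟨hdisj, hunif, hδ⟩ := regular_of_notMem_irregularPairs hxy hmem
    exact ⟨hdisj, hunif.mono (min_le_left _ _), hδ⟩

lemma exists_regular_parts_within {δ ρ : ℝ} (hδ : 0 < δ) (hρ : 0 < ρ) :
    ∃ M : ℕ, 0 < M ∧ ∀ {V : Type*} (H : SimpleGraph V) (U : Finset V), M ≤ #U →
      ∃ (bad : Finset (V × V)) (π : V → Finset V),
        (#bad : ℝ) ≤ 8 * δ * (#U : ℝ) ^ 2 ∧ (∀ x ∈ U, π x ⊆ U ∧ #U ≤ M * #(π x)) ∧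
        ∀ x ∈ U, ∀ y ∈ U, H.Adj x y → (x, y) ∉ bad → Disjoint (π x) (π y) ∧
          H.IsUniform ρ (π x) (π y) ∧ δ ≤ H.edgeDensity (π x) (π y) := by
  obtain ⟨M, hM, hreg⟩ := exists_regular_parts hδ hρ
  refine ⟨M, hM, fun {V} H U hU => ?_⟩
  let f : U ↪ V := Function.Embedding.subtype _
  obtain ⟨bad, π, hbad, hπ, hreg⟩ := hreg (H.comap f) (by simpa using hU)
  rw [Fintype.card_coe] at hbad hπ
  refine ⟨bad.map (f.prodMap f), fun x => if hx : x ∈ U then (π ⟨x, hx⟩).map f else ∅,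
    by simpa using hbad, fun x hx => ?_, fun x hx y hy hxy hmem => ?_⟩
  · simpa [hx] using ⟨map_subtype_subset _, hπ ⟨x, hx⟩⟩
  · obtain ⟨hdisj, hunif, hdens⟩ := hreg ⟨x, hx⟩ ⟨y, hy⟩ hxy
      fun h => hmem (mem_map.2 ⟨_, h, rfl⟩)
    simp only [dif_pos hx, dif_pos hy]
    exact ⟨(disjoint_map f).2 hdisj, isUniform_map hunif, by rwa [edgeDensity_map]⟩

end Regularity

section DensePairs

open scoped Classical

variable {V : Type*} {H : SimpleGraph V} {ε δ : ℝ} {A B : Finset V}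

/-- One-sided regularity: all subsets of `A` and `B` of relative size at least `ε` span edge density
at least `δ` in `H`. -/
def IsDensePair (H : SimpleGraph V) (ε δ : ℝ) (A B : Finset V) : Prop :=
  ∀ ⦃A'⦄, A' ⊆ A → ∀ ⦃B'⦄, B' ⊆ B → ε * #A ≤ #A' → ε * #B ≤ #B' → δ ≤ H.edgeDensity A' B'

lemma isDensePair_of_nonpos (hδ : δ ≤ 0) : IsDensePair H ε δ A B := fun A' _ B' _ _ _ =>
  hδ.trans (Rat.cast_nonneg.2 (H.edgeDensity_nonneg A' B'))

lemma IsDensePair.symm (h : IsDensePair H ε δ A B) : IsDensePair H ε δ B A :=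
  fun B' hB A' hA hBcard hAcard => by
    rw [H.edgeDensity_comm]
    exact h hA hB hAcard hBcard

lemma IsDensePair.mono_density {δ' : ℝ} (h : IsDensePair H ε δ A B) (hδ : δ' ≤ δ) :
    IsDensePair H ε δ' A B := fun _ hA _ hB hAcard hBcard => hδ.trans (h hA hB hAcard hBcard)

lemma IsDensePair.restrict {ε' : ℝ} {A' B' : Finset V} (h : IsDensePair H ε δ A B) (hA : A' ⊆ A)
    (hB : B' ⊆ B) (hAcard : ε * #A ≤ ε' * #A') (hBcard : ε * #B ≤ ε' * #B') :
    IsDensePair H ε' δ A' B' := fun _ hA' _ hB' hA'card hB'card =>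
  h (hA'.trans hA) (hB'.trans hB) (hAcard.trans hA'card) (hBcard.trans hB'card)

lemma isDensePair_of_isUniform (h : H.IsUniform ε A B) (hδ : δ + ε ≤ H.edgeDensity A B) :
    IsDensePair H ε δ A B := fun A' hA B' hB hAcard hBcard => by
  have := (abs_lt.1 (h hA hB (by rwa [mul_comm]) (by rwa [mul_comm]))).1
  linarith

lemma isDensePair_or_isDensePair_compl {α : ℝ} (h : H.IsUniform ε A B) (hε : 0 < ε) (hα : ε ≤ α)
    (hAB : Disjoint A B) (hA : A.Nonempty) (hB : B.Nonempty) :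
    IsDensePair H ε (1 - 3 * α) A B ∨ IsDensePair Hᶜ ε α A B := by
  obtain hdens | hdens := le_or_gt (1 - 2 * α) (H.edgeDensity A B)
  · exact Or.inl (isDensePair_of_isUniform h (by linarith))
  refine Or.inr fun A' hA' B' hB' hAcard hBcard => ?_
  have hlt := (abs_lt.1 (h hA' hB' (by rwa [mul_comm]) (by rwa [mul_comm]))).2
  have hne : ∀ {X X' : Finset V}, X.Nonempty → ε * #X ≤ #X' → X'.Nonempty := fun hX hcard =>
    card_pos.1 (Nat.cast_pos.1 ((mul_pos hε (Nat.cast_pos.2 hX.card_pos)).trans_le hcard))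
  have hadd := H.edgeDensity_add_edgeDensity_compl (hne hA hAcard) (hne hB hBcard)
    (disjoint_of_subset_left hA' (disjoint_of_subset_right hB' hAB))
  rify at hadd
  have hcompl : α ≤ Hᶜ.edgeDensity A' B' := by linarith
  convert hcompl

lemma IsDensePair.card_filter_low_degree_le {B' : Finset V} (h : IsDensePair H ε δ A B)
    (hε : 0 ≤ ε) (hB : B' ⊆ B) (hBcard : ε * #B ≤ #B') :
    (#{a ∈ A | (#{b ∈ B' | H.Adj a b} : ℝ) < δ * #B'} : ℝ) ≤ ε * #A := by
  set L := {a ∈ A | (#{b ∈ B' | H.Adj a b} : ℝ) < δ * #B'}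
  by_contra! hL
  have hLne : L.Nonempty :=
    card_pos.1 (Nat.cast_pos.1 ((mul_nonneg hε (Nat.cast_nonneg _)).trans_lt hL))
  obtain ⟨a, ha⟩ := hLne
  have hB'pos : (0 : ℝ) < #B' := (Nat.cast_nonneg _).lt_of_ne fun hzero => by
    have := (mem_filter.1 ha).2
    rw [← hzero, mul_zero] at this
    exact (Nat.cast_nonneg _).not_gt this
  have hLpos : (0 : ℝ) < #L := Nat.cast_pos.2 (card_pos.2 ⟨a, ha⟩)
  have hedges : (#(H.interedges L B') : ℝ) < δ * (#L * #B') := by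
    rw [card_interedges_eq_sum_card_filter, Nat.cast_sum]
    calc _ < ∑ _a ∈ L, δ * #B' := sum_lt_sum_of_nonempty ⟨a, ha⟩ fun _ hx => (mem_filter.1 hx).2
      _ = δ * (#L * #B') := by rw [sum_const, nsmul_eq_mul]; ring
  have hdens := h (filter_subset _ A) hB hL.le hBcard
  rw [SimpleGraph.edgeDensity_def] at hdens
  push_cast at hdens
  rw [le_div_iff₀ (mul_pos hLpos hB'pos)] at hdens
  exact hdens.not_gt hedges

end DensePairs

section OrderedPairs

open scoped Classical

lemma exists_isDensePair {C : ℕ} (hC : 0 < C) {σ : ℝ} (hσ : 0 < σ) :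
    ∃ M : ℕ, 0 < M ∧ ∀ {V : Type*} (H : SimpleGraph V) (U : Finset V),
      M ≤ #U → #U ^ 2 ≤ C * #(H.interedges U U) →
        ∃ A ⊆ U, ∃ B ⊆ U, #U ≤ M * #A ∧ #U ≤ M * #B ∧ IsDensePair H σ (1 / (32 * C)) A B := by
  set δ : ℝ := 1 / (16 * C)
  have hδ : 0 < δ := by positivity
  have hδ_half : (1 / (32 * C) : ℝ) = δ / 2 := by simp only [δ]; field_simp; norm_num
  obtain ⟨M, hM, hreg⟩ := exists_regular_parts_within hδ (lt_min hσ (half_pos hδ))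
  refine ⟨M, hM, fun {V} H U hU hedges => ?_⟩
  obtain ⟨bad, π, hbad, hπ, hpair⟩ := hreg H U hU
  have hlt : #bad < #(H.interedges U U) := by
    have hUpos : (0 : ℝ) < #U := by exact_mod_cast hM.trans_le hU
    have hCpos : (0 : ℝ) < C := by exact_mod_cast hC
    have hδC : 8 * δ * C = 1 / 2 := by simp only [δ]; field_simp; norm_num
    rify at hedges ⊢
    nlinarith [mul_le_mul_of_nonneg_left hbad hCpos.le, pow_pos hUpos 2]
  obtain ⟨⟨x, y⟩, hxy, hgood⟩ := exists_mem_notMem_of_card_lt_card hlt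
  obtain ⟨hx, hy, hadj⟩ := H.mem_interedges_iff.1 hxy
  obtain ⟨-, hunif, hdens⟩ := hpair x hx y hy hadj hgood
  refine ⟨π x, (hπ x hx).1, π y, (hπ y hy).1, (hπ x hx).2, (hπ y hy).2, ?_⟩
  rw [hδ_half]
  refine (isDensePair_of_isUniform hunif ?_).restrict subset_rfl subset_rfl ?_ ?_
  · linarith [min_le_right σ (δ / 2)]
  all_goals gcongr; exact min_le_left _ _

lemma exists_subset_precedes_or {V : Type*} [LinearOrder V] {A B : Finset V} (hA : 2 ≤ #A)
    (hB : 2 ≤ #B) : ∃ A' ⊆ A, ∃ B' ⊆ B, #A ≤ 4 * #A' ∧ #B ≤ 4 * #B' ∧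
      (Precedes A' B' ∨ Precedes B' A') := by
  obtain ⟨Y, hYsub, hYcard, hY⟩ := exists_separated (fun b => bif b then B else A)
    (Bool.forall_bool.2 ⟨hA, hB⟩)
  exact ⟨Y false, hYsub false, Y true, hYsub true, hYcard false, hYcard true,
    hY false true Bool.false_ne_true⟩

lemma exists_precedes_isDensePair {C : ℕ} (hC : 0 < C) {σ : ℝ} (hσ : 0 < σ) :
    ∃ M : ℕ, 0 < M ∧ ∀ {V : Type*} [LinearOrder V] (H : SimpleGraph V) (U : Finset V),
      M ≤ #U → #U ^ 2 ≤ C * #(H.interedges U U) →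
        ∃ A ⊆ U, ∃ B ⊆ U, #U ≤ M * #A ∧ #U ≤ M * #B ∧ Precedes A B ∧
          IsDensePair H σ (1 / (32 * C)) A B := by
  obtain ⟨M, hM, hpair⟩ := exists_isDensePair hC (show 0 < σ / 4 by positivity)
  refine ⟨4 * M, by positivity, fun {V} _ H U hU hedges => ?_⟩
  obtain ⟨A, hA, B, hB, hUA, hUB, hdense⟩ := hpair H U (by linarith) hedges
  obtain ⟨A', hA', B', hB', hAcard, hBcard, hAB⟩ :=
    exists_subset_precedes_or (A := A) (B := B) (by nlinarith) (by nlinarith)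
  have hsize : ∀ {X Y : Finset V}, #X ≤ 4 * #Y → σ / 4 * #X ≤ σ * #Y := fun {X Y} h => by
    calc σ / 4 * #X ≤ σ / 4 * (4 * #Y) := by gcongr; exact mod_cast h
      _ = σ * #Y := by ring
  have hdense' := hdense.restrict hA' hB' (hsize hAcard) (hsize hBcard)
  have hUA' : #U ≤ 4 * M * #A' := by nlinarith
  have hUB' : #U ≤ 4 * M * #B' := by nlinarith
  obtain hAB | hBA := hAB
  · exact ⟨A', hA'.trans hA, B', hB'.trans hB, hUA', hUB', hAB, hdense'⟩
  · exact ⟨B', hB'.trans hB, A', hA'.trans hA, hUB', hUA', hBA, hdense'.symm⟩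

lemma BipartiteHoleFree.exists_precedes_isDensePair (h : ℕ) :
    ∃ δ : ℝ, 0 < δ ∧ ∀ σ : ℝ, 0 < σ → ∃ M : ℕ, 0 < M ∧
      ∀ {V : Type*} [LinearOrder V] {G : SimpleGraph V} {t : ℕ}, BipartiteHoleFree G t →
        (∀ P y, IndPathTo G P y → #P + 1 < h) →
        ∀ U : Finset V, M * (t * (3 * Nat.clog 2 t + 1)) ≤ #U →
          ∃ Z : Bool → Finset V, (∀ b, Z b ⊆ U ∧ #U ≤ M * #(Z b)) ∧
            Precedes (Z false) (Z true) ∧ IsDensePair G σ δ (Z false) (Z true) := by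
  set C := (4 * h) ^ h + 1
  have hC : 0 < 4 * C := by positivity
  refine ⟨1 / (32 * (4 * C : ℕ)), by positivity, fun σ hσ => ?_⟩
  obtain ⟨M, hM, hpair⟩ := _root_.exists_precedes_isDensePair hC hσ
  refine ⟨M + 2 * C, by positivity, fun {V} _ G t hG hpath U hU => ?_⟩
  have hpos : 1 ≤ t * (3 * Nat.clog 2 t + 1) := Nat.mul_pos hG.pos (Nat.succ_pos _)
  obtain ⟨A, hA, B, hB, hAcard, hBcard, hAB, hdense⟩ := hpair G U (by nlinarith)
    (hG.card_sq_le_mul_card_interedges hpath (le_trans (by gcongr; omega) hU))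
  have hM_le : ∀ X : Finset V, M * #X ≤ (M + 2 * C) * #X := fun X =>
    Nat.mul_le_mul_right _ (Nat.le_add_right M _)
  exact ⟨fun b => bif b then B else A,
    Bool.forall_bool.2 ⟨⟨hA, hAcard.trans (hM_le A)⟩, hB, hBcard.trans (hM_le B)⟩, hAB, hdense⟩

end OrderedPairs

section Embedding

open scoped Classical

variable {ι V : Type*} {H : ι → ι → SimpleGraph V} {d : ι → ι → ℝ} {σ δ : ℝ} {t : ℕ}
  {W W' : ι → Finset V} {S S' : Finset ι}

/-- The sets `W p` for `p ∈ S` are disjoint, of size at least `t / σ`, and form dense pairs with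
respect to the prescribed graphs `H p q` and densities `d p q`. -/
structure IsDenseFamily (H : ι → ι → SimpleGraph V) (d : ι → ι → ℝ) (σ : ℝ) (t : ℕ)
    (W : ι → Finset V) (S : Finset ι) : Prop where
  disjoint : ∀ p ∈ S, ∀ q ∈ S, p ≠ q → Disjoint (W p) (W q)
  dense : ∀ p ∈ S, ∀ q ∈ S, p ≠ q → IsDensePair (H p q) σ (d p q) (W p) (W q)
  le_card : ∀ p ∈ S, t ≤ σ * #(W p)

lemma IsDenseFamily.restrict (h : IsDenseFamily H d σ t W S) (hS : S' ⊆ S) (hδ : 0 < δ)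
    (hW : ∀ p, W' p ⊆ W p) (hcard : ∀ p ∈ S', δ * #(W p) ≤ #(W' p)) (hσ : 0 ≤ σ) :
    IsDenseFamily H d (σ / δ) t W' S' := by
  have hsize : ∀ p ∈ S', σ * #(W p) ≤ σ / δ * #(W' p) := fun p hp => by
    rw [div_mul_eq_mul_div, le_div_iff₀ hδ, mul_assoc, mul_comm (#(W p) : ℝ)]
    exact mul_le_mul_of_nonneg_left (hcard p hp) hσ
  exact {
    disjoint := fun p hp q hq hpq => (h.disjoint p (hS hp) q (hS hq) hpq).mono (hW p) (hW q)
    dense := fun p hp q hq hpq =>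
      (h.dense p (hS hp) q (hS hq) hpq).restrict (hW p) (hW q) (hsize p hp) (hsize q hq)
    le_card := fun p hp => (h.le_card p (hS hp)).trans (hsize p hp) }

lemma IsDenseFamily.pos (h : IsDenseFamily H d σ t W S) (ht : 0 < t) {p : ι} (hp : p ∈ S) :
    0 < σ :=
  pos_of_mul_pos_left ((Nat.cast_pos.2 ht).trans_le (h.le_card p hp)) (Nat.cast_nonneg _)

lemma sub_mul_le_card_filter_forall (A : Finset V) (P : ι → V → Prop) {b : ℝ}
    (hP : ∀ p ∈ S, (#{x ∈ A | ¬ P p x} : ℝ) ≤ b) :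
    #A - #S * b ≤ (#{x ∈ A | ∀ p ∈ S, P p x} : ℝ) := by
  have hcover : A ⊆ {x ∈ A | ∀ p ∈ S, P p x} ∪ S.biUnion fun p => {x ∈ A | ¬ P p x} := by
    intro x hx
    by_cases h : ∀ p ∈ S, P p x
    · exact mem_union_left _ (mem_filter.2 ⟨hx, h⟩)
    · push Not at h
      obtain ⟨p, hp, hpx⟩ := h
      exact mem_union_right _ (mem_biUnion.2 ⟨p, hp, mem_filter.2 ⟨hx, hpx⟩⟩)
  have hcard : (#A : ℝ) ≤ #{x ∈ A | ∀ p ∈ S, P p x} + ∑ p ∈ S, (#{x ∈ A | ¬ P p x} : ℝ) := by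
    exact_mod_cast (card_le_card hcover).trans
      ((card_union_le _ _).trans (Nat.add_le_add_left card_biUnion_le _))
  have hsum := sum_le_card_nsmul S (fun p => (#{x ∈ A | ¬ P p x} : ℝ)) b hP
  rw [nsmul_eq_mul] at hsum
  linarith

lemma IsDenseFamily.le_card_typical (h : IsDenseFamily H d σ t W S) (ht : 0 < t) {l : ι}
    (hl : l ∈ S) (hS : S' ⊆ S) (hlS : l ∉ S') (hσ : (#S' + 1) * σ ≤ 1) :
    t ≤ #{x ∈ W l | ∀ q ∈ S', d l q * #(W q) ≤ #{y ∈ W q | (H l q).Adj x y}} := by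
  have hσ0 := h.pos ht hl
  have htypical := sub_mul_le_card_filter_forall (S := S') (W l)
    (fun q x => d l q * #(W q) ≤ #{y ∈ W q | (H l q).Adj x y}) (b := σ * #(W l)) fun q hq => by
      simp only [not_le]
      refine (h.dense l hl q (hS hq) fun h => hlS (h ▸ hq)).card_filter_low_degree_le hσ0.le
        subset_rfl (mul_le_of_le_one_left (Nat.cast_nonneg _) ?_)
      nlinarith [Nat.cast_nonneg (α := ℝ) #S']
  have hle : σ * #(W l) ≤ #(W l) - #S' * (σ * #(W l)) := by
    nlinarith [mul_le_mul_of_nonneg_right hσ (Nat.cast_nonneg (α := ℝ) #(W l))]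
  exact_mod_cast (h.le_card l hl).trans (hle.trans htypical)

lemma IsDenseFamily.exists_adj_typical (h : IsDenseFamily H d σ t W S) (ht : 0 < t) {l m : ι}
    (hlm : BipartiteHoleFree (H l m) t) (hne : l ≠ m) (hl : l ∈ S) (hm : m ∈ S) (hS : S' ⊆ S)
    (hlS : l ∉ S') (hmS : m ∉ S') (hσ : (#S' + 1) * σ ≤ 1) :
    ∃ a ∈ W l, ∃ b ∈ W m, (H l m).Adj a b ∧
      (∀ q ∈ S', d l q * #(W q) ≤ #{y ∈ W q | (H l q).Adj a y}) ∧
      ∀ q ∈ S', d m q * #(W q) ≤ #{y ∈ W q | (H m q).Adj b y} := by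
  obtain ⟨a, ha, b, hb, hab⟩ := hlm (disjoint_filter_filter (h.disjoint l hl m hm hne))
    (h.le_card_typical ht hl hS hlS hσ) (h.le_card_typical ht hm hS hmS hσ)
  obtain ⟨haW, ha⟩ := mem_filter.1 ha
  obtain ⟨hbW, hb⟩ := mem_filter.1 hb
  exact ⟨a, haW, b, hbW, hab, ha, hb⟩

/-- `x` picks from each set `W p` with `p ∈ S` a vertex, such that the vertices picked for `p` and
`q` are adjacent in the prescribed graph `H p q`. -/
structure IsTransversal (H : ι → ι → SimpleGraph V) (W : ι → Finset V) (S : Finset ι)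
    (x : ι → V) : Prop where
  mem : ∀ p ∈ S, x p ∈ W p
  adj : ∀ p ∈ S, ∀ q ∈ S, p ≠ q → (H p q).Adj (x p) (x q)

lemma IsTransversal.mono {x : ι → V} (h : IsTransversal H W S x) (hW : ∀ p, W p ⊆ W' p) :
    IsTransversal H W' S x :=
  ⟨fun p hp => hW p (h.mem p hp), h.adj⟩

variable [DecidableEq ι]

lemma IsTransversal.insert (hH : ∀ p q, H p q = H q p) {x : ι → V} (h : IsTransversal H W S x)
    {l : ι} (hl : l ∉ S) {a : V} (ha : a ∈ W l) (hadj : ∀ q ∈ S, (H l q).Adj a (x q)) :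
    IsTransversal H W (insert l S) (Function.update x l a) := by
  have hupdate : ∀ q ∈ S, Function.update x l a q = x q := fun q hq =>
    Function.update_of_ne (ne_of_mem_of_not_mem hq hl) _ _
  constructor
  · simp only [forall_mem_insert, Function.update_self]
    exact ⟨ha, fun q hq => hupdate q hq ▸ h.mem q hq⟩
  · simp only [forall_mem_insert, Function.update_self]
    refine ⟨⟨fun h => absurd rfl h, fun q hq _ => hupdate q hq ▸ hadj q hq⟩,
      fun p hp => ⟨fun _ => ?_, fun q hq hpq => ?_⟩⟩
    · rw [hupdate p hp, hH]
      exact (hadj p hp).symm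
    · rw [hupdate p hp, hupdate q hq]
      exact h.adj p hp q hq hpq

lemma IsTransversal.insert_insert (hH : ∀ p q, H p q = H q p) {x : ι → V}
    (h : IsTransversal H W S x) {l m : ι} (hl : l ∉ S) (hm : m ∉ S) (hlm : l ≠ m) {a b : V}
    (ha : a ∈ W l) (hb : b ∈ W m) (hab : (H l m).Adj a b)
    (hadj : ∀ q ∈ S, (H l q).Adj a (x q) ∧ (H m q).Adj b (x q)) :
    IsTransversal H W (Insert.insert l (Insert.insert m S))
      (Function.update (Function.update x m b) l a) := by
  refine (h.insert hH hm hb fun q hq => (hadj q hq).2).insert hH (by simp [hlm, hl]) ha ?_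
  simp only [forall_mem_insert, Function.update_self]
  refine ⟨hab, fun q hq => ?_⟩
  rw [Function.update_of_ne (ne_of_mem_of_not_mem hq hm)]
  exact (hadj q hq).1

/-- An order in which the elements of `S` can be embedded into a dense family, the ones inserted
last coming first: single ones whose densities to all later ones are at least `δ`, and linked pairs,
embedded simultaneously, whose neighbourhoods are sure to overlap in proportion at least `δ`. -/
inductive Schedule (linked : ι → ι → Prop) (d : ι → ι → ℝ) (δ : ℝ) : Finset ι → Prop
  | empty : Schedule linked d δ ∅
  | single {l : ι} {S : Finset ι} (hl : l ∉ S) (hd : ∀ q ∈ S, δ ≤ d l q)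
      (hS : Schedule linked d δ S) : Schedule linked d δ (insert l S)
  | pair {l m : ι} {S : Finset ι} (hl : l ∉ S) (hm : m ∉ S) (hlm : l ≠ m) (hlinked : linked l m)
      (hd : ∀ q ∈ S, 1 + δ ≤ d l q + d m q) (hS : Schedule linked d δ S) :
      Schedule linked d δ (insert l (insert m S))

lemma sub_mul_le_card_filter_and {P Q : V → Prop} {A : Finset V} {a b : ℝ}
    (hP : a * #A ≤ #{x ∈ A | P x}) (hQ : b * #A ≤ #{x ∈ A | Q x}) :
    (a + b - 1) * #A ≤ #{x ∈ A | P x ∧ Q x} := by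
  have hunion : (#{x ∈ A | P x ∨ Q x} : ℝ) ≤ #A := mod_cast card_filter_le _ _
  have hadd : (#{x ∈ A | P x ∨ Q x} : ℝ) + #{x ∈ A | P x ∧ Q x} =
      #{x ∈ A | P x} + #{x ∈ A | Q x} := by
    rw [filter_or, filter_and]
    exact_mod_cast card_union_add_card_inter _ _
  linarith

lemma Schedule.exists_isTransversal [Nonempty V] {linked : ι → ι → Prop}
    (hS : Schedule linked d δ S) (hH : ∀ p q, H p q = H q p)
    (hlinked : ∀ p q, linked p q → BipartiteHoleFree (H p q) t) (ht : 0 < t) (hδ : 0 < δ)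
    (hδ1 : δ ≤ 1) (hW : IsDenseFamily H d σ t W S) (hσ : (#S + 1) * σ ≤ δ ^ #S) :
    ∃ x, IsTransversal H W S x := by
  induction hS generalizing W σ with
  | empty => exact ⟨fun _ => Classical.arbitrary V, by simp, by simp⟩
  | @single l S hl hd _ ih =>
    have hσ0 := hW.pos ht (mem_insert_self l S)
    rw [card_insert_of_notMem hl, Nat.cast_succ] at hσ
    obtain ⟨a, ha⟩ := card_pos.1 <| ht.trans_le <| hW.le_card_typical ht (mem_insert_self l S)
      (subset_insert l S) hl (by nlinarith [pow_le_one₀ (n := #S + 1) hδ.le hδ1])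
    obtain ⟨haW, ha⟩ := mem_filter.1 ha
    obtain ⟨x, hx⟩ := ih (W := fun q => {y ∈ W q | (H l q).Adj a y}) (σ := σ / δ)
      (hW.restrict (subset_insert l S) hδ (fun q => filter_subset _ _)
        (fun q hq => (mul_le_mul_of_nonneg_right (hd q hq) (Nat.cast_nonneg _)).trans (ha q hq))
        hσ0.le)
      (by rw [mul_div_assoc', div_le_iff₀ hδ, ← pow_succ]; linarith)
    exact ⟨_, (hx.mono fun q => filter_subset _ _).insert hH hl haW
      fun q hq => (mem_filter.1 (hx.mem q hq)).2⟩
  | @pair l m S hl hm hlm hlink hd _ ih =>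
    have hlS : l ∉ insert m S := by simp [hlm, hl]
    have hlmem := mem_insert_self l (insert m S)
    have hmmem := mem_insert_of_mem (b := l) (mem_insert_self m S)
    have hSsub : S ⊆ insert l (insert m S) := (subset_insert m S).trans (subset_insert l _)
    have hσ0 := hW.pos ht hlmem
    rw [card_insert_of_notMem hlS, card_insert_of_notMem hm, Nat.cast_succ, Nat.cast_succ] at hσ
    have hσ1 : (#S + 1) * σ ≤ 1 := by nlinarith [pow_le_one₀ (n := #S + 1 + 1) hδ.le hδ1]
    obtain ⟨a, haW, b, hbW, hab, ha, hb⟩ := hW.exists_adj_typical ht (hlinked l m hlink) hlm hlmem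
      hmmem hSsub hl hm hσ1
    obtain ⟨x, hx⟩ := ih (W := fun q => {y ∈ W q | (H l q).Adj a y ∧ (H m q).Adj b y})
      (σ := σ / δ)
      (hW.restrict hSsub hδ (fun q => filter_subset _ _)
        (fun q hq => (mul_le_mul_of_nonneg_right (by linarith [hd q hq]) (Nat.cast_nonneg _)).trans
          (sub_mul_le_card_filter_and (ha q hq) (hb q hq))) hσ0.le)
      (by
        rw [mul_div_assoc', div_le_iff₀ hδ, ← pow_succ]
        linarith [pow_le_pow_of_le_one hδ.le hδ1 (Nat.le_add_right (#S + 1) 1)])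
    exact ⟨_, (hx.mono fun q => filter_subset _ _).insert_insert hH hl hm hlm haW hbW hab
      fun q hq => (mem_filter.1 (hx.mem q hq)).2⟩

end Embedding

section Scheduling

open scoped Classical

variable {k : ℕ} {χ : Fin k → Fin k → Bool} {α : ℝ} {l m p q : Fin (2 * k)}
  {S : Finset (Fin (2 * k))}

lemma colorOf_comm (χ : Fin k → Fin k → Bool) (x y : Fin k) : colorOf χ x y = colorOf χ y x := by
  unfold colorOf
  obtain h | rfl | h := lt_trichotomy x y
  · rw [if_pos h, if_neg h.asymm]
  · rfl
  · rw [if_neg h.asymm, if_pos h]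

lemma colorOf_of_lt {x y : Fin k} (h : x < y) : colorOf χ x y = χ x y := if_pos h

/-- The part hosting a vertex of the path: part `i` hosts the two vertices `2 * i` and
`2 * i + 1`. -/
def part (p : Fin (2 * k)) : Fin k := ⟨p / 2, Nat.div_lt_of_lt_mul p.2⟩

lemma coe_part (p : Fin (2 * k)) : (part p : ℕ) = p / 2 := rfl

lemma part_ne_iff : part p ≠ part q ↔ (p : ℕ) / 2 ≠ q / 2 := Fin.ext_iff.not

/-- The density available for embedding the pair `p, q` of path vertices: between parts of red
colour the complement has density `1 - 3 * α` but the graph itself may have density zero. -/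
noncomputable def slotDensity (χ : Fin k → Fin k → Bool) (α : ℝ) (p q : Fin (2 * k)) : ℝ :=
  if part p = part q then 4 * α
  else if (SimpleGraph.pathGraph (2 * k)).Adj p q then
    if colorOf χ (part p) (part q) = true then 0 else α
  else if colorOf χ (part p) (part q) = true then 1 - 3 * α else 4 * α

/-- An edge `l, m` of the path between two consecutive parts whose pair is red. Such an edge has to
be embedded in one step. -/
def RedLink (χ : Fin k → Fin k → Bool) (l m : Fin (2 * k)) : Prop :=
  (l : ℕ) + 1 = m ∧ part l ≠ part m ∧ χ (part l) (part m) = true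

lemma RedLink.mod_two_eq_one (h : RedLink χ l m) : (l : ℕ) % 2 = 1 := by
  have := part_ne_iff.1 h.2.1
  have := h.1
  omega

lemma RedLink.coe_part_add_one (h : RedLink χ l m) : (part l : ℕ) + 1 = part m := by
  have := h.mod_two_eq_one
  have := h.1
  rw [coe_part, coe_part]
  omega

lemma RedLink.colorOf_eq_true (h : RedLink χ l m) : colorOf χ (part l) (part m) = true := by
  rw [colorOf_of_lt (Fin.lt_def.2 (by have := h.coe_part_add_one; omega))]
  exact h.2.2

lemma redLink_or_redLink (hpq : (SimpleGraph.pathGraph (2 * k)).Adj p q) (hne : part p ≠ part q)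
    (hred : colorOf χ (part p) (part q) = true) : RedLink χ p q ∨ RedLink χ q p := by
  have hne' := part_ne_iff.1 hne
  obtain h | h := SimpleGraph.pathGraph_adj.1 hpq
  · refine Or.inl ⟨h, hne, ?_⟩
    rwa [colorOf_of_lt (Fin.lt_def.2 (by rw [coe_part, coe_part]; omega))] at hred
  · refine Or.inr ⟨h, hne.symm, ?_⟩
    rwa [colorOf_comm, colorOf_of_lt (Fin.lt_def.2 (by rw [coe_part, coe_part]; omega))] at hred

lemma le_slotDensity (hα : 0 ≤ α) (hα7 : α ≤ 1 / 7) (hpq : ¬ RedLink χ p q)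
    (hqp : ¬ RedLink χ q p) : α ≤ slotDensity χ α p q := by
  unfold slotDensity
  split_ifs with hpart hadj hred
  · linarith
  · exact ((redLink_or_redLink hadj hpart hred).elim hpq hqp).elim
  all_goals linarith

lemma RedLink.not_adj_left (h : RedLink χ l m) (hq : part l ≠ part q) (hqm : q ≠ m) :
    ¬ (SimpleGraph.pathGraph (2 * k)).Adj l q := by
  have := h.mod_two_eq_one
  have := h.1
  have := part_ne_iff.1 hq
  have := Fin.val_ne_of_ne hqm
  rw [SimpleGraph.pathGraph_adj]
  omega

lemma RedLink.not_adj_right (h : RedLink χ l m) (hq : part m ≠ part q) (hql : q ≠ l) :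
    ¬ (SimpleGraph.pathGraph (2 * k)).Adj m q := by
  have := h.mod_two_eq_one
  have := h.1
  have := part_ne_iff.1 hq
  have := Fin.val_ne_of_ne hql
  rw [SimpleGraph.pathGraph_adj]
  omega

lemma four_mul_le_slotDensity (hα7 : α ≤ 1 / 7)
    (hpq : part p ≠ part q → ¬ (SimpleGraph.pathGraph (2 * k)).Adj p q) :
    4 * α ≤ slotDensity χ α p q := by
  unfold slotDensity
  split_ifs with hpart hadj
  · rfl
  · exact (hpq hpart hadj).elim
  · exact (hpq hpart hadj).elim
  · linarith
  · rfl

lemma slotDensity_of_red (hne : part p ≠ part q) (hpq : ¬ (SimpleGraph.pathGraph (2 * k)).Adj p q)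
    (hred : colorOf χ (part p) (part q) = true) : slotDensity χ α p q = 1 - 3 * α := by
  rw [slotDensity, if_neg hne, if_neg hpq, if_pos hred]

lemma RedLink.one_add_le_slotDensity_add (h : RedLink χ l m) (hα7 : α ≤ 1 / 7) (hp : p = l ∨ p = m)
    (hql : q ≠ l) (hqm : q ≠ m) (hdep : ¬ DepEdge χ (part q) (part p)) :
    1 + α ≤ slotDensity χ α l q + slotDensity χ α m q := by
  have hl := four_mul_le_slotDensity (χ := χ) hα7 fun hne => h.not_adj_left hne hqm
  have hm := four_mul_le_slotDensity (χ := χ) hα7 fun hne => h.not_adj_right hne hql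
  by_cases hlred : part l ≠ part q ∧ colorOf χ (part l) (part q) = true
  · rw [slotDensity_of_red hlred.1 (h.not_adj_left hlred.1 hqm) hlred.2]
    linarith
  by_cases hmred : part m ≠ part q ∧ colorOf χ (part m) (part q) = true
  · rw [slotDensity_of_red hmred.1 (h.not_adj_right hmred.1 hql) hmred.2]
    linarith
  have hlm := h.colorOf_eq_true
  have hlq : part l ≠ part q := fun heq => hmred ⟨heq ▸ h.2.1.symm, by rwa [← heq, colorOf_comm]⟩
  have hmq : part m ≠ part q := fun heq => hlred ⟨heq ▸ h.2.1, by rwa [← heq]⟩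
  exact (hdep ⟨part l, part m, h.coe_part_add_one, hp.imp (congrArg part) (congrArg part), hlq.symm,
    hmq.symm, h.2.2, by simpa [hlq] using hlred, by simpa [hmq] using hmred⟩).elim

/-- `S` contains both ends or neither end of each red link. -/
def RedLinkClosed (χ : Fin k → Fin k → Bool) (S : Finset (Fin (2 * k))) : Prop :=
  ∀ ⦃p q⦄, RedLink χ p q → (p ∈ S ↔ q ∈ S)

lemma RedLinkClosed.erase (hS : RedLinkClosed χ S) (hl : ∀ q, ¬ RedLink χ l q)
    (hl' : ∀ q, ¬ RedLink χ q l) : RedLinkClosed χ (S.erase l) := fun p q h => by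
  have hp : p ≠ l := fun heq => hl q (heq ▸ h)
  have hq : q ≠ l := fun heq => hl' p (heq ▸ h)
  simp only [mem_erase, ne_eq, hp, hq, not_false_eq_true, true_and, hS h]

lemma RedLinkClosed.erase_erase (hS : RedLinkClosed χ S) (hlm : RedLink χ l m) :
    RedLinkClosed χ ((S.erase l).erase m) := fun p q h => by
  have hl := hlm.mod_two_eq_one
  have hp := h.mod_two_eq_one
  have hm := hlm.1
  have hq := h.1
  have hpm : p ≠ m := fun heq => by subst heq; omega
  have hql : q ≠ l := fun heq => by subst heq; omega
  have hiff : p = l ↔ q = m := by rw [Fin.ext_iff, Fin.ext_iff]; omega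
  simp only [mem_erase, ne_eq, hpm, hql, hiff, hS h, not_false_eq_true, true_and]

lemma RedLinkClosed.exists_redLink (hS : RedLinkClosed χ S) (hp : p ∈ S)
    (hlink : ∃ q, RedLink χ p q ∨ RedLink χ q p) :
    ∃ l ∈ S, ∃ m ∈ S, RedLink χ l m ∧ (p = l ∨ p = m) := by
  obtain ⟨q, h | h⟩ := hlink
  · exact ⟨p, hp, q, (hS h).1 hp, h, Or.inl rfl⟩
  · exact ⟨q, (hS h).2 hp, p, hp, h, Or.inr rfl⟩

lemma Admissible.exists_not_depEdge (hχ : Admissible χ) (hS : S.Nonempty) :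
    ∃ p ∈ S, ∀ q ∈ S, ¬ DepEdge χ (part q) (part p) := by
  have : Std.Irrefl (Relation.TransGen (DepEdge χ)) := ⟨hχ⟩
  have hwf := Finite.wellFounded_of_trans_of_irrefl (Relation.TransGen (DepEdge χ))
  obtain ⟨p, hp, hmin⟩ := (InvImage.wf part hwf).has_min (S : Set (Fin (2 * k))) hS
  exact ⟨p, hp, fun q hq h => hmin q hq (.single h)⟩

lemma Admissible.schedule (hχ : Admissible χ) (hα : 0 ≤ α) (hα7 : α ≤ 1 / 7)
    (hS : RedLinkClosed χ S) : Schedule (RedLink χ) (slotDensity χ α) α S := by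
  induction S using Finset.strongInduction with
  | H S ih =>
    obtain rfl | hne := S.eq_empty_or_nonempty
    · exact .empty
    obtain ⟨p, hp, hmin⟩ := hχ.exists_not_depEdge hne
    by_cases hlink : ∃ q, RedLink χ p q ∨ RedLink χ q p
    · obtain ⟨l, hl, m, hm, hlm, hplm⟩ := hS.exists_redLink hp hlink
      have hml : m ≠ l := fun h => hlm.2.1 (congrArg part h.symm)
      rw [← insert_erase hl, ← insert_erase (mem_erase.2 ⟨hml, hm⟩)]
      refine .pair (fun h => notMem_erase l S (mem_of_mem_erase h)) (notMem_erase m _) hml.symm hlm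
        (fun q hq => ?_) (ih _ ?_ (hS.erase_erase hlm))
      · simp only [mem_erase] at hq
        exact hlm.one_add_le_slotDensity_add hα7 hplm hq.2.1 hq.1 (hmin q hq.2.2)
      · exact (erase_subset m _).trans_ssubset (erase_ssubset hl)
    · simp only [not_exists, not_or] at hlink
      rw [← insert_erase hp]
      exact .single (notMem_erase p S)
        (fun q _ => le_slotDensity hα hα7 (hlink q).1 (hlink q).2)
        (ih _ (erase_ssubset hp) (hS.erase (fun q => (hlink q).1) fun q => (hlink q).2))

end Scheduling

section PairedParts

open scoped Classical

variable {ι V : Type*} {G : SimpleGraph V} {α σ : ℝ} {Z : ι → Bool → Finset V} {k : ℕ}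
  {Y : Fin k → Bool → Finset V} {p q : Fin (2 * k)}

/-- The colouring of the pairs of parts in which red (`true`) stands for an almost complete pair in
the complement. -/
noncomputable def partColor (G : SimpleGraph V) (α σ : ℝ) (Z : ι → Bool → Finset V) (i j : ι) :
    Bool :=
  decide (∀ a b, IsDensePair Gᶜ σ (1 - 3 * α) (Z i a) (Z j b))

lemma colorOf_partColor_eq_true {i j : Fin k} : colorOf (partColor G α σ Y) i j = true ↔
    ∀ a b, IsDensePair Gᶜ σ (1 - 3 * α) (Y i a) (Y j b) := by
  unfold colorOf
  split_ifs
  · exact decide_eq_true_iff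
  · exact decide_eq_true_iff.trans
      ⟨fun h a b => (h b a).symm, fun h a b => (h b a).symm⟩

/-- The set hosting a vertex of the path: within a part, the vertex of even index goes to the first
half and the one of odd index to the second half. -/
def slot (Y : Fin k → Bool → Finset V) (p : Fin (2 * k)) : Finset V :=
  Y (part p) (decide ((p : ℕ) % 2 = 1))

/-- The graph in which the images of two vertices of an induced path have to be adjacent. -/
noncomputable def slotGraph (G : SimpleGraph V) (p q : Fin (2 * k)) : SimpleGraph V :=
  if (SimpleGraph.pathGraph (2 * k)).Adj p q then G else Gᶜ

lemma slotGraph_comm (G : SimpleGraph V) (p q : Fin (2 * k)) :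
    slotGraph G p q = slotGraph G q p := by
  unfold slotGraph
  rw [SimpleGraph.adj_comm]

variable [LinearOrder ι] [LinearOrder V]

/-- The reduced structure in which the path is embedded: consecutive parts, the `i`-th one being
split into the consecutive halves `Z i false` and `Z i true`. The two halves of a part are dense in
`G`; between different parts the complement is dense, and either it is almost complete or `G` is
dense as well. -/
structure IsPairedParts (G : SimpleGraph V) (α σ : ℝ) (Z : ι → Bool → Finset V) : Prop where
  precedes_self : ∀ i, Precedes (Z i false) (Z i true)
  precedes : ∀ i j, i < j → ∀ a b, Precedes (Z i a) (Z j b)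
  dense_self : ∀ i, IsDensePair G σ (4 * α) (Z i false) (Z i true)
  dense_compl : ∀ i j, i ≠ j → ∀ a b, IsDensePair Gᶜ σ (4 * α) (Z i a) (Z j b)
  almost_complete_or_dense : ∀ i j, i ≠ j →
    (∀ a b, IsDensePair Gᶜ σ (1 - 3 * α) (Z i a) (Z j b)) ∨
      ∀ a b, IsDensePair G σ α (Z i a) (Z j b)

lemma IsPairedParts.comp {κ : Type*} [LinearOrder κ] (h : IsPairedParts G α σ Z) {g : κ → ι}
    (hg : StrictMono g) : IsPairedParts G α σ (Z ∘ g) where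
  precedes_self i := h.precedes_self (g i)
  precedes i j hij := h.precedes (g i) (g j) (hg hij)
  dense_self i := h.dense_self (g i)
  dense_compl i j hij := h.dense_compl (g i) (g j) (hg.injective.ne hij)
  almost_complete_or_dense i j hij :=
    h.almost_complete_or_dense (g i) (g j) (hg.injective.ne hij)

lemma IsPairedParts.precedes_slot (h : IsPairedParts G α σ Y) (hpq : p < q) :
    Precedes (slot Y p) (slot Y q) := by
  unfold slot
  rw [Fin.lt_def] at hpq
  obtain hlt | heq := (Nat.div_le_div_right (c := 2) hpq.le).lt_or_eq
  · exact h.precedes _ _ (Fin.lt_def.2 hlt) _ _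
  · rw [show part q = part p from Fin.ext heq.symm, decide_eq_false (by omega),
      decide_eq_true (by omega : (q : ℕ) % 2 = 1)]
    exact h.precedes_self (part p)

lemma IsPairedParts.isDensePair_slot_self (h : IsPairedParts G α σ Y) (hpq : p ≠ q)
    (hpart : part p = part q) : IsDensePair (slotGraph G p q) σ (4 * α) (slot Y p) (slot Y q) := by
  wlog hlt : p < q generalizing p q
  · rw [slotGraph_comm]
    exact (this hpq.symm hpart.symm (hpq.symm.lt_of_le (not_lt.1 hlt))).symm
  have hdiv : (p : ℕ) / 2 = q / 2 := congrArg Fin.val hpart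
  rw [Fin.lt_def] at hlt
  unfold slot slotGraph
  rw [if_pos (SimpleGraph.pathGraph_adj.2 (by omega)), ← hpart, decide_eq_false (by omega),
    decide_eq_true (by omega : (q : ℕ) % 2 = 1)]
  exact h.dense_self (part p)

lemma IsPairedParts.isDensePair_slot (h : IsPairedParts G α σ Y) (hpq : p ≠ q) :
    IsDensePair (slotGraph G p q) σ (slotDensity (partColor G α σ Y) α p q) (slot Y p)
      (slot Y q) := by
  unfold slotDensity
  split_ifs with hpart hadj hred hred
  · exact h.isDensePair_slot_self hpq hpart
  · exact isDensePair_of_nonpos le_rfl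
  · rw [slotGraph, if_pos hadj]
    exact (h.almost_complete_or_dense _ _ hpart).resolve_left
      (mt colorOf_partColor_eq_true.2 hred) _ _
  · rw [slotGraph, if_neg hadj]
    exact colorOf_partColor_eq_true.1 hred _ _
  · rw [slotGraph, if_neg hadj]
    exact h.dense_compl _ _ hpart _ _

lemma IsPairedParts.isDenseFamily {t : ℕ} (h : IsPairedParts G α σ Y)
    (ht : ∀ i b, t ≤ σ * #(Y i b)) :
    IsDenseFamily (slotGraph G) (slotDensity (partColor G α σ Y) α) σ t (slot Y) univ where
  disjoint _ _ _ _ hpq := hpq.lt_or_gt.elim (fun hlt => (h.precedes_slot hlt).disjoint)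
    fun hlt => (h.precedes_slot hlt).disjoint.symm
  dense _ _ _ _ hpq := h.isDensePair_slot hpq
  le_card _ _ := ht _ _

lemma IsTransversal.hasIndMonPath {n : ℕ} {G : SimpleGraph (Fin n)}
    {Y : Fin k → Bool → Finset (Fin n)} {x : Fin (2 * k) → Fin n}
    (hx : IsTransversal (slotGraph G) (slot Y) univ x) (hY : IsPairedParts G α σ Y) :
    HasIndMonPath G (2 * k) := by
  refine ⟨x, fun p q hpq => hY.precedes_slot hpq _ (hx.mem p (mem_univ p)) _
    (hx.mem q (mem_univ q)), fun p q => ?_⟩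
  rw [← SimpleGraph.pathGraph_adj]
  obtain rfl | hpq := eq_or_ne p q
  · simp only [SimpleGraph.irrefl]
  have hadj := hx.adj p (mem_univ p) q (mem_univ q) hpq
  unfold slotGraph at hadj
  split_ifs at hadj with hpath
  · exact iff_of_true hadj hpath
  · exact iff_of_false hadj.2 hpath

lemma IsPairedParts.hasIndMonPath {n t : ℕ} {G : SimpleGraph (Fin n)}
    {Y : Fin k → Bool → Finset (Fin n)} (hY : IsPairedParts G α σ Y)
    (hχ : Admissible (partColor G α σ Y)) (hG : BipartiteHoleFree G t)
    (ht : ∀ i b, t ≤ σ * #(Y i b)) (hk : 0 < k) (hα : 0 < α) (hα7 : α ≤ 1 / 7)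
    (hσ : (2 * k + 1) * σ ≤ α ^ (2 * k)) : HasIndMonPath G (2 * k) := by
  have hdense := hY.isDenseFamily ht
  have hlink : ∀ p q, RedLink (partColor G α σ Y) p q → BipartiteHoleFree (slotGraph G p q) t :=
    fun p q h => by rwa [slotGraph, if_pos (SimpleGraph.pathGraph_adj.2 (Or.inl h.1))]
  have hY₀ : (slot Y ⟨0, by positivity⟩).Nonempty := by
    have hcard := (Nat.cast_pos.2 hG.pos).trans_le (hdense.le_card ⟨0, by positivity⟩ (mem_univ _))
    exact card_pos.1 (Nat.cast_pos.1
      (pos_of_mul_pos_right hcard (hdense.pos hG.pos (mem_univ ⟨0, by positivity⟩)).le))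
  have : Nonempty (Fin n) := hY₀.to_type
  obtain ⟨x, hx⟩ := (hχ.schedule hα.le hα7 (S := univ) fun p q _ => by simp).exists_isTransversal
    (slotGraph_comm G) hlink hG.pos hα (by linarith) hdense
    (by simpa only [card_univ, Fintype.card_fin, Nat.cast_mul, Nat.cast_ofNat] using hσ)
  exact hx.hasIndMonPath hY

end PairedParts

section ExistsPairedParts

open scoped Classical

lemma cliqueCount_le_of_forall_exists_mem {V : Type*} [Fintype V] {H : SimpleGraph V} {N : ℕ}
    {bad : Finset (V × V)} (hbad : ∀ s : Finset V, #s = N → H.IsClique (s : Set V) →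
      ∃ x ∈ s, ∃ y ∈ s, x ≠ y ∧ (x, y) ∈ bad) :
    cliqueCount H N ≤ #bad * Fintype.card V ^ (N - 2) := by
  have hsub : {s : Finset V | #s = N ∧ H.IsClique (s : Set V)} ⊆
      ((bad ×ˢ powersetCard (N - 2) univ).image fun q => insert q.1.1 (insert q.1.2 q.2) :
        Finset (Finset V)) := by
    rintro s ⟨hs, hclique⟩
    obtain ⟨x, hx, y, hy, hxy, hmem⟩ := hbad s hs hclique
    have hy : y ∈ s.erase x := mem_erase.2 ⟨hxy.symm, hy⟩
    refine mem_image.2 ⟨((x, y), (s.erase x).erase y), mem_product.2 ⟨hmem, mem_powersetCard.2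
      ⟨subset_univ _, ?_⟩⟩, by rw [insert_erase hy, insert_erase hx]⟩
    rw [card_erase_of_mem hy, card_erase_of_mem hx, hs, Nat.sub_sub]
  calc cliqueCount H N ≤ #((bad ×ˢ powersetCard (N - 2) univ).image
        fun q : (V × V) × Finset V => insert q.1.1 (insert q.1.2 q.2)) := by
        rw [← Set.ncard_coe_finset]
        exact Set.ncard_le_ncard hsub (finite_toSet _)
    _ ≤ #bad * (Fintype.card V).choose (N - 2) := by
        refine card_image_le.trans ?_
        rw [card_product, card_powersetCard, card_univ]
    _ ≤ #bad * Fintype.card V ^ (N - 2) := Nat.mul_le_mul_left _ (Nat.choose_le_pow _ _)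

lemma exists_clique_avoiding {V : Type*} [Fintype V] {H : SimpleGraph V} {N : ℕ}
    {bad : Finset (V × V)}
    (h : #bad * Fintype.card V ^ N < cliqueCount H N * Fintype.card V ^ 2) :
    ∃ x : Fin N → V, ∀ i j, i ≠ j → H.Adj (x i) (x j) ∧ (x i, x j) ∉ bad := by
  by_contra! hcon
  have hbad : ∀ s : Finset V, #s = N → H.IsClique (s : Set V) →
      ∃ x ∈ s, ∃ y ∈ s, x ≠ y ∧ (x, y) ∈ bad := fun s hs hclique => by
    let e := s.equivFinOfCardEq hs
    obtain ⟨i, j, hij, hmem⟩ := hcon fun i => (e.symm i : V)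
    have hne : (e.symm i : V) ≠ e.symm j := fun h => hij (e.symm.injective (Subtype.ext h))
    exact ⟨_, (e.symm i).2, _, (e.symm j).2, hne, hmem (hclique (e.symm i).2 (e.symm j).2 hne)⟩
  have hpos : 0 < cliqueCount H N :=
    pos_of_mul_pos_left ((Nat.zero_le _).trans_lt h) (Nat.zero_le _)
  obtain ⟨s, hs, hclique⟩ := Set.nonempty_of_ncard_ne_zero hpos.ne'
  obtain ⟨x, hx, y, hy, hxy, -⟩ := hbad s hs hclique
  have hN : 2 ≤ N := hs ▸ one_lt_card.2 ⟨x, hx, y, hy, hxy⟩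
  refine h.not_ge ?_
  calc cliqueCount H N * Fintype.card V ^ 2
      ≤ #bad * Fintype.card V ^ (N - 2) * Fintype.card V ^ 2 :=
        Nat.mul_le_mul_right _ (cliqueCount_le_of_forall_exists_mem hbad)
    _ = #bad * Fintype.card V ^ N := by rw [mul_assoc, ← pow_add, Nat.sub_add_cancel hN]

lemma exists_pairwise_isUniform (N : ℕ) {η : ℝ} (hη : 0 < η) :
    ∃ δ : ℝ, 0 < δ ∧ ∀ ρ : ℝ, 0 < ρ → ∃ M : ℕ, 0 < M ∧
      ∀ {V : Type*} [Fintype V] (H : SimpleGraph V), M ≤ Fintype.card V →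
        η * (Fintype.card V : ℝ) ^ N ≤ cliqueCount H N →
        ∃ U : Fin N → Finset V, (∀ i, Fintype.card V ≤ M * #(U i)) ∧
          ∀ i j, i ≠ j → Disjoint (U i) (U j) ∧ H.IsUniform ρ (U i) (U j) ∧
            δ ≤ H.edgeDensity (U i) (U j) := by
  refine ⟨η / 16, by positivity, fun ρ hρ => ?_⟩
  obtain ⟨M, hM, hreg⟩ := exists_regular_parts (show 0 < η / 16 by positivity) hρ
  refine ⟨M, hM, fun {V} _ H hV hcount => ?_⟩
  obtain ⟨bad, π, hbad, hπ, hpair⟩ := hreg H hV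
  have hlt : #bad * Fintype.card V ^ N < cliqueCount H N * Fintype.card V ^ 2 := by
    have hVpos : (0 : ℝ) < Fintype.card V := Nat.cast_pos.2 (hM.trans_le hV)
    rify
    calc #bad * (Fintype.card V : ℝ) ^ N
        ≤ 8 * (η / 16) * (Fintype.card V : ℝ) ^ 2 * (Fintype.card V : ℝ) ^ N := by gcongr
      _ < η * (Fintype.card V : ℝ) ^ N * (Fintype.card V : ℝ) ^ 2 := by
        have : 0 < η * (Fintype.card V : ℝ) ^ N * (Fintype.card V : ℝ) ^ 2 := by positivity
        linarith
      _ ≤ cliqueCount H N * (Fintype.card V : ℝ) ^ 2 := by gcongr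
  obtain ⟨x, hx⟩ := exists_clique_avoiding hlt
  exact ⟨fun i => π (x i), fun i => hπ (x i), fun i j hij =>
    hpair _ _ (hx i j hij).1 (hx i j hij).2⟩

lemma isPairedParts_of_isUniform {ι V : Type*} [LinearOrder ι] [LinearOrder V] {H : SimpleGraph V}
    {α σ ρ : ℝ} {U : ι → Finset V} {Z : ι → Bool → Finset V} (hρ : 0 < ρ) (hρα : ρ ≤ α)
    (hU : ∀ i, (U i).Nonempty)
    (hunif : ∀ i j, i ≠ j → Disjoint (U i) (U j) ∧ H.IsUniform ρ (U i) (U j) ∧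
      5 * α ≤ H.edgeDensity (U i) (U j))
    (hZU : ∀ i b, Z i b ⊆ U i) (hcard : ∀ i b, ρ * #(U i) ≤ σ * #(Z i b))
    (hself : ∀ i, Precedes (Z i false) (Z i true))
    (hdense : ∀ i, IsDensePair Hᶜ σ (4 * α) (Z i false) (Z i true))
    (hlt : ∀ i j, i < j → ∀ a b, Precedes (Z i a) (Z j b)) : IsPairedParts Hᶜ α σ Z where
  precedes_self := hself
  precedes := hlt
  dense_self := hdense
  dense_compl i j hij a b := by
    obtain ⟨-, hunif, hdens⟩ := hunif i j hij
    rw [compl_compl]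
    exact (isDensePair_of_isUniform hunif (by linarith)).restrict (hZU i a) (hZU j b) (hcard i a)
      (hcard j b)
  almost_complete_or_dense i j hij := by
    obtain ⟨hdisj, hunif, -⟩ := hunif i j hij
    rw [compl_compl]
    exact (isDensePair_or_isDensePair_compl hunif hρ hρα hdisj (hU i) (hU j)).imp
      (fun h a b => h.restrict (hZU i a) (hZU j b) (hcard i a) (hcard j b))
      fun h a b => h.restrict (hZU i a) (hZU j b) (hcard i a) (hcard j b)

lemma exists_sorted_pairwise_isUniform {N : ℕ} (hN : 0 < N) {η : ℝ} (hη : 0 < η) :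
    ∃ δ : ℝ, 0 < δ ∧ ∀ ρ : ℝ, 0 < ρ → ∃ M : ℕ, 0 < M ∧
      ∀ {V : Type*} [Fintype V] [LinearOrder V] (H : SimpleGraph V), M ≤ Fintype.card V →
        η * (Fintype.card V : ℝ) ^ N ≤ cliqueCount H N →
        ∃ U Y : Fin N → Finset V,
          (∀ i, Y i ⊆ U i ∧ Fintype.card V ≤ M * #(Y i) ∧ #(U i) ≤ 2 * N * #(Y i)) ∧
          (∀ i j, i < j → Precedes (Y i) (Y j)) ∧
          ∀ i j, i ≠ j → Disjoint (U i) (U j) ∧ H.IsUniform ρ (U i) (U j) ∧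
            δ ≤ H.edgeDensity (U i) (U j) := by
  obtain ⟨δ, hδ, hparts⟩ := exists_pairwise_isUniform N hη
  refine ⟨δ, hδ, fun ρ hρ => ?_⟩
  obtain ⟨M, hM, hparts⟩ := hparts ρ hρ
  refine ⟨M * (2 * N), by positivity, fun {V} _ _ H hV hcount => ?_⟩
  obtain ⟨U, hUcard, hU⟩ := hparts H (by nlinarith) hcount
  obtain ⟨τ, Y, hYU, hYcard, hY⟩ := exists_sorted U fun i => by nlinarith [hUcard i]
  refine ⟨U ∘ τ, Y, fun i => ⟨hYU i, (hUcard (τ i)).trans ?_, hYcard i⟩, hY,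
    fun i j hij => hU _ _ (τ.injective.ne hij)⟩
  rw [mul_assoc M]
  exact Nat.mul_le_mul_left M (hYcard i)

lemma BipartiteHoleFree.exists_large_isDensePair (h : ℕ) :
    ∃ δ : ℝ, 0 < δ ∧ ∀ σ : ℝ, 0 < σ → ∃ κ : ℝ, 0 < κ ∧
      ∀ {V : Type*} [LinearOrder V] {G : SimpleGraph V} {t : ℕ}, BipartiteHoleFree G t →
        (∀ P y, IndPathTo G P y → #P + 1 < h) →
        ∀ U : Finset V, (t * (3 * Nat.clog 2 t + 1) : ℝ) ≤ κ * #U →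
          ∃ Z : Bool → Finset V, (∀ b, Z b ⊆ U ∧ κ * #U ≤ #(Z b) ∧ t ≤ σ * #(Z b)) ∧
            Precedes (Z false) (Z true) ∧ IsDensePair G σ δ (Z false) (Z true) := by
  obtain ⟨δ, hδ, hpairs⟩ := BipartiteHoleFree.exists_precedes_isDensePair h
  refine ⟨δ, hδ, fun σ hσ => ?_⟩
  obtain ⟨M, hM, hpairs⟩ := hpairs σ hσ
  refine ⟨min 1 σ / M, by positivity, fun {V} _ G t hG hpath U ht => ?_⟩
  have hκ_one : min 1 σ / M * #U ≤ #U / M := by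
    rw [div_mul_eq_mul_div]
    exact div_le_div_of_nonneg_right (mul_le_of_le_one_left (by positivity) (min_le_left 1 σ))
      (by positivity)
  have htU : (M * (t * (3 * Nat.clog 2 t + 1)) : ℝ) ≤ #U :=
    (le_div_iff₀' (by positivity)).1 (ht.trans hκ_one)
  obtain ⟨Z, hZ, hprec, hdense⟩ := hpairs hG hpath U (mod_cast htU)
  have hZcard : ∀ b, (#U / M : ℝ) ≤ #(Z b) := fun b =>
    (div_le_iff₀' (by positivity)).2 (mod_cast (hZ b).2)
  refine ⟨Z, fun b => ⟨(hZ b).1, hκ_one.trans (hZcard b), ?_⟩, hprec, hdense⟩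
  calc (t : ℝ) ≤ t * (3 * Nat.clog 2 t + 1) :=
        le_mul_of_one_le_right (Nat.cast_nonneg _) (by norm_cast; omega)
    _ ≤ min 1 σ / M * #U := ht
    _ = min 1 σ * (#U / M) := by ring
    _ ≤ σ * #(Z b) := mul_le_mul (min_le_right _ _) (hZcard b) (by positivity) hσ.le

lemma exists_isPairedParts (h : ℕ) {N : ℕ} (hN : 0 < N) {η : ℝ} (hη : 0 < η) :
    ∃ α : ℝ, 0 < α ∧ α ≤ 1 / 7 ∧ ∀ σ : ℝ, 0 < σ → ∃ c : ℝ, 0 < c ∧ ∃ n₀ : ℕ,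
      ∀ {V : Type*} [Fintype V] [LinearOrder V] {G : SimpleGraph V} {t : ℕ},
        n₀ ≤ Fintype.card V → BipartiteHoleFree G t → (∀ P y, IndPathTo G P y → #P + 1 < h) →
        (t * (3 * Nat.clog 2 t + 1) : ℝ) ≤ c * Fintype.card V →
        η * (Fintype.card V : ℝ) ^ N ≤ cliqueCount Gᶜ N →
        ∃ Z : Fin N → Bool → Finset V, IsPairedParts G α σ Z ∧ ∀ i b, t ≤ σ * #(Z i b) := by
  obtain ⟨δ, hδ, hparts⟩ := exists_sorted_pairwise_isUniform hN hη
  obtain ⟨δ', hδ', hpairs⟩ := BipartiteHoleFree.exists_large_isDensePair h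
  obtain ⟨α, hα, hα_lt⟩ :=
    exists_between (show 0 < min (min (δ / 5) (δ' / 4)) (1 / 7) by positivity)
  obtain ⟨⟨hαδ, hαδ'⟩, hα7⟩ := by simpa only [lt_min_iff] using hα_lt
  refine ⟨α, hα, hα7.le, fun σ hσ => ?_⟩
  obtain ⟨κ, hκ, hpairs⟩ := hpairs σ hσ
  obtain ⟨M, hM, hparts⟩ := hparts (min (σ * κ / (2 * N)) α) (by positivity)
  refine ⟨κ / M, by positivity, M, fun {V} _ _ G t hV hG hpath ht hcount => ?_⟩
  obtain ⟨U, Y, hY, hYlt, hU⟩ := hparts Gᶜ hV hcount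
  choose Z hZ hZself hZdense using fun i => hpairs hG hpath (Y i) (by
    have hYcard : (Fintype.card V : ℝ) ≤ M * #(Y i) := mod_cast (hY i).2.1
    calc (t * (3 * Nat.clog 2 t + 1) : ℝ) ≤ κ / M * (M * #(Y i)) := ht.trans (by gcongr)
      _ = κ * #(Y i) := by field_simp)
  refine ⟨Z, ?_, fun i b => (hZ i b).2.2⟩
  have hUne : ∀ i, (U i).Nonempty := fun i => (card_pos.1 (Nat.pos_of_mul_pos_left
    ((hM.trans_le hV).trans_le (hY i).2.1))).mono (hY i).1
  have hcard : ∀ i b, min (σ * κ / (2 * N)) α * #(U i) ≤ σ * #(Z i b) := fun i b => by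
    have hUY : (#(U i) : ℝ) ≤ 2 * N * #(Y i) := mod_cast (hY i).2.2
    calc min (σ * κ / (2 * N)) α * #(U i)
        ≤ σ * κ / (2 * N) * (2 * N * #(Y i)) := by
          gcongr
          exact min_le_left _ _
      _ = σ * (κ * #(Y i)) := by field_simp
      _ ≤ σ * #(Z i b) := by
        gcongr
        exact (hZ i b).2.1
  rw [← compl_compl G] at hZdense ⊢
  exact isPairedParts_of_isUniform (U := U) (by positivity) (min_le_right _ _) hUne
    (fun i j hij => ⟨(hU i j hij).1, (hU i j hij).2.1, by linarith [(hU i j hij).2.2]⟩)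
    (fun i b => (hZ i b).1.trans (hY i).1) hcard hZself
    (fun i => (hZdense i).mono_density (by linarith))
    fun i j hij a b => (hYlt i j hij).mono (hZ i a).1 (hZ j b).1

end ExistsPairedParts
section Threshold

open Filter

lemma clog_two_le_three_mul_log {n : ℕ} (hn : 1 ≤ Real.log n) :
    (Nat.clog 2 n : ℝ) ≤ 3 * Real.log n := by
  have hlogb : Real.logb 2 n ≤ 2 * Real.log n := by
    rw [Real.logb, div_le_iff₀ (Real.log_pos one_lt_two)]
    nlinarith [Real.log_two_gt_d9]
  have hceil := Nat.ceil_lt_add_one ((zero_le_one.trans hn).trans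
    (le_div_self (zero_le_one.trans hn) (Real.log_pos one_lt_two) (Real.log_two_lt_d9.le.trans
      (by norm_num))))
  rw [Real.log_div_log] at hceil
  rw [← Real.natCeil_logb_natCast, Nat.cast_ofNat]
  linarith

lemma eventually_log_le_mul {c : ℝ} (hc : 0 < c) : ∀ᶠ n : ℕ in atTop, Real.log n ≤ c * n := by
  filter_upwards [tendsto_natCast_atTop_atTop.eventually (Real.isLittleO_log_id_atTop.bound hc)]
    with n hn
  rw [id, Real.norm_of_nonneg (Nat.cast_nonneg n)] at hn
  exact (le_abs_self _).trans hn

lemma eventually_ceil_mul_clog_le {c : ℝ} (hc : 0 < c) (hc1 : c ≤ 1) :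
    ∀ᶠ n : ℕ in atTop, (⌈c * n / Real.log n⌉₊ * (3 * Nat.clog 2 ⌈c * n / Real.log n⌉₊ + 1) : ℝ) ≤
      20 * c * n := by
  filter_upwards [eventually_log_le_mul hc,
    (Real.tendsto_log_atTop.comp tendsto_natCast_atTop_atTop).eventually_ge_atTop 1]
    with n hlog_le (hlog : 1 ≤ Real.log n)
  have hlog_pos : 0 < Real.log n := one_pos.trans_le hlog
  have hone : 1 ≤ c * n / Real.log n := (one_le_div hlog_pos).2 hlog_le
  have hceil : (⌈c * n / Real.log n⌉₊ : ℝ) ≤ 2 * (c * n / Real.log n) :=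
    (Nat.ceil_lt_add_one (zero_le_one.trans hone)).le.trans (by linarith)
  have hceil_le : ⌈c * n / Real.log n⌉₊ ≤ n := Nat.ceil_le.2 <|
    (div_le_self (by positivity) hlog).trans (mul_le_of_le_one_left (Nat.cast_nonneg n) hc1)
  have hclog : (Nat.clog 2 ⌈c * n / Real.log n⌉₊ : ℝ) ≤ 3 * Real.log n :=
    (Nat.cast_le.2 (Nat.clog_mono_right 2 hceil_le)).trans (clog_two_le_three_mul_log hlog)
  calc (⌈c * n / Real.log n⌉₊ * (3 * Nat.clog 2 ⌈c * n / Real.log n⌉₊ + 1) : ℝ)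
      ≤ 2 * (c * n / Real.log n) * (10 * Real.log n) := by gcongr; linarith
    _ = 20 * c * n := by field_simp; ring

end Threshold

lemma exists_hasIndMonPath {k N : ℕ} (hk : 0 < k) (hN : 0 < N)
    (hRamsey : ∀ χ : Fin N → Fin N → Bool,
      ∃ g : Fin k → Fin N, StrictMono g ∧ Admissible (fun i j => χ (g i) (g j)))
    {η : ℝ} (hη : 0 < η) :
    ∃ c : ℝ, 0 < c ∧ ∃ n₀ : ℕ, ∀ {n t : ℕ} {G : SimpleGraph (Fin n)}, n₀ ≤ n →
      BipartiteHoleFree G t → (t * (3 * Nat.clog 2 t + 1) : ℝ) ≤ c * n →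
      η * (n : ℝ) ^ N ≤ cliqueCount Gᶜ N → HasIndMonPath G (2 * k) := by
  obtain ⟨α, hα, hα7, hparts⟩ := exists_isPairedParts (2 * k) hN hη
  obtain ⟨c, hc, n₀, hparts⟩ := hparts (α ^ (2 * k) / (2 * k + 1)) (by positivity)
  refine ⟨c, hc, n₀, fun {n t G} hn hG ht hcount => ?_⟩
  by_contra hpath
  obtain ⟨Z, hZ, hZcard⟩ := hparts (by simpa using hn) hG
    (fun _ _ h => h.card_lt_of_not_hasIndMonPath hpath) (by simpa using ht) (by simpa using hcount)
  obtain ⟨g, hg, hadm⟩ := hRamsey (partColor G α (α ^ (2 * k) / (2 * k + 1)) Z)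
  exact hpath <| (hZ.comp hg).hasIndMonPath hadm hG (fun i => hZcard (g i)) hk hα hα7
    (mul_div_cancel₀ _ (by positivity)).le

theorem stmt_4 (k N : ℕ) (hk : 1 ≤ k) (hN : 0 < N)
    (hRamsey : ∀ χ : Fin N → Fin N → Bool,
      ∃ g : Fin k → Fin N, StrictMono g ∧ Admissible (fun i j => χ (g i) (g j))) :
    ∀ η : ℝ, 0 < η → ∃ c : ℝ, 0 < c ∧ ∃ n₀ : ℕ, ∀ n : ℕ, n₀ ≤ n →
      ∀ G : SimpleGraph (Fin n),
        ¬ HasIndMonPath G (2 * k) →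
        η * (n : ℝ) ^ N ≤ (cliqueCount Gᶜ N : ℝ) →
        ContainsBlowup Gᶜ 2 ⌈c * (n : ℝ) / Real.log n⌉₊ := by
  intro η hη
  obtain ⟨c, hc, n₁, hmain⟩ := exists_hasIndMonPath hk hN hRamsey hη
  obtain ⟨n₂, hsize⟩ := Filter.eventually_atTop.1
    (eventually_ceil_mul_clog_le (show 0 < min (c / 20) 1 by positivity) (min_le_right _ _))
  refine ⟨min (c / 20) 1, by positivity, max n₁ n₂, fun n hn G hpath hcount => ?_⟩
  by_contra hblowup
  refine hpath (hmain (le_of_max_le_left hn) (.of_not_containsBlowup hblowup)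
    ((hsize n (le_of_max_le_right hn)).trans ?_) hcount)
  gcongr
  linarith [min_le_left (c / 20) 1]
end

section
/- Let 𝒢 be a class of finite simple graphs that is closed under isomorphism and under taking induced subgraphs. Suppose there exists a function f : (0,∞) → (0,∞) such that for every ε > 0 and every graph G ∈ 𝒢 on n vertices with at least ε·C(n,2) edges, G contains K_2[⌊f(ε)·n⌋]. Then for every integer k ≥ 2 there exists a function h : (0,∞) → (0,∞) such that for every ε > 0 and every graph G ∈ 𝒢 on n vertices containing at least ε·n^k copies of K_k, G contains K_k[⌊h(ε)·n⌋]. -/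
/-!
By Szemerédi regularity, `ε * n ^ k` copies of `K_k` yield a copy of `K_k` in the reduced graph:
`k` linear-sized vertex sets, pairwise regular and dense. Large subsets of two such sets span a
dense bipartite graph, so their union contains a linear biclique. This biclique either crosses
between the two sets or lies within one of them, and, recursing as in Ramsey's theorem, one finds
a linear crossing biclique or a linear `K_k`-blowup inside a single set. In the second case we are
done; otherwise shrink the two sets to the crossing biclique and turn to the next pair. Once all
pairs have been treated, the `k` sets are themselves a blowup of `K_k`.

The threshold below which density is lost depends on how often the sets are shrunk, and hence on
`ε` and `k` alone; it is fixed before the regularity parameter is chosen.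
-/

section LinearBlowups

open Finset
open scoped Classical

variable {V : Type*} {G : SimpleGraph V}

/-- `G` contains a biclique with one side in `X`, the other in `Y`, and both sides of size at
least `s`. -/
def HasBiclique (G : SimpleGraph V) (X Y : Finset V) (s : ℝ) : Prop :=
  ∃ A ⊆ X, ∃ B ⊆ Y, s ≤ #A ∧ s ≤ #B ∧ G.IsCompleteBetween A B

/-- `G` contains, inside `X`, a complete `k`-partite graph with parts of size at least `s`. The
real size `s` postpones rounding to `HasBlowupIn.containsBlowup`. -/
def HasBlowupIn (G : SimpleGraph V) (X : Finset V) (k : ℕ) (s : ℝ) : Prop :=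
  ∃ U : Fin k → Finset V, (∀ i, U i ⊆ X) ∧ (∀ i, s ≤ #(U i)) ∧
    Pairwise fun i j => G.IsCompleteBetween (U i) (U j)

/-- Any two subsets of `X` and `Y` of size at least `s` span density at least `δ`. Unlike
regularity, this property passes to subsets of `X` and `Y` with the same `δ` and `s`. -/
def HereditarilyDense (G : SimpleGraph V) (δ s : ℝ) (X Y : Finset V) : Prop :=
  ∀ X' ⊆ X, ∀ Y' ⊆ Y, s ≤ #X' → s ≤ #Y' → δ ≤ G.edgeDensity X' Y'

/-- Every vertex set `X` of density at least `ε` contains a biclique with parts of size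
`g ε * #X`. Here `edgeDensity X X` normalises the number of ordered adjacent pairs by `#X ^ 2`. -/
def HasLinearBicliques (G : SimpleGraph V) (g : ℝ → ℝ) : Prop :=
  ∀ ε : ℝ, 0 < ε → ∀ X : Finset V, ε ≤ G.edgeDensity X X → HasBiclique G X X (g ε * #X)

lemma HasBiclique.symm {X Y : Finset V} {s : ℝ} (h : HasBiclique G X Y s) :
    HasBiclique G Y X s := by
  obtain ⟨A, hA, B, hB, hsA, hsB, hAB⟩ := h
  exact ⟨B, hB, A, hA, hsB, hsA, hAB.symm⟩

lemma HasBiclique.mono {X X' Y Y' : Finset V} {s s' : ℝ} (hX : X ⊆ X') (hY : Y ⊆ Y')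
    (hs : s' ≤ s) (h : HasBiclique G X Y s) : HasBiclique G X' Y' s' := by
  obtain ⟨A, hA, B, hB, hsA, hsB, hAB⟩ := h
  exact ⟨A, hA.trans hX, B, hB.trans hY, hs.trans hsA, hs.trans hsB, hAB⟩

lemma HasBiclique.of_union_left {X Y Z : Finset V} {s : ℝ} (hs : 0 ≤ s)
    (h : HasBiclique G (X ∪ Y) Z (2 * s)) : HasBiclique G X Z s ∨ HasBiclique G Y Z s := by
  obtain ⟨A, hA, B, hB, hsA, hsB, hAB⟩ := h
  have hcard : (#A : ℝ) ≤ #(A ∩ X) + #(A ∩ Y) := by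
    have hunion := card_union_le (A ∩ X) (A ∩ Y)
    rw [← inter_union_distrib_left, inter_eq_left.2 hA] at hunion
    exact mod_cast hunion
  have hB_le : s ≤ #B := (le_mul_of_one_le_left hs one_le_two).trans hsB
  rcases le_total s #(A ∩ X) with hX | hX
  · exact .inl ⟨A ∩ X, inter_subset_right, B, hB, hX, hB_le,
      fun _ ha => hAB (mem_of_mem_inter_left ha)⟩
  · exact .inr ⟨A ∩ Y, inter_subset_right, B, hB, by linarith, hB_le,
      fun _ ha => hAB (mem_of_mem_inter_left ha)⟩

lemma HasBiclique.of_union {X Y : Finset V} {s : ℝ} (hs : 0 ≤ s)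
    (h : HasBiclique G (X ∪ Y) (X ∪ Y) (4 * s)) :
    HasBiclique G X Y s ∨ HasBiclique G X X s ∨ HasBiclique G Y Y s := by
  have h' : HasBiclique G (X ∪ Y) (X ∪ Y) (2 * (2 * s)) := by convert h using 1; ring
  rcases h'.of_union_left (by positivity) with hX | hY
  · rcases hX.symm.of_union_left hs with hXX | hYX
    exacts [.inr (.inl hXX), .inl hYX.symm]
  · rcases hY.symm.of_union_left hs with hXY | hYY
    exacts [.inl hXY, .inr (.inr hYY)]

lemma HereditarilyDense.mono {δ s s' : ℝ} {X X' Y Y' : Finset V} (hX : X' ⊆ X) (hY : Y' ⊆ Y)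
    (hs : s ≤ s') (h : HereditarilyDense G δ s X Y) : HereditarilyDense G δ s' X' Y' :=
  fun A hA B hB hsA hsB => h A (hA.trans hX) B (hB.trans hY) (hs.trans hsA) (hs.trans hsB)

lemma HasBlowupIn.mono {X X' : Finset V} {k : ℕ} {s s' : ℝ} (hX : X ⊆ X') (hs : s' ≤ s)
    (h : HasBlowupIn G X k s) : HasBlowupIn G X' k s' := by
  obtain ⟨U, hUX, hsU, hU⟩ := h
  exact ⟨U, fun i => (hUX i).trans hX, fun i => hs.trans (hsU i), hU⟩

lemma hasBlowupIn_zero (G : SimpleGraph V) (X : Finset V) (s : ℝ) : HasBlowupIn G X 0 s :=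
  ⟨fun _ => ∅, fun i => i.elim0, fun i => i.elim0, fun i => i.elim0⟩

lemma HasBlowupIn.cons {X A B : Finset V} {k : ℕ} {s : ℝ} (hA : A ⊆ X) (hB : B ⊆ X)
    (hsB : s ≤ #B) (hAB : G.IsCompleteBetween A B) (h : HasBlowupIn G A k s) :
    HasBlowupIn G X (k + 1) s := by
  obtain ⟨U, hUA, hsU, hU⟩ := h
  refine ⟨Fin.cons B U, Fin.cases hB fun i => (hUA i).trans hA, Fin.cases hsB hsU, ?_⟩
  have hBU (i : Fin k) : G.IsCompleteBetween B (U i) := fun b hb a ha => (hAB (hUA i ha) hb).symm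
  refine Fin.cases (Fin.cases (fun h => absurd rfl h) fun j _ => hBU j) fun i =>
    Fin.cases (fun _ => (hBU i).symm) fun j hij => ?_
  exact hU fun h => hij (congrArg Fin.succ h)

lemma edgeDensity_le_four_mul_edgeDensity_union (G : SimpleGraph V) {X Y : Finset V}
    (hXY : #X = #Y) : G.edgeDensity X Y ≤ 4 * G.edgeDensity (X ∪ Y) (X ∪ Y) := by
  rcases X.eq_empty_or_nonempty with rfl | hX
  · simpa using G.edgeDensity_nonneg _ _
  have hedges : (#(G.interedges X Y) : ℚ) ≤ #(G.interedges (X ∪ Y) (X ∪ Y)) :=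
    mod_cast card_le_card (G.interedges_mono subset_union_left subset_union_right)
  have hX0 : (0 : ℚ) < #X := mod_cast hX.card_pos
  have hU0 : (0 : ℚ) < #(X ∪ Y) := mod_cast hX.inl.card_pos
  have hU : (#(X ∪ Y) : ℚ) ≤ 2 * #X := mod_cast (card_union_le X Y).trans (by lia)
  rw [G.edgeDensity_def, G.edgeDensity_def, ← hXY, ← mul_div_assoc,
    div_le_div_iff₀ (by positivity) (by positivity)]
  calc (#(G.interedges X Y) : ℚ) * (#(X ∪ Y) * #(X ∪ Y))
      ≤ #(G.interedges (X ∪ Y) (X ∪ Y)) * (2 * #X * (2 * #X)) := by gcongr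
    _ = _ := by ring

lemma HasLinearBicliques.hasBiclique_of_hereditarilyDense {g : ℝ → ℝ}
    (hG : HasLinearBicliques G g) {δ κ t : ℝ} (hδ : 0 < δ) (hκ : 0 ≤ κ) (hκg : κ ≤ g (δ / 4) / 4)
    (ht : 0 ≤ t) {X Y : Finset V} (hX : t ≤ #X) (hY : t ≤ #Y) (hXY : HereditarilyDense G δ t X Y) :
    HasBiclique G X Y (κ * t) ∨ HasBiclique G X X (κ * t) ∨ HasBiclique G Y Y (κ * t) := by
  obtain ⟨X', hX', hcX⟩ := exists_subset_card_eq (Nat.ceil_le.2 hX)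
  obtain ⟨Y', hY', hcY⟩ := exists_subset_card_eq (Nat.ceil_le.2 hY)
  have htX' : t ≤ #X' := hcX ▸ Nat.le_ceil t
  have htY' : t ≤ #Y' := hcY ▸ Nat.le_ceil t
  have hdense : δ / 4 ≤ G.edgeDensity (X' ∪ Y') (X' ∪ Y') := by
    have hunion : (G.edgeDensity X' Y' : ℝ) ≤ 4 * G.edgeDensity (X' ∪ Y') (X' ∪ Y') :=
      mod_cast edgeDensity_le_four_mul_edgeDensity_union G (hcX.trans hcY.symm)
    linarith [hXY X' hX' Y' hY' htX' htY']
  have hcard : t ≤ #(X' ∪ Y') := htX'.trans (mod_cast card_le_card subset_union_left)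
  have hsize : 4 * (κ * t) ≤ g (δ / 4) * #(X' ∪ Y') :=
    calc 4 * (κ * t) = 4 * κ * t := by ring
      _ ≤ g (δ / 4) * #(X' ∪ Y') := mul_le_mul (by linarith) hcard ht (by linarith)
  refine (((hG _ (by positivity) _ hdense).mono subset_rfl subset_rfl hsize).of_union
    (by positivity)).imp (.mono hX' hY' le_rfl) (.imp (.mono hX' hX' le_rfl) (.mono hY' hY' le_rfl))

/-- This is the Ramsey recursion: a biclique that does not cross lies within one side, where one
of its parts becomes a part of the blowup on that side and the search continues in the other. -/
lemma HasLinearBicliques.hasBiclique_or_hasBlowupIn {g : ℝ → ℝ} (hG : HasLinearBicliques G g)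
    {δ κ s : ℝ} (hδ : 0 < δ) (hκ : 0 < κ) (hκ1 : κ ≤ 1) (hκg : κ ≤ g (δ / 4) / 4) :
    ∀ (a b : ℕ) {t : ℝ} {X Y : Finset V}, 0 ≤ t → s ≤ κ ^ (a + b) * t → t ≤ #X → t ≤ #Y →
      HereditarilyDense G δ s X Y →
      HasBiclique G X Y s ∨ HasBlowupIn G X a s ∨ HasBlowupIn G Y b s
  | 0, _, _, _, _, _, _, _, _, _ => .inr (.inl (hasBlowupIn_zero ..))
  | _ + 1, 0, _, _, _, _, _, _, _, _ => .inr (.inr (hasBlowupIn_zero ..))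
  | a + 1, b + 1, t, X, Y, ht, hs, hX, hY, hXY => by
    have hst : s ≤ κ * t := hs.trans <| by
      gcongr
      exact pow_le_of_le_one hκ.le hκ1 (by lia)
    have hκt : κ * t ≤ t := mul_le_of_le_one_left ht hκ1
    have hκt0 : 0 ≤ κ * t := by positivity
    rcases hG.hasBiclique_of_hereditarilyDense hδ hκ.le hκg ht hX hY
      (hXY.mono subset_rfl subset_rfl (hst.trans hκt)) with hcross | hin | hin
    · exact .inl (hcross.mono subset_rfl subset_rfl hst)
    · obtain ⟨A, hA, B, hB, hcA, hcB, hAB⟩ := hin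
      exact (hG.hasBiclique_or_hasBlowupIn hδ hκ hκ1 hκg a (b + 1) hκt0
        (hs.trans_eq (by ring)) hcA (hκt.trans hY) (hXY.mono hA subset_rfl le_rfl)).imp
        (.mono hA subset_rfl le_rfl) (.imp_left (.cons hA hB (hst.trans hcB) hAB))
    · obtain ⟨A, hA, B, hB, hcA, hcB, hAB⟩ := hin
      exact (hG.hasBiclique_or_hasBlowupIn hδ hκ hκ1 hκg (a + 1) b hκt0
        (hs.trans_eq (by ring)) (hκt.trans hX) hcA (hXY.mono subset_rfl hA le_rfl)).imp
        (.mono subset_rfl hA le_rfl) (.imp_right (.cons hA hB (hst.trans hcB) hAB))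

lemma HasLinearBicliques.exists_complete_pairs_or_hasBlowupIn {ι : Type*} {g : ℝ → ℝ}
    (hG : HasLinearBicliques G g) {δ κ s : ℝ} (hδ : 0 < δ) (hκ : 0 < κ) (hκ1 : κ ≤ 1)
    (hκg : κ ≤ g (δ / 4) / 4) (k : ℕ) (P : Finset (ι × ι)) (hP : ∀ p ∈ P, p.1 ≠ p.2)
    {t : ℝ} (ht : 0 ≤ t) (hs : s ≤ (κ ^ (k + k)) ^ #P * t) {W : ι → Finset V}
    (hW : ∀ i, t ≤ #(W i)) (hdense : Pairwise fun i j => HereditarilyDense G δ s (W i) (W j)) :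
    (∃ Z : ι → Finset V, (∀ i, Z i ⊆ W i) ∧ (∀ i, s ≤ #(Z i)) ∧
      ∀ p ∈ P, G.IsCompleteBetween (Z p.1) (Z p.2)) ∨ ∃ i, HasBlowupIn G (W i) k s := by
  induction P using Finset.induction_on generalizing t W with
  | empty =>
    have hst : s ≤ t := by simpa using hs
    exact .inl ⟨W, fun _ => subset_rfl, fun i => hst.trans (hW i), by simp⟩
  | insert p P hpP ih =>
    obtain ⟨hp, hP⟩ := forall_mem_insert _ _ _ |>.1 hP
    rw [card_insert_of_notMem hpP] at hs
    set t' := κ ^ (k + k) * t with ht'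
    have hs' : s ≤ (κ ^ (k + k)) ^ #P * t' := hs.trans_eq (by rw [ht']; ring)
    have hpow : κ ^ (k + k) ≤ 1 := pow_le_one₀ hκ.le hκ1
    have hst' : s ≤ t' := hs'.trans <|
      mul_le_of_le_one_left (by positivity) (pow_le_one₀ (by positivity) hpow)
    have ht't : t' ≤ t := mul_le_of_le_one_left ht hpow
    rcases hG.hasBiclique_or_hasBlowupIn hδ hκ hκ1 hκg k k ht ht'.le (hW p.1) (hW p.2)
      ((hdense hp).mono subset_rfl subset_rfl hst') with ⟨A, hA, B, hB, hcA, hcB, hAB⟩ | hX | hY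
    · set Q := Function.update (Function.update W p.1 A) p.2 B with hQ
      have hQ₁ : Q p.1 = A := by simp [hQ, hp]
      have hQ₂ : Q p.2 = B := by simp [hQ]
      have hQW (i : ι) : Q i ⊆ W i ∧ t' ≤ #(Q i) := by
        rcases eq_or_ne i p.2 with rfl | hi₂
        · exact ⟨hQ₂ ▸ hB, hQ₂ ▸ hcB⟩
        rcases eq_or_ne i p.1 with rfl | hi₁
        · exact ⟨hQ₁ ▸ hA, hQ₁ ▸ hcA⟩
        simpa [hQ, hi₁, hi₂] using ht't.trans (hW i)
      refine (ih hP (by positivity) hs' (fun i => (hQW i).2) fun i j hij =>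
        (hdense hij).mono (hQW i).1 (hQW j).1 le_rfl).imp ?_ ?_
      · rintro ⟨Z, hZQ, hcZ, hZP⟩
        refine ⟨Z, fun i => (hZQ i).trans (hQW i).1, hcZ, forall_mem_insert _ _ _ |>.2 ⟨?_, hZP⟩⟩
        exact fun x hx y hy => hAB (hQ₁ ▸ hZQ _ hx) (hQ₂ ▸ hZQ _ hy)
      · exact fun ⟨i, hi⟩ => ⟨i, hi.mono (hQW i).1 le_rfl⟩
    · exact .inr ⟨p.1, hX.mono subset_rfl hst'⟩
    · exact .inr ⟨p.2, hY.mono subset_rfl hst'⟩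

lemma HasLinearBicliques.hasBlowupIn_of_pairwise_hereditarilyDense [Fintype V] {g : ℝ → ℝ}
    (hG : HasLinearBicliques G g) {δ κ t : ℝ} (hδ : 0 < δ) (hκ : 0 < κ) (hκ1 : κ ≤ 1)
    (hκg : κ ≤ g (δ / 4) / 4) {k : ℕ} (ht : 0 ≤ t) {W : Fin k → Finset V} (hW : ∀ i, t ≤ #(W i))
    (hdense : Pairwise fun i j =>
      HereditarilyDense G δ ((κ ^ (k + k)) ^ (k * k - k) * t) (W i) (W j)) :
    HasBlowupIn G univ k ((κ ^ (k + k)) ^ (k * k - k) * t) := by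
  have hcard : #(univ : Finset (Fin k)).offDiag = k * k - k := by simp [offDiag_card]
  rcases hG.exists_complete_pairs_or_hasBlowupIn hδ hκ hκ1 hκg k univ.offDiag (by simp) ht
    (by rw [hcard]) hW hdense with ⟨Z, -, hcZ, hZ⟩ | ⟨i, hi⟩
  · exact ⟨Z, fun i => subset_univ _, hcZ, fun i j hij => hZ (i, j) (by simpa using hij)⟩
  · exact hi.mono (subset_univ _) le_rfl

lemma hereditarilyDense_of_isUniform {η δ s : ℝ} {X Y : Finset V}
    (hXY : G.IsUniform η X Y) (hδ : δ + η ≤ G.edgeDensity X Y) (hX : #X * η ≤ s)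
    (hY : #Y * η ≤ s) : HereditarilyDense G δ s X Y := by
  intro X' hX' Y' hY' hsX hsY
  linarith [(abs_lt.1 (hXY hX' hY' (hX.trans hsX) (hY.trans hsY))).1]

section Regularity

variable [Fintype V] {P : Finpartition (univ : Finset V)} {η δ τ : ℝ}

lemma cliqueCount_eq_card_cliqueFinset (G : SimpleGraph V) (k : ℕ) :
    cliqueCount G k = #(G.cliqueFinset k) := by
  rw [cliqueCount, ← Set.ncard_coe_finset]
  congr with s
  simp [SimpleGraph.isNClique_iff, and_comm]

lemma two_mul_ncard_edgeSet (G : SimpleGraph V) [DecidableRel G.Adj] :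
    2 * G.edgeSet.ncard = #{p : V × V | G.Adj p.1 p.2} := by
  rw [Set.ncard_eq_toFinset_card']
  exact G.two_mul_card_edgeFinset

lemma card_filter_superset_le (e : Finset V) (k : ℕ) :
    #({s ∈ univ.powersetCard k | e ⊆ s}) ≤ Fintype.card V ^ (k - #e) := by
  rcases le_or_gt #e k with he | he
  · rw [card_filter_powersetCard_subset e univ k (subset_univ e) he, card_univ]
    exact (Nat.choose_le_pow ..).trans (Nat.pow_le_pow_left (Nat.sub_le ..) _)
  · have hempty : ({s ∈ univ.powersetCard k | e ⊆ s} : Finset (Finset V)) = ∅ :=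
      filter_eq_empty_iff.2 fun s hs hes =>
        (card_le_card hes).not_gt ((mem_powersetCard.1 hs).2 ▸ he)
    simp [hempty]

lemma card_cliqueFinset_le_ncard_edgeSet_sdiff_mul {H : SimpleGraph V} {k : ℕ}
    (hH : H.CliqueFree k) :
    #(G.cliqueFinset k) ≤ (G \ H).edgeSet.ncard * Fintype.card V ^ (k - 2) := by
  rw [Set.ncard_eq_toFinset_card', ← SimpleGraph.edgeFinset]
  have hcover : G.cliqueFinset k ⊆ (G \ H).edgeFinset.biUnion
      fun e => {s ∈ univ.powersetCard k | e.toFinset ⊆ s} := by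
    intro s hs
    obtain ⟨hclique, hcard⟩ := SimpleGraph.mem_cliqueFinset_iff.1 hs
    obtain ⟨u, hu, v, hv, huv, hHuv⟩ : ∃ u ∈ s, ∃ v ∈ s, u ≠ v ∧ ¬ H.Adj u v := by
      by_contra! hadj
      exact hH s ⟨fun u hu v hv => hadj u hu v hv, hcard⟩
    refine mem_biUnion.2 ⟨s(u, v), ?_, ?_⟩
    · simpa using ⟨hclique hu hv huv, hHuv⟩
    · rw [mem_filter, mem_powersetCard]
      exact ⟨⟨subset_univ s, hcard⟩, fun w hw => by
        rcases Sym2.mem_iff.1 (Sym2.mem_toFinset.1 hw) with rfl | rfl <;> assumption⟩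
  refine (card_le_card hcover).trans (card_biUnion_le_card_mul _ _ _ fun e he => ?_)
  have he2 : #e.toFinset = 2 :=
    Sym2.card_toFinset_of_not_isDiag e (SimpleGraph.not_isDiag_of_mem_edgeFinset he)
  simpa only [he2] using card_filter_superset_le e.toFinset k

lemma mem_union_of_adj_sdiff_regularityReduced {a b : V}
    (hab : (G \ G.regularityReduced P η δ).Adj a b) :
    (a, b) ∈ ((P.nonUniforms G η).biUnion fun U => U.1 ×ˢ U.2) ∪ P.parts.biUnion offDiag ∪
      (P.sparsePairs G δ).biUnion fun U => G.interedges U.1 U.2 := by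
  obtain ⟨hadj, hred⟩ := hab
  obtain ⟨A, hA, haA⟩ := P.exists_mem (mem_univ a)
  obtain ⟨B, hB, hbB⟩ := P.exists_mem (mem_univ b)
  simp only [mem_union, mem_biUnion, Prod.exists, Finpartition.mk_mem_nonUniforms,
    Finpartition.mk_mem_sparsePairs, SimpleGraph.mk_mem_interedges_iff, mem_offDiag, mem_product]
  rcases eq_or_ne A B with rfl | hAB
  · exact .inl (.inr ⟨A, hA, haA, hbB, hadj.ne⟩)
  by_cases hunif : G.IsUniform η A B
  · refine .inr ⟨A, B, ⟨hA, hB, hAB, ?_⟩, haA, hbB, hadj⟩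
    by_contra! hδ
    exact hred ⟨hadj, A, hA, B, hB, haA, hbB, hAB, hunif, hδ⟩
  · exact .inl (.inl ⟨A, B, ⟨hA, hB, hAB, hunif⟩, haA, hbB⟩)

lemma two_mul_ncard_edgeSet_sdiff_regularityReduced_lt [Nonempty V] (hP : P.IsEquipartition)
    (hη : 0 < η) (hPη : P.IsUniform G η) (hδ : 0 ≤ δ) (hτ : 0 < τ) (hPτ : 4 / τ ≤ #P.parts) :
    2 * ((G \ G.regularityReduced P η δ).edgeSet.ncard : ℝ) <
      (4 * η + τ / 2 + 4 * δ) * Fintype.card V ^ 2 := by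
  set A := (P.nonUniforms G η).biUnion fun U => U.1 ×ˢ U.2
  set B := P.parts.biUnion offDiag
  set C := (P.sparsePairs G δ).biUnion fun U => G.interedges U.1 U.2
  have hedges : 2 * (G \ G.regularityReduced P η δ).edgeSet.ncard ≤ #(A ∪ B ∪ C) := by
    rw [two_mul_ncard_edgeSet]
    exact card_le_card fun p hp => mem_union_of_adj_sdiff_regularityReduced (by simpa using hp)
  have hA : (#A : ℝ) < 4 * η * Fintype.card V ^ 2 :=
    hP.sum_nonUniforms_lt univ_nonempty hη hPη
  have hB : (#B : ℝ) ≤ τ / 2 * Fintype.card V ^ 2 := hP.card_biUnion_offDiag_le hτ hPτ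
  have hC : (#C : ℝ) ≤ 4 * δ * Fintype.card V ^ 2 := hP.card_interedges_sparsePairs_le hδ
  calc 2 * ((G \ G.regularityReduced P η δ).edgeSet.ncard : ℝ)
      ≤ #A + #B + #C := mod_cast hedges.trans <|
        (card_union_le _ _).trans (Nat.add_le_add_right (card_union_le _ _) _)
    _ < (4 * η + τ / 2 + 4 * δ) * Fintype.card V ^ 2 := by linarith

lemma exists_parts_hereditarilyDense_of_not_cliqueFree {k : ℕ} {s : ℝ}
    (hk : ¬ (G.regularityReduced P η (δ + η)).CliqueFree k) (hs : ∀ U ∈ P.parts, #U * η ≤ s) :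
    ∃ W : Fin k → Finset V, (∀ i, W i ∈ P.parts) ∧
      Pairwise fun i j => HereditarilyDense G δ s (W i) (W j) := by
  obtain ⟨φ⟩ := SimpleGraph.not_cliqueFree_iff_top_isContained k |>.1 hk
  refine ⟨fun i => P.part (φ i), fun i => P.part_mem.2 (mem_univ _), fun i j hij => ?_⟩
  obtain ⟨-, A, hA, B, hB, hiA, hjB, -, hunif, hdens⟩ := φ.toHom.map_adj hij
  have hAi : P.part (φ i) = A := P.part_eq_of_mem hA hiA
  have hBj : P.part (φ j) = B := P.part_eq_of_mem hB hjB
  simp only [hAi, hBj]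
  exact hereditarilyDense_of_isUniform hunif hdens (hs A hA) (hs B hB)

lemma not_cliqueFree_regularityReduced [Nonempty V] {k : ℕ} {ε : ℝ} (hk : 2 ≤ k)
    (hP : P.IsEquipartition) (hη : 0 < η) (hPη : P.IsUniform G η) (hδ : 0 ≤ δ) (hτ : 0 < τ)
    (hPτ : 4 / τ ≤ #P.parts) (hε : 4 * η + τ / 2 + 4 * δ ≤ 2 * ε)
    (hcount : ε * Fintype.card V ^ k ≤ #(G.cliqueFinset k)) :
    ¬ (G.regularityReduced P η δ).CliqueFree k := by
  intro hfree
  have hn : (0 : ℝ) < Fintype.card V := mod_cast Fintype.card_pos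
  have hremoved : ((G \ G.regularityReduced P η δ).edgeSet.ncard : ℝ) < ε * Fintype.card V ^ 2 := by
    have := two_mul_ncard_edgeSet_sdiff_regularityReduced_lt hP hη hPη hδ hτ hPτ
    have := mul_le_mul_of_nonneg_right hε (sq_nonneg (Fintype.card V : ℝ))
    linarith
  refine lt_irrefl (ε * (Fintype.card V : ℝ) ^ k) ?_
  calc ε * (Fintype.card V : ℝ) ^ k
      ≤ (G \ G.regularityReduced P η δ).edgeSet.ncard * Fintype.card V ^ (k - 2) :=
        hcount.trans (mod_cast card_cliqueFinset_le_ncard_edgeSet_sdiff_mul hfree)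
    _ < ε * Fintype.card V ^ 2 * Fintype.card V ^ (k - 2) :=
        mul_lt_mul_of_pos_right hremoved (pow_pos hn _)
    _ = ε * Fintype.card V ^ k := by rw [mul_assoc, ← pow_add, Nat.add_sub_cancel' hk]

end Regularity

lemma le_two_mul_mul_div {m n : ℕ} (hm : 0 < m) (hmn : m ≤ n) : n ≤ 2 * m * (n / m) :=
  calc n ≤ m * (n / m + 1) := (Nat.lt_mul_div_succ n hm).le
    _ ≤ m * (2 * (n / m)) := by
        have : 1 ≤ n / m := (Nat.one_le_div_iff hm).2 hmn
        gcongr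
        lia
    _ = 2 * m * (n / m) := by ring

theorem exists_pairwise_hereditarilyDense {k : ℕ} (hk : 2 ≤ k) {ε μ : ℝ} (hε : 0 < ε)
    (hμ : 0 < μ) :
    ∃ c : ℝ, 0 < c ∧ ∃ N : ℕ, ∀ {V : Type*} [Fintype V] (G : SimpleGraph V), N ≤ Fintype.card V →
      ε * Fintype.card V ^ k ≤ cliqueCount G k →
      ∃ t ≥ c * Fintype.card V, ∃ W : Fin k → Finset V, (∀ i, t ≤ #(W i)) ∧
        Pairwise fun i j => HereditarilyDense G (ε / 16) (μ * t) (W i) (W j) := by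
  set η := min (ε / 16) (μ / 2)
  have hη : 0 < η := by positivity
  have hηε : η ≤ ε / 16 := min_le_left _ _
  have hημ : η ≤ μ / 2 := min_le_right _ _
  set M := SzemerediRegularity.bound η ⌈4 / ε⌉₊
  have hM : 0 < 2 * (M : ℝ) := mul_pos two_pos (mod_cast SzemerediRegularity.bound_pos ..)
  refine ⟨(2 * M : ℝ)⁻¹, inv_pos.2 hM, ⌈4 / ε⌉₊, fun {V} _ G hN hcount => ?_⟩
  have hl : 0 < ⌈4 / ε⌉₊ := Nat.ceil_pos.2 (by positivity)
  have : Nonempty V := Fintype.card_pos_iff.1 (hl.trans_le hN)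
  obtain ⟨P, hP, hlP, hPM, hPη⟩ := szemeredi_regularity G hη hN
  rw [cliqueCount_eq_card_cliqueFinset] at hcount
  have hclique := not_cliqueFree_regularityReduced (δ := ε / 16 + η) hk hP hη hPη (by positivity) hε
    ((Nat.le_ceil _).trans (mod_cast hlP)) (by linarith) hcount
  set t := Fintype.card V / #P.parts
  have hparts : #P.parts ≤ Fintype.card V := P.card_parts_le_card
  have ht : 1 ≤ t := (Nat.one_le_div_iff (hl.trans_le hlP)).2 hparts
  obtain ⟨W, hWP, hW⟩ := exists_parts_hereditarilyDense_of_not_cliqueFree (s := μ * t) hclique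
    fun U hU => by
      have hUt : #U ≤ 2 * t := (hP.card_part_le_average_add_one hU).trans (by rw [card_univ]; lia)
      calc (#U : ℝ) * η ≤ (2 * t) * (μ / 2) := by gcongr; exact mod_cast hUt
        _ = μ * t := by ring
  refine ⟨t, ?_, W, fun i => mod_cast hP.average_le_card_part (hWP i), hW⟩
  have hcard : Fintype.card V ≤ 2 * M * t :=
    (le_two_mul_mul_div (hl.trans_le hlP) hparts).trans (by gcongr)
  exact (inv_mul_le_iff₀ hM).2 (mod_cast hcard)

lemma ContainsBlowup.hasBiclique_map {W : Type*} [Fintype W] {t : ℕ} (e : W ↪ V)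
    (h : ContainsBlowup (G.comap e) 2 t) : HasBiclique G (univ.map e) (univ.map e) t := by
  obtain ⟨A, hA, -, hadj⟩ := h
  refine ⟨(A 0).map e, map_subset_map.2 (subset_univ _), (A 1).map e,
    map_subset_map.2 (subset_univ _), by simp [hA], by simp [hA], ?_⟩
  simpa [SimpleGraph.IsCompleteBetween] using hadj 0 1 (by decide)

lemma card_interedges_map_univ {W : Type*} [Fintype W] (e : W ↪ V) :
    #(G.interedges (univ.map e) (univ.map e)) = 2 * (G.comap e).edgeSet.ncard := by
  have hmap : G.interedges (univ.map e) (univ.map e) =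
      ({p | (G.comap e).Adj p.1 p.2} : Finset (W × W)).map (e.prodMap e) := by
    ext ⟨a, b⟩
    simp only [SimpleGraph.mk_mem_interedges_iff, mem_map, mem_univ, true_and, mem_filter,
      SimpleGraph.comap_adj, Prod.exists, Function.Embedding.coe_prodMap, Prod.map, Prod.mk.injEq]
    grind
  rw [hmap, card_map, two_mul_ncard_edgeSet]

lemma HasBiclique.one_of_edgeDensity_pos {X Y : Finset V} (h : 0 < G.edgeDensity X Y) :
    HasBiclique G X Y 1 := by
  obtain ⟨⟨a, b⟩, hab⟩ : (G.interedges X Y).Nonempty := by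
    contrapose! h
    simp [SimpleGraph.edgeDensity_def, h]
  obtain ⟨ha, hb, hadj⟩ := G.mem_interedges_iff.1 hab
  exact ⟨{a}, singleton_subset_iff.2 ha, {b}, singleton_subset_iff.2 hb, by simp, by simp,
    by simpa [SimpleGraph.IsCompleteBetween] using hadj⟩

lemma hasLinearBicliques_of_hereditary {𝒢 : (n : ℕ) → SimpleGraph (Fin n) → Prop}
    (hclosed : ∀ (n m : ℕ) (G : SimpleGraph (Fin n)) (H : SimpleGraph (Fin m))
      (f : Fin m ↪ Fin n), 𝒢 n G → (∀ i j, H.Adj i j ↔ G.Adj (f i) (f j)) → 𝒢 m H)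
    {f : ℝ → ℝ} (hB2 : ∀ ε : ℝ, 0 < ε → ∀ (n : ℕ) (G : SimpleGraph (Fin n)), 𝒢 n G →
      ε * (n.choose 2 : ℝ) ≤ (G.edgeSet.ncard : ℝ) → ContainsBlowup G 2 ⌊f ε * (n : ℝ)⌋₊)
    {n : ℕ} {G : SimpleGraph (Fin n)} (hG : 𝒢 n G) : HasLinearBicliques G fun ε => f ε / 2 := by
  intro ε hε X hX
  rcases lt_or_ge (f ε * #X) 1 with hsmall | hlarge
  · have hpos : 0 < G.edgeDensity X X := by exact_mod_cast hε.trans_le hX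
    exact (HasBiclique.one_of_edgeDensity_pos hpos).mono subset_rfl subset_rfl (by linarith)
  set e := (X.orderEmbOfFin rfl).toEmbedding
  have he : univ.map e = X := X.map_orderEmbOfFin_univ rfl
  have hedges : ε * (#X * #X) ≤ 2 * (G.comap e).edgeSet.ncard := by
    rw [SimpleGraph.edgeDensity_def] at hX
    push_cast at hX
    have := mul_le_of_le_div₀ (Nat.cast_nonneg _) (by positivity) hX
    rw [← he, card_interedges_map_univ, he] at this
    exact mod_cast this
  have hchoose : ε * ((#X).choose 2 : ℝ) ≤ (G.comap e).edgeSet.ncard := by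
    rw [Nat.cast_choose_two]
    linarith [mul_nonneg hε.le (Nat.cast_nonneg (α := ℝ) #X)]
  have hblowup := hB2 ε hε #X (G.comap e) (hclosed n #X G _ e hG fun _ _ => Iff.rfl) hchoose
  have hfloor : f ε / 2 * #X ≤ (⌊f ε * #X⌋₊ : ℕ) := by
    have hlt := Nat.lt_floor_add_one (f ε * #X)
    have hone : (1 : ℝ) ≤ (⌊f ε * #X⌋₊ : ℕ) := mod_cast Nat.one_le_floor_iff _ |>.2 hlarge
    linarith
  simpa only [he] using (hblowup.hasBiclique_map e).mono subset_rfl subset_rfl hfloor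

lemma HasBlowupIn.containsBlowup {X : Finset V} {k : ℕ} {s : ℝ} (h : HasBlowupIn G X k s) :
    ContainsBlowup G k ⌊s⌋₊ := by
  obtain ⟨U, -, hsU, hU⟩ := h
  choose A hAU hA using fun i => exists_subset_card_eq (Nat.floor_le_of_le (hsU i))
  have hcomplete (i j : Fin k) (hij : i ≠ j) : G.IsCompleteBetween (A i) (A j) :=
    fun a ha b hb => hU hij (hAU i ha) (hAU j hb)
  exact ⟨A, hA, fun i j hij => disjoint_coe.1 (hcomplete i j hij).disjoint,
    fun i j hij a ha b hb => hcomplete i j hij ha hb⟩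

theorem exists_linear_blowup {g : ℝ → ℝ} (hg : ∀ ε, 0 < ε → 0 < g ε) {k : ℕ} (hk : 2 ≤ k)
    {ε : ℝ} (hε : 0 < ε) :
    ∃ c : ℝ, 0 < c ∧ ∀ {V : Type*} [Fintype V] (G : SimpleGraph V), HasLinearBicliques G g →
      ε * Fintype.card V ^ k ≤ cliqueCount G k → ContainsBlowup G k ⌊c * Fintype.card V⌋₊ := by
  have hg' : 0 < g (ε / 16 / 4) := hg _ (by positivity)
  set κ := min (g (ε / 16 / 4) / 4) 1
  have hκ : 0 < κ := by positivity
  set μ := (κ ^ (k + k)) ^ (k * k - k)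
  have hμ : 0 < μ := by positivity
  obtain ⟨c, hc, N, hcN⟩ := exists_pairwise_hereditarilyDense hk hε hμ
  refine ⟨min (μ * c) (N + 1 : ℝ)⁻¹, by positivity, fun {V} _ G hG hcount => ?_⟩
  rcases lt_or_ge (Fintype.card V) N with hsmall | hlarge
  · have hfloor : ⌊min (μ * c) (N + 1 : ℝ)⁻¹ * Fintype.card V⌋₊ = 0 := by
      refine Nat.floor_eq_zero.2 ((mul_le_mul_of_nonneg_right (min_le_right _ _)
        (Nat.cast_nonneg _)).trans_lt ?_)
      rw [inv_mul_lt_iff₀ (by positivity)]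
      exact mod_cast by lia
    rw [hfloor]
    exact ⟨fun _ => ∅, by simp⟩
  · obtain ⟨t, htc, W, htW, hW⟩ := hcN G hlarge hcount
    have hsize : min (μ * c) (N + 1 : ℝ)⁻¹ * Fintype.card V ≤ μ * t :=
      calc min (μ * c) (N + 1 : ℝ)⁻¹ * Fintype.card V ≤ μ * c * Fintype.card V := by
            gcongr; exact min_le_left _ _
        _ ≤ μ * t := by rw [mul_assoc]; gcongr
    exact ((hG.hasBlowupIn_of_pairwise_hereditarilyDense (by positivity) hκ (min_le_right _ _)
      (min_le_left _ _) (le_trans (by positivity) htc) htW hW).mono subset_rfl hsize).containsBlowup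

end LinearBlowups

theorem stmt_13 (𝒢 : (n : ℕ) → SimpleGraph (Fin n) → Prop)
    (hclosed : ∀ (n m : ℕ) (G : SimpleGraph (Fin n)) (H : SimpleGraph (Fin m))
      (f : Fin m ↪ Fin n), 𝒢 n G → (∀ i j, H.Adj i j ↔ G.Adj (f i) (f j)) → 𝒢 m H)
    (f : ℝ → ℝ) (hf : ∀ ε : ℝ, 0 < ε → 0 < f ε)
    (hB2 : ∀ ε : ℝ, 0 < ε → ∀ (n : ℕ) (G : SimpleGraph (Fin n)), 𝒢 n G →
      ε * (n.choose 2 : ℝ) ≤ (G.edgeSet.ncard : ℝ) →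
      ContainsBlowup G 2 ⌊f ε * (n : ℝ)⌋₊) :
    ∀ k : ℕ, 2 ≤ k → ∃ h : ℝ → ℝ, (∀ ε : ℝ, 0 < ε → 0 < h ε) ∧
      ∀ ε : ℝ, 0 < ε → ∀ (n : ℕ) (G : SimpleGraph (Fin n)), 𝒢 n G →
        ε * (n : ℝ) ^ k ≤ (cliqueCount G k : ℝ) →
        ContainsBlowup G k ⌊h ε * (n : ℝ)⌋₊ := by
  intro k hk
  choose! h hpos hblowup using fun (ε : ℝ) (hε : 0 < ε) =>
    exists_linear_blowup (fun ε hε => half_pos (hf ε hε)) hk hε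
  refine ⟨h, hpos, fun ε hε n G hG hcount => ?_⟩
  simpa only [Fintype.card_fin] using
    hblowup ε hε G (hasLinearBicliques_of_hereditary hclosed hB2 hG)
      (by simpa only [Fintype.card_fin] using hcount)
end

section
/- For every integer d ≥ 2 and every real c > 0 there exist c' > 0 and n_0 such that the following holds for all n ≥ n_0. If G is an n-vertex graph with VC-dimension at most d and at least c·C(n,2) edges, then G contains K_2[⌈c'·n^{1/(d+1)}⌉]. -/
/-- `S` is shattered by the neighborhoods of `G`: for every `B ⊆ S` there is a
vertex `v` with `N_G(v) ∩ S = B`. -/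
def GraphShatters {V : Type*} (G : SimpleGraph V) (S : Finset V) : Prop :=
  ∀ B ⊆ S, ∃ v : V, ∀ x ∈ S, (G.Adj v x ↔ x ∈ B)

/-- The VC-dimension of the neighborhood set system of `G` is at most `d`. -/
def VCDimLE {V : Type*} (G : SimpleGraph V) (d : ℕ) : Prop :=
  ∀ S : Finset V, GraphShatters G S → S.card ≤ d

/-!
Among the `n` vertices choose a set `A` of size about `n ^ (1 / (d + 1))` whose degree sum is at
least average. A positive proportion of all vertices then see a positive proportion of `A`. By
Sauer–Shelah, the neighborhoods leave only `O(#A ^ d)` traces on `A`, so some large trace is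
shared by `Ω(n / #A ^ d) = Ω(n ^ (1 / (d + 1)))` vertices, which together with that trace form
the required biclique.
-/

open Finset

section Averaging

lemma exists_subset_card_eq_nsmul_sum_le {ι M : Type*} [AddCommMonoid M] [LinearOrder M]
    [IsOrderedCancelAddMonoid M] (s : Finset ι) (f : ι → M) {m : ℕ} (hm : m ≤ #s) :
    ∃ t ⊆ s, #t = m ∧ m • ∑ i ∈ s, f i ≤ #s • ∑ i ∈ t, f i := by
  classical
  induction hm using Nat.decreasingInduction with
  | self => exact ⟨s, Subset.rfl, rfl, le_rfl⟩
  | of_succ m hm ih =>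
    obtain ⟨t, hts, htm, ht⟩ := ih
    obtain ⟨a, ha, hmin⟩ := exists_min_image t f (card_pos.1 (by omega))
    have hcard : #(t.erase a) = m := by rw [card_erase_of_mem ha, htm, Nat.add_sub_cancel]
    have herase : m • ∑ i ∈ t, f i ≤ (m + 1) • ∑ i ∈ t.erase a, f i := by
      have hle : m • f a ≤ ∑ i ∈ t.erase a, f i := by
        rw [← hcard]
        exact card_nsmul_le_sum _ _ _ fun i hi => hmin i (mem_of_mem_erase hi)
      rw [← add_sum_erase t f ha, nsmul_add, succ_nsmul']
      gcongr
    refine ⟨t.erase a, (erase_subset _ _).trans hts, hcard,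
      le_of_nsmul_le_nsmul_right m.succ_ne_zero ?_⟩
    calc (m + 1) • m • ∑ i ∈ s, f i = m • (m + 1) • ∑ i ∈ s, f i := smul_comm ..
      _ ≤ m • #s • ∑ i ∈ t, f i := by gcongr
      _ = #s • m • ∑ i ∈ t, f i := smul_comm ..
      _ ≤ #s • (m + 1) • ∑ i ∈ t.erase a, f i := by gcongr
      _ = (m + 1) • #s • ∑ i ∈ t.erase a, f i := smul_comm ..

lemma mul_card_le_card_filter_of_le_sum {ι R : Type*} [CommRing R] [LinearOrder R]
    [IsStrictOrderedRing R] {s : Finset ι} {f : ι → R} {δ M : R} (hδ : 0 ≤ δ) (hM : 0 < M)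
    (hf : ∀ i ∈ s, f i ≤ M) (hsum : 2 * δ * (#s * M) ≤ ∑ i ∈ s, f i) :
    δ * #s ≤ #{i ∈ s | δ * M ≤ f i} := by
  have hlarge : ∑ i ∈ s with δ * M ≤ f i, f i ≤ #{i ∈ s | δ * M ≤ f i} * M := by
    rw [← nsmul_eq_mul]
    exact sum_le_card_nsmul _ _ _ fun i hi => hf i (mem_filter.1 hi).1
  have hsmall : ∑ i ∈ s with ¬δ * M ≤ f i, f i ≤ #s * (δ * M) :=
    calc ∑ i ∈ s with ¬δ * M ≤ f i, f i ≤ #{i ∈ s | ¬δ * M ≤ f i} • (δ * M) :=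
          sum_le_card_nsmul _ _ _ fun i hi => (not_le.1 (mem_filter.1 hi).2).le
      _ ≤ #s * (δ * M) := by
          rw [nsmul_eq_mul]
          gcongr
          exact filter_subset _ _
  rw [← sum_filter_add_sum_filter_not s (δ * M ≤ f ·)] at hsum
  refine le_of_mul_le_mul_right ?_ hM
  linarith

end Averaging

section SauerShelah

lemma sum_range_choose_le_add_one_pow (m d : ℕ) :
    ∑ k ∈ range (d + 1), m.choose k ≤ (m + 1) ^ d := by
  rw [add_pow]
  refine sum_le_sum fun k hk => ?_
  rw [one_pow, mul_one]
  exact (m.choose_le_pow k).trans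
    (Nat.le_mul_of_pos_right _ (Nat.choose_pos (mem_range_succ_iff.1 hk)))

lemma card_le_sum_choose_of_vcDim_le {α : Type*} [DecidableEq α] {𝒜 : Finset (Finset α)}
    {t : Finset α} {d : ℕ} (h𝒜 : ∀ u ∈ 𝒜, u ⊆ t) (hd : 𝒜.vcDim ≤ d) :
    #𝒜 ≤ ∑ k ∈ range (d + 1), (#t).choose k := by
  have hsub : 𝒜.shatterer ⊆ (range (d + 1)).biUnion fun k => t.powersetCard k := fun s hs => by
    rw [mem_shatterer] at hs
    obtain ⟨u, hu, hsu⟩ := hs.exists_superset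
    exact mem_biUnion.2 ⟨#s, mem_range_succ_iff.2 (hs.card_le_vcDim.trans hd),
      mem_powersetCard.2 ⟨hsu.trans (h𝒜 u hu), rfl⟩⟩
  calc #𝒜 ≤ #𝒜.shatterer := card_le_card_shatterer 𝒜
    _ ≤ _ := card_le_card hsub
    _ ≤ ∑ k ∈ range (d + 1), #(t.powersetCard k) := card_biUnion_le
    _ = ∑ k ∈ range (d + 1), (#t).choose k := by simp only [card_powersetCard]

end SauerShelah

section Relation

variable {α β : Type*} [DecidableEq β] {r : α → β → Prop} [DecidableRel r] {s : Finset α}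
  {t : Finset β} {d : ℕ}

lemma exists_card_le_card_filter_bipartiteAbove_eq_mul (hs : s.Nonempty)
    (hd : (s.image fun a => t.bipartiteAbove r a).vcDim ≤ d) :
    ∃ a ∈ s, #s ≤ #{x ∈ s | t.bipartiteAbove r x = t.bipartiteAbove r a} * (#t + 1) ^ d := by
  obtain ⟨a, ha, hmax⟩ :=
    exists_max_image s (fun a => #{x ∈ s | t.bipartiteAbove r x = t.bipartiteAbove r a}) hs
  have htraces : #(s.image fun a => t.bipartiteAbove r a) ≤ (#t + 1) ^ d :=
    (card_le_sum_choose_of_vcDim_le (forall_mem_image.2 fun _ _ => filter_subset _ _) hd).trans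
      (sum_range_choose_le_add_one_pow _ _)
  exact ⟨a, ha, (card_le_mul_card_image s _ (forall_mem_image.2 hmax)).trans (by gcongr)⟩

lemma exists_biclique_of_vcDim_le {R : Type*} [CommRing R] [LinearOrder R] [IsStrictOrderedRing R]
    {δ : R} (hs : s.Nonempty) (ht : t.Nonempty) (hδ : 0 < δ)
    (hd : (s.image fun a => t.bipartiteAbove r a).vcDim ≤ d)
    (hdense : 2 * δ * (#s * #t) ≤ ∑ a ∈ s, (#(t.bipartiteAbove r a) : R)) :
    ∃ X ⊆ s, ∃ Y ⊆ t, δ * #s ≤ #X * (#t + 1) ^ d ∧ δ * #t ≤ #Y ∧ ∀ x ∈ X, ∀ y ∈ Y, r x y := by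
  let rich : Finset α := {a ∈ s | δ * #t ≤ (#(t.bipartiteAbove r a) : R)}
  have hrich_sub : rich ⊆ s := filter_subset _ _
  have hrich_card : δ * #s ≤ #rich :=
    mul_card_le_card_filter_of_le_sum hδ.le (Nat.cast_pos.2 ht.card_pos)
      (fun a _ => Nat.cast_le.2 (card_le_card (filter_subset _ _))) hdense
  have hrich_ne : rich.Nonempty :=
    card_pos.1 (Nat.cast_pos.1 ((mul_pos hδ (Nat.cast_pos.2 hs.card_pos)).trans_le hrich_card))
  obtain ⟨a, ha, hfiber⟩ := exists_card_le_card_filter_bipartiteAbove_eq_mul hrich_ne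
    ((vcDim_mono (image_subset_image hrich_sub)).trans hd)
  refine ⟨{x ∈ rich | t.bipartiteAbove r x = t.bipartiteAbove r a},
    (filter_subset _ _).trans hrich_sub, t.bipartiteAbove r a, filter_subset _ _,
    hrich_card.trans (by exact_mod_cast hfiber), (mem_filter.1 ha).2, fun x hx y hy => ?_⟩
  rw [← (mem_filter.1 hx).2] at hy
  exact (mem_filter.1 hy).2

end Relation

section Graph

variable {V : Type*} {G : SimpleGraph V} {d : ℕ}

lemma ContainsBlowup.of_isCompleteBetween {t : ℕ} {X Y : Finset V}
    (hXY : G.IsCompleteBetween X Y) (hX : t ≤ #X) (hY : t ≤ #Y) : ContainsBlowup G 2 t := by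
  obtain ⟨X', hX', hXt⟩ := exists_subset_card_eq hX
  obtain ⟨Y', hY', hYt⟩ := exists_subset_card_eq hY
  have hXY' : G.IsCompleteBetween X' Y' := fun x hx y hy => hXY (hX' hx) (hY' hy)
  have hdisj : Disjoint X' Y' := disjoint_coe.1 hXY'.disjoint
  refine ⟨![X', Y'], ?_, ?_, ?_⟩
  · simp [Fin.forall_fin_two, hXt, hYt]
  · simp [Fin.forall_fin_two, hdisj, hdisj.symm]
  · simpa [Fin.forall_fin_two] using ⟨hXY', hXY'.symm⟩

lemma VCDimLE.vcDim_image_bipartiteAbove_le [DecidableEq V] [DecidableRel G.Adj]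
    (hG : VCDimLE G d) (s t : Finset V) :
    (s.image fun v => t.bipartiteAbove G.Adj v).vcDim ≤ d := by
  refine Finset.sup_le fun S hS => hG S fun B hB => ?_
  rw [mem_shatterer] at hS
  obtain ⟨u, hu, hSu⟩ := hS.exists_superset
  obtain ⟨w, -, rfl⟩ := mem_image.1 hu
  obtain ⟨u', hu', rfl⟩ := hS hB
  obtain ⟨v, -, rfl⟩ := mem_image.1 hu'
  exact ⟨v, fun x hx => by simp [hx, (mem_bipartiteAbove G.Adj |>.1 (hSu hx)).1]⟩

lemma sum_card_bipartiteAbove_adj [Fintype V] [DecidableRel G.Adj] (t : Finset V) :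
    ∑ v, #(t.bipartiteAbove G.Adj v) = ∑ a ∈ t, G.degree a := by
  rw [sum_card_bipartiteAbove_eq_sum_card_bipartiteBelow]
  refine sum_congr rfl fun a _ => ?_
  rw [← G.card_neighborFinset_eq_degree, G.neighborFinset_eq_filter]
  simp only [bipartiteBelow, G.adj_comm]

lemma VCDimLE.exists_isCompleteBetween [Fintype V] (hG : VCDimLE G d) {δ : ℝ} (hδ : 0 < δ)
    (hedges : δ * (Fintype.card V : ℝ) ^ 2 ≤ (G.edgeSet.ncard : ℝ)) {m : ℕ} (hm : 0 < m)
    (hmV : m ≤ Fintype.card V) :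
    ∃ X Y : Finset V, δ * Fintype.card V ≤ #X * ((m : ℝ) + 1) ^ d ∧ δ * m ≤ #Y ∧
      G.IsCompleteBetween X Y := by
  classical
  obtain ⟨A, -, rfl, hA⟩ := exists_subset_card_eq_nsmul_sum_le univ (fun v => G.degree v) hmV
  have hn : 0 < Fintype.card V := hm.trans_le hmV
  rw [G.sum_degrees_eq_twice_card_edges, ← sum_card_bipartiteAbove_adj, card_univ, smul_eq_mul,
    smul_eq_mul, ← Nat.cast_le (α := ℝ)] at hA
  rw [Set.ncard_eq_toFinset_card', ← SimpleGraph.edgeFinset] at hedges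
  push_cast at hA
  have hdense : 2 * δ * (#(univ : Finset V) * #A) ≤
      ∑ v, (#(A.bipartiteAbove G.Adj v) : ℝ) := by
    rw [card_univ]
    refine le_of_mul_le_mul_left ?_ (Nat.cast_pos.2 hn : (0 : ℝ) < _)
    calc Fintype.card V * (2 * δ * (Fintype.card V * #A))
        = #A * (2 * (δ * (Fintype.card V : ℝ) ^ 2)) := by ring
      _ ≤ #A * (2 * #G.edgeFinset) := by gcongr
      _ ≤ _ := hA
  obtain ⟨X, -, Y, -, hX, hY, hXY⟩ := exists_biclique_of_vcDim_le
    (univ_nonempty_iff.2 (Fintype.card_pos_iff.1 hn)) (card_pos.1 hm) hδ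
    (hG.vcDim_image_bipartiteAbove_le univ A) hdense
  exact ⟨X, Y, hX, hY, hXY⟩

lemma VCDimLE.containsBlowup_two_of_pow_eq_card [Fintype V] (hG : VCDimLE G d)
    {δ x : ℝ} (hδ : 0 < δ) (hedges : δ * (Fintype.card V : ℝ) ^ 2 ≤ (G.edgeSet.ncard : ℝ))
    (hx : 1 ≤ x) (hxV : x ^ (d + 1) = Fintype.card V) :
    ContainsBlowup G 2 ⌈δ / 3 ^ d * x⌉₊ := by
  have hceil : (⌈x⌉₊ : ℝ) + 1 ≤ 3 * x := by
    linarith [Nat.ceil_lt_add_one (zero_le_one.trans hx)]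
  have hceil_le : ⌈x⌉₊ ≤ Fintype.card V :=
    Nat.ceil_le.2 (hxV ▸ le_self_pow₀ hx d.succ_ne_zero)
  obtain ⟨X, Y, hX, hY, hXY⟩ :=
    hG.exists_isCompleteBetween hδ hedges (Nat.ceil_pos.2 (one_pos.trans_le hx)) hceil_le
  refine .of_isCompleteBetween hXY (Nat.ceil_le.2 ?_) (Nat.ceil_le.2 ?_)
  · refine le_of_mul_le_mul_right ?_ (show (0 : ℝ) < (3 * x) ^ d by positivity)
    calc δ / 3 ^ d * x * (3 * x) ^ d = δ * Fintype.card V := by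
          rw [← hxV, mul_pow]
          field_simp
          rw [pow_succ']
      _ ≤ #X * ((⌈x⌉₊ : ℝ) + 1) ^ d := hX
      _ ≤ #X * (3 * x) ^ d := by gcongr
  · calc δ / 3 ^ d * x ≤ δ * ⌈x⌉₊ := by
          gcongr
          · exact div_le_self hδ.le (one_le_pow₀ (by norm_num))
          · exact Nat.le_ceil x
      _ ≤ #Y := hY

end Graph

lemma sq_div_four_le_choose_two {n : ℕ} (hn : 2 ≤ n) : (n : ℝ) ^ 2 / 4 ≤ n.choose 2 := by
  have : (2 : ℝ) ≤ n := by exact_mod_cast hn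
  rw [Nat.cast_choose_two]
  nlinarith

theorem stmt_17_general (d : ℕ) {c : ℝ} (hc : 0 < c) :
    ∃ c' : ℝ, 0 < c' ∧ ∀ (V : Type*) [Fintype V] [Nontrivial V] (G : SimpleGraph V),
      VCDimLE G d → c * ((Fintype.card V).choose 2 : ℝ) ≤ (G.edgeSet.ncard : ℝ) →
      ContainsBlowup G 2 ⌈c' * (Fintype.card V : ℝ) ^ ((1 : ℝ) / ((d : ℝ) + 1))⌉₊ := by
  refine ⟨c / 4 / 3 ^ d, by positivity, fun V _ _ G hG hedges => ?_⟩
  have hcard : 1 < Fintype.card V := Fintype.one_lt_card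
  refine hG.containsBlowup_two_of_pow_eq_card (by positivity) ?_
    (Real.one_le_rpow (by exact_mod_cast hcard.le) (by positivity)) ?_
  · calc c / 4 * (Fintype.card V : ℝ) ^ 2 = c * ((Fintype.card V : ℝ) ^ 2 / 4) := by ring
      _ ≤ c * (Fintype.card V).choose 2 := by
          gcongr
          exact sq_div_four_le_choose_two hcard
      _ ≤ G.edgeSet.ncard := hedges
  · rw [one_div, ← Nat.cast_add_one]
    exact Real.rpow_inv_natCast_pow (Nat.cast_nonneg _) d.succ_ne_zero

theorem stmt_17 (d : ℕ) (hd : 2 ≤ d) (c : ℝ) (hc : 0 < c) :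
    ∃ c' : ℝ, 0 < c' ∧ ∃ n₀ : ℕ, ∀ n : ℕ, n₀ ≤ n →
      ∀ G : SimpleGraph (Fin n), VCDimLE G d →
        c * (n.choose 2 : ℝ) ≤ (G.edgeSet.ncard : ℝ) →
        ContainsBlowup G 2 ⌈c' * (n : ℝ) ^ ((1 : ℝ) / ((d : ℝ) + 1))⌉₊ := by
  obtain ⟨c', hc', h⟩ := stmt_17_general d hc
  refine ⟨c', hc', 2, fun n hn G => ?_⟩
  have : Nontrivial (Fin n) := Fin.nontrivial_iff_two_le.2 hn
  simpa only [Fintype.card_fin] using h (Fin n) G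
end

section
/- For every integer k ≥ 2 and all reals η, ε > 0 there exist γ > 0 and n_0 such that the following holds for all n ≥ n_0. If G is an ordered graph on n vertices containing at least η·n^k copies of K_k, then there exist vertex sets A_1, A_2, ..., A_k with A_1 < A_2 < ... < A_k (every vertex of A_i precedes every vertex of A_j whenever i < j), |A_i| ≥ γ·n for all i, and such that for all 1 ≤ i < j ≤ k the pair (A_i, A_j) is ε-regular in G with edge density d(A_i, A_j) ≥ η/2. -/
/-- The edge density of the pair `(X, Y)`: the number of adjacent pairs
`(x, y) ∈ X × Y` divided by `|X|·|Y|`. -/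
noncomputable def pairDensity {V : Type*} (G : SimpleGraph V) (X Y : Finset V) : ℝ :=
  (Set.ncard {p : V × V | p.1 ∈ X ∧ p.2 ∈ Y ∧ G.Adj p.1 p.2} : ℝ) /
    ((X.card : ℝ) * (Y.card : ℝ))

/-- The pair `(X, Y)` is `ε`-regular in `G`. -/
def EpsRegularPair {V : Type*} (G : SimpleGraph V) (ε : ℝ) (X Y : Finset V) : Prop :=
  ∀ A ⊆ X, ∀ B ⊆ Y, ε * (X.card : ℝ) ≤ (A.card : ℝ) → ε * (Y.card : ℝ) ≤ (B.card : ℝ) →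
    |pairDensity G A B - pairDensity G X Y| ≤ ε

/-!
Color the vertices by cutting the order into `m` short intervals, where `m` is large compared with
`1 / η`, and refine a Szemerédi partition of `G` by this coloring. Delete the edges inside a part or
an interval, the edges between parts that are not regular or of density only slightly above
`η / 2`, and the edges at vertices whose cell is a small fraction of its part. Each pair of vertices
lies in at most `n ^ (k - 2)` copies of `K_k`, and fewer than `η * n ^ 2` ordered pairs are lost, so
some copy of `K_k` survives. The cells of its vertices lie in distinct intervals, hence are ordered,
and they inherit regularity and density from the parts because they are large in them.
-/

open Finset

section Regularity

variable {V : Type*} {G : SimpleGraph V} [DecidableRel G.Adj]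

lemma pairDensity_eq_edgeDensity (X Y : Finset V) :
    pairDensity G X Y = (G.edgeDensity X Y : ℝ) := by
  have h : {p : V × V | p.1 ∈ X ∧ p.2 ∈ Y ∧ G.Adj p.1 p.2} = ↑(G.interedges X Y) := by
    ext p
    simp [SimpleGraph.mem_interedges_iff]
  rw [pairDensity, h, Set.ncard_coe_finset, SimpleGraph.edgeDensity_def]
  push_cast
  rfl

variable {δ ε α : ℝ} {S T X Y : Finset V}

lemma abs_pairDensity_sub_edgeDensity_lt (h : G.IsUniform δ S T) (hXS : X ⊆ S) (hYT : Y ⊆ T)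
    (hX : δ * #S ≤ #X) (hY : δ * #T ≤ #Y) : |pairDensity G X Y - G.edgeDensity S T| < δ := by
  rw [pairDensity_eq_edgeDensity]
  exact h hXS hYT (by rwa [mul_comm]) (by rwa [mul_comm])

lemma epsRegularPair_of_isUniform (h : G.IsUniform δ S T) (hε : 0 ≤ ε) (hδα : δ ≤ α)
    (hδεα : δ ≤ ε * α) (hδε : δ ≤ ε / 2) (hXS : X ⊆ S) (hYT : Y ⊆ T) (hX : α * #S ≤ #X)
    (hY : α * #T ≤ #Y) : EpsRegularPair G ε X Y := by
  have large {S X : Finset V} (hX : α * #S ≤ #X) : δ * #S ≤ #X :=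
    (mul_le_mul_of_nonneg_right hδα (Nat.cast_nonneg _)).trans hX
  have large_of_subset {S X A : Finset V} (hX : α * #S ≤ #X) (hA : ε * #X ≤ #A) : δ * #S ≤ #A :=
    calc δ * #S ≤ ε * α * #S := by gcongr
      _ = ε * (α * #S) := mul_assoc _ _ _
      _ ≤ ε * #X := by gcongr
      _ ≤ #A := hA
  intro A hA B hB hAX hBY
  have hAB := abs_lt.1 <| abs_pairDensity_sub_edgeDensity_lt h (hA.trans hXS) (hB.trans hYT)
    (large_of_subset hX hAX) (large_of_subset hY hBY)
  have hXY := abs_lt.1 <| abs_pairDensity_sub_edgeDensity_lt h hXS hYT (large hX) (large hY)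
  exact abs_le.2 ⟨by linarith, by linarith⟩

end Regularity

section DeletedPairs

variable {V : Type*} [Fintype V]

open scoped Classical in
/-- The pairs of vertices that are adjacent in `G` but not in `H`. The pairs are ordered, so each
edge of `G` missing from `H` is counted twice. -/
noncomputable def deletedPairs (G H : SimpleGraph V) : Finset (V × V) :=
  {p | G.Adj p.1 p.2 ∧ ¬H.Adj p.1 p.2}

lemma mem_deletedPairs {G H : SimpleGraph V} {x y : V} :
    (x, y) ∈ deletedPairs G H ↔ G.Adj x y ∧ ¬H.Adj x y := by
  simp [deletedPairs]

lemma exists_mem_deletedPairs_of_cliqueFree {G H : SimpleGraph V} {s : Finset V}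
    (hs : G.IsClique (s : Set V)) (hH : H.CliqueFree #s) :
    ∃ x ∈ s, ∃ y ∈ s, (x, y) ∈ deletedPairs G H := by
  by_contra! h
  refine hH s ⟨fun x hx y hy hxy ↦ ?_, rfl⟩
  by_contra hHxy
  exact h x hx y hy (mem_deletedPairs.2 ⟨hs hx hy hxy, hHxy⟩)

lemma cliqueCount_le_of_cliqueFree {G H : SimpleGraph V} {k : ℕ} (hH : H.CliqueFree k) :
    cliqueCount G k ≤ #(deletedPairs G H) * Fintype.card V ^ (k - 2) := by
  classical
  -- A clique is determined by a deleted pair inside it together with its other `k - 2` vertices.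
  let F : Finset (Finset V) := (deletedPairs G H ×ˢ powersetCard (k - 2) univ).image
    fun p ↦ insert p.1.1 (insert p.1.2 p.2)
  have hF : {s : Finset V | #s = k ∧ G.IsClique (s : Set V)} ⊆ ↑F := by
    rintro s ⟨rfl, hs⟩
    obtain ⟨x, hx, y, hy, hxy⟩ := exists_mem_deletedPairs_of_cliqueFree hs hH
    have hy' : y ∈ s.erase x := mem_erase.2 ⟨(mem_deletedPairs.1 hxy).1.ne', hy⟩
    refine mem_coe.2 (mem_image.2 ⟨((x, y), (s.erase x).erase y), mem_product.2 ⟨hxy, ?_⟩, ?_⟩)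
    · rw [mem_powersetCard_univ, card_erase_of_mem hy', card_erase_of_mem hx, Nat.sub_sub]
    · rw [insert_erase hy', insert_erase hx]
  calc cliqueCount G k ≤ #F := by
        rw [cliqueCount, ← Set.ncard_coe_finset]
        exact Set.ncard_le_ncard hF
    _ ≤ #(deletedPairs G H ×ˢ powersetCard (k - 2) (univ : Finset V)) := card_image_le
    _ ≤ #(deletedPairs G H) * Fintype.card V ^ (k - 2) := by
        rw [card_product, card_powersetCard, card_univ]
        gcongr
        exact Nat.choose_le_pow _ _

lemma exists_isNClique_of_card_deletedPairs_lt {G H : SimpleGraph V} {k : ℕ} {η : ℝ} (hk : 2 ≤ k)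
    (hdel : (#(deletedPairs G H) : ℝ) < η * Fintype.card V ^ 2)
    (hG : η * Fintype.card V ^ k ≤ cliqueCount G k) : ∃ s, H.IsNClique k s := by
  by_contra! hH
  obtain hV | hV := isEmpty_or_nonempty V
  · simp [deletedPairs] at hdel
  refine hG.not_gt ?_
  calc (cliqueCount G k : ℝ) ≤ #(deletedPairs G H) * Fintype.card V ^ (k - 2) :=
        mod_cast cliqueCount_le_of_cliqueFree hH
    _ < η * Fintype.card V ^ 2 * Fintype.card V ^ (k - 2) := by gcongr
    _ = η * Fintype.card V ^ k := by rw [mul_assoc, ← pow_add, Nat.add_sub_cancel' hk]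

end DeletedPairs

section RegularityReduced

variable {V : Type*} [DecidableEq V] {G : SimpleGraph V} [DecidableRel G.Adj] {δ β : ℝ}

lemma card_biUnion_sparsePairs_le {A : Finset V} (P : Finpartition A) (hβ : 0 ≤ β) :
    (#((P.sparsePairs G β).biUnion fun (U, W) ↦ G.interedges U W) : ℝ) ≤ β * #A ^ 2 := by
  have sparse {U W : Finset V} (h : (U, W) ∈ P.sparsePairs G β) :
      (#(G.interedges U W) : ℝ) ≤ β * (#U * #W) := by
    obtain ⟨hU, hW, -, hUW⟩ := (P.mk_mem_sparsePairs G _ _ _).1 h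
    have hU₀ := (P.nonempty_of_mem_parts hU).card_pos
    have hW₀ := (P.nonempty_of_mem_parts hW).card_pos
    rw [SimpleGraph.edgeDensity_def] at hUW
    push_cast at hUW
    exact ((div_lt_iff₀ (by positivity)).1 hUW).le
  have hP : ∑ U ∈ P.parts, (#U : ℝ) = #A := mod_cast P.sum_card_parts
  calc (#((P.sparsePairs G β).biUnion fun (U, W) ↦ G.interedges U W) : ℝ)
      ≤ ∑ UW ∈ P.sparsePairs G β, (#(G.interedges UW.1 UW.2) : ℝ) := mod_cast card_biUnion_le
    _ ≤ ∑ UW ∈ P.sparsePairs G β, β * (#UW.1 * #UW.2) := sum_le_sum fun _ h ↦ sparse h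
    _ ≤ ∑ UW ∈ P.parts ×ˢ P.parts, β * (#UW.1 * #UW.2) := by
        gcongr
        rintro ⟨U, W⟩ h
        obtain ⟨hU, hW, -⟩ := (P.mk_mem_sparsePairs G _ _ _).1 h
        exact mem_product.2 ⟨hU, hW⟩
    _ = β * #A ^ 2 := by
        rw [← hP, sq, sum_mul_sum, ← sum_product', mul_sum]

variable [Fintype V] {P : Finpartition (univ : Finset V)}

lemma deletedPairs_regularityReduced_subset :
    deletedPairs G (G.regularityReduced P δ β) ⊆
      (P.nonUniforms G δ).biUnion (fun (U, W) ↦ U ×ˢ W) ∪ P.parts.biUnion offDiag ∪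
        (P.sparsePairs G β).biUnion fun (U, W) ↦ G.interedges U W := by
  rintro ⟨x, y⟩ hxy
  obtain ⟨hG, hred⟩ := mem_deletedPairs.1 hxy
  obtain ⟨U, hU, hx⟩ := P.exists_mem (mem_univ x)
  obtain ⟨W, hW, hy⟩ := P.exists_mem (mem_univ y)
  rw [union_assoc, mem_union, mem_union]
  obtain rfl | hUW := eq_or_ne U W
  · exact .inr <| .inl <| mem_biUnion.2 ⟨U, hU, mem_offDiag.2 ⟨hx, hy, hG.ne⟩⟩
  by_cases hunif : G.IsUniform δ U W
  · refine .inr <| .inr <| mem_biUnion.2 ⟨(U, W),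
      (P.mk_mem_sparsePairs G _ _ _).2 ⟨hU, hW, hUW, ?_⟩,
      (SimpleGraph.mem_interedges_iff G).2 ⟨hx, hy, hG⟩⟩
    exact not_le.1 fun hdens ↦ hred ⟨hG, U, hU, W, hW, hx, hy, hUW, hunif, hdens⟩
  · exact .inl <| mem_biUnion.2
      ⟨(U, W), (P.mk_mem_nonUniforms G).2 ⟨hU, hW, hUW, hunif⟩, mem_product.2 ⟨hx, hy⟩⟩

lemma card_deletedPairs_regularityReduced_le [Nonempty V] (hP : P.IsEquipartition)
    (hunif : P.IsUniform G δ) (hδ : 0 < δ) (hβ : 0 ≤ β) :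
    (#(deletedPairs G (G.regularityReduced P δ β)) : ℝ) ≤
      (4 * δ + 2 / #P.parts + β) * Fintype.card V ^ 2 := by
  have hparts : 0 < #P.parts := (P.parts_nonempty univ_nonempty.ne_empty).card_pos
  have hnonuniform := hP.sum_nonUniforms_lt univ_nonempty hδ hunif
  have hinternal := hP.card_biUnion_offDiag_le (𝕜 := ℝ) (ε := 4 / #P.parts) (by positivity)
    (by rw [div_div_cancel₀ (by norm_num)])
  have hsparse := card_biUnion_sparsePairs_le (G := G) P hβ
  rw [card_univ] at hnonuniform hinternal hsparse
  have hunion := card_le_card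
    (deletedPairs_regularityReduced_subset (G := G) (P := P) (δ := δ) (β := β))
  set N := (P.nonUniforms G δ).biUnion fun (U, W) ↦ U ×ˢ W
  set I := P.parts.biUnion offDiag
  set S := (P.sparsePairs G β).biUnion fun (U, W) ↦ G.interedges U W
  calc (#(deletedPairs G (G.regularityReduced P δ β)) : ℝ)
      ≤ #N + #I + #S := mod_cast
        hunion.trans <| (card_union_le _ _).trans <| add_le_add_left (card_union_le _ _) _
    _ ≤ 4 * δ * Fintype.card V ^ 2 + 4 / #P.parts / 2 * Fintype.card V ^ 2 +
          β * Fintype.card V ^ 2 := by gcongr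
    _ = (4 * δ + 2 / #P.parts + β) * Fintype.card V ^ 2 := by ring

lemma le_card_part_of_isEquipartition (hP : P.IsEquipartition) {M : ℕ} (hM : #P.parts ≤ M)
    (x : V) : (Fintype.card V : ℝ) / (2 * M) ≤ #(P.part x) := by
  have hx : P.part x ∈ P.parts := P.part_mem.2 (mem_univ x)
  have hparts : 0 < #P.parts := card_pos.2 ⟨_, hx⟩
  have hpart : 1 ≤ #(P.part x) := (P.nonempty_of_mem_parts hx).card_pos
  rw [div_le_iff₀' (by exact_mod_cast (by omega : 0 < 2 * M))]
  have haverage : Fintype.card V / #P.parts ≤ #(P.part x) := by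
    simpa using hP.average_le_card_part hx
  have : Fintype.card V ≤ 2 * M * #(P.part x) :=
    calc Fintype.card V ≤ #P.parts * (Fintype.card V / #P.parts + 1) :=
          (Nat.lt_mul_div_succ _ hparts).le
      _ ≤ M * (#(P.part x) + #(P.part x)) := by gcongr
      _ = 2 * M * #(P.part x) := by ring
  exact_mod_cast this

end RegularityReduced

section Coloring

variable {V ι : Type*} [DecidableEq ι]

lemma card_filter_rare_color_le [Fintype ι] (A : Finset V) (f : V → ι) {t : ℝ} (ht : 0 ≤ t) :
    (#{x ∈ A | (#{y ∈ A | f y = f x} : ℝ) < t} : ℝ) ≤ t * Fintype.card ι := by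
  have hfiber (i : ι) : #{x ∈ {x ∈ A | (#{y ∈ A | f y = f x} : ℝ) < t} | f x = i} ≤ ⌊t⌋₊ := by
    obtain h | ⟨x, hx⟩ :=
      {x ∈ {x ∈ A | (#{y ∈ A | f y = f x} : ℝ) < t} | f x = i}.eq_empty_or_nonempty
    · simp [h]
    · obtain ⟨hrare, rfl⟩ := mem_filter.1 hx
      exact Nat.le_floor <| le_trans (Nat.cast_le.2 <| card_le_card <|
        filter_subset_filter _ <| filter_subset _ _) (mem_filter.1 hrare).2.le
  calc (#{x ∈ A | (#{y ∈ A | f y = f x} : ℝ) < t} : ℝ) ≤ (⌊t⌋₊ * #(univ : Finset ι) : ℕ) :=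
        mod_cast card_le_mul_card_image_of_maps_to (fun _ _ ↦ mem_univ _) _ fun i _ ↦ hfiber i
    _ ≤ t * Fintype.card ι := by
        push_cast
        gcongr
        exacts [Nat.floor_le ht, le_rfl]

variable [Fintype V]

lemma card_filter_color_eq_le {f : V → ι} {t : ℝ} (hf : ∀ i, (#{x | f x = i} : ℝ) ≤ t) :
    (#{p : V × V | f p.1 = f p.2} : ℝ) ≤ Fintype.card V * t := by
  calc (#{p : V × V | f p.1 = f p.2} : ℝ) = ∑ y, (#{x | f x = f y} : ℝ) := by
        simp only [card_filter, Fintype.sum_prod_type_right, Nat.cast_sum]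
    _ ≤ ∑ _y : V, t := sum_le_sum fun y _ ↦ hf (f y)
    _ = Fintype.card V * t := by rw [sum_const, card_univ, nsmul_eq_mul]

variable [DecidableEq V]

/-- The cell of `x` in the common refinement of the partition `P` and the coloring `f`.
The regular pairs of the main theorem are pairs of such cells. -/
def colorCell (P : Finpartition (univ : Finset V)) (f : V → ι) (x : V) : Finset V :=
  {y ∈ P.part x | f y = f x}

variable {P : Finpartition (univ : Finset V)} {f : V → ι} {α : ℝ}

lemma card_filter_small_cell_le [Fintype ι] (P : Finpartition (univ : Finset V)) (f : V → ι)
    (hα : 0 ≤ α) :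
    (#{x | (#(colorCell P f x) : ℝ) < α * #(P.part x)} : ℝ) ≤
      α * Fintype.card ι * Fintype.card V := by
  have hsub : ({x | (#(colorCell P f x) : ℝ) < α * #(P.part x)} : Finset V) ⊆
      P.parts.biUnion fun A ↦ {x ∈ A | (#{y ∈ A | f y = f x} : ℝ) < α * #A} := fun x hx ↦
    mem_biUnion.2 ⟨P.part x, P.part_mem.2 (mem_univ x),
      mem_filter.2 ⟨P.mem_part (mem_univ x), (mem_filter.1 hx).2⟩⟩
  calc (#{x | (#(colorCell P f x) : ℝ) < α * #(P.part x)} : ℝ)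
      ≤ ∑ A ∈ P.parts, (#{x ∈ A | (#{y ∈ A | f y = f x} : ℝ) < α * #A} : ℝ) :=
        mod_cast (card_le_card hsub).trans card_biUnion_le
    _ ≤ ∑ A ∈ P.parts, α * #A * Fintype.card ι :=
        sum_le_sum fun A _ ↦ card_filter_rare_color_le A f (by positivity)
    _ = α * Fintype.card ι * Fintype.card V := by
        rw [← sum_mul, ← mul_sum, ← Nat.cast_sum, P.sum_card_parts, card_univ]
        ring

variable {G : SimpleGraph V} [DecidableRel G.Adj] {δ β : ℝ}

/-- The regularity-reduced graph with the edges inside a color class and the edges at a vertex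
whose cell is less than an `α`-fraction of its part deleted as well. -/
def cleanedGraph (G : SimpleGraph V) [DecidableRel G.Adj] (P : Finpartition (univ : Finset V))
    (f : V → ι) (δ β α : ℝ) : SimpleGraph V where
  Adj x y := (G.regularityReduced P δ β).Adj x y ∧ f x ≠ f y ∧
    α * #(P.part x) ≤ #(colorCell P f x) ∧ α * #(P.part y) ≤ #(colorCell P f y)
  symm := ⟨fun _ _ ⟨hadj, hf, hx, hy⟩ ↦ ⟨hadj.symm, hf.symm, hy, hx⟩⟩

lemma deletedPairs_cleanedGraph_subset :
    deletedPairs G (cleanedGraph G P f δ β α) ⊆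
      deletedPairs G (G.regularityReduced P δ β) ∪ ({p | f p.1 = f p.2} : Finset (V × V)) ∪
        ({x | (#(colorCell P f x) : ℝ) < α * #(P.part x)} : Finset V) ×ˢ univ ∪
        univ ×ˢ ({x | (#(colorCell P f x) : ℝ) < α * #(P.part x)} : Finset V) := by
  rintro ⟨x, y⟩ hxy
  obtain ⟨hG, hclean⟩ := mem_deletedPairs.1 hxy
  contrapose! hclean
  simpa [cleanedGraph, mem_deletedPairs, hG, and_assoc] using hclean

lemma card_deletedPairs_cleanedGraph_le [Fintype ι] [Nonempty V] {θ : ℝ} (hP : P.IsEquipartition)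
    (hunif : P.IsUniform G δ) (hf : ∀ i, (#{x | f x = i} : ℝ) ≤ θ * Fintype.card V) (hδ : 0 < δ)
    (hβ : 0 ≤ β) (hα : 0 ≤ α) :
    (#(deletedPairs G (cleanedGraph G P f δ β α)) : ℝ) ≤
      (4 * δ + 2 / #P.parts + β + θ + 2 * (α * Fintype.card ι)) * Fintype.card V ^ 2 := by
  have hreduced := card_deletedPairs_regularityReduced_le hP hunif hδ hβ
  have hcolor := card_filter_color_eq_le hf
  have hsmall := card_filter_small_cell_le P f hα
  have hunion := card_le_card (deletedPairs_cleanedGraph_subset (G := G) (P := P) (f := f)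
    (δ := δ) (β := β) (α := α))
  set S : Finset V := {x | (#(colorCell P f x) : ℝ) < α * #(P.part x)}
  set C : Finset (V × V) := {p | f p.1 = f p.2}
  set R := deletedPairs G (G.regularityReduced P δ β)
  calc (#(deletedPairs G (cleanedGraph G P f δ β α)) : ℝ)
      ≤ #(R ∪ C ∪ S ×ˢ univ ∪ univ ×ˢ S) := mod_cast hunion
    _ ≤ #R + #C + #(S ×ˢ (univ : Finset V)) + #((univ : Finset V) ×ˢ S) := by
        norm_cast
        exact (card_union_le _ _).trans <| add_le_add_left
          ((card_union_le _ _).trans <| add_le_add_left (card_union_le _ _) _) _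
    _ = #R + #C + 2 * (#S * Fintype.card V) := by
        simp only [card_product, card_univ]
        push_cast
        ring
    _ ≤ (4 * δ + 2 / #P.parts + β) * Fintype.card V ^ 2 +
          Fintype.card V * (θ * Fintype.card V) +
          2 * (α * Fintype.card ι * Fintype.card V * Fintype.card V) := by gcongr
    _ = _ := by ring

end Coloring

section Intervals

variable {V : Type*} [Fintype V] [LinearOrder V]

lemma exists_monotone_card_fiber_le {m L : ℕ} (h : Fintype.card V ≤ m * L) :
    ∃ f : V → Fin m, Monotone f ∧ ∀ i, #{x | f x = i} ≤ L := by
  let rank : V ≃o Fin (Fintype.card V) := (Fintype.orderIsoFinOfCardEq V rfl).symm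
  -- The block of `x` is the pair `(rank x / L, rank x % L)`.
  let block (x : V) : Fin m × Fin L := finProdFinEquiv.symm (Fin.castLE h (rank x))
  have hblock : Function.Injective block :=
    finProdFinEquiv.symm.injective.comp ((Fin.castLE_injective h).comp rank.injective)
  refine ⟨fun x ↦ (block x).1, fun x y hxy ↦ ?_, fun i ↦ ?_⟩
  · exact Nat.div_le_div_right (c := L) (rank.monotone hxy)
  · calc #{x | (block x).1 = i} ≤ #(univ : Finset (Fin L)) := by
          refine card_le_card_of_injOn (fun x ↦ (block x).2) (fun _ _ ↦ mem_univ _) ?_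
          intro x hx y hy hxy
          exact hblock (Prod.ext ((mem_filter.1 hx).2.trans (mem_filter.1 hy).2.symm) hxy)
      _ = L := by simp

lemma exists_monotone_card_fiber_le_mul_card {θ : ℝ} {m : ℕ} (hθ : 0 < θ) (hm : 2 / θ ≤ m)
    (hV : m ≤ Fintype.card V) :
    ∃ f : V → Fin m, Monotone f ∧ ∀ i, (#{x | f x = i} : ℝ) ≤ θ * Fintype.card V := by
  have hm₀ : (0 : ℝ) < m := lt_of_lt_of_le (by positivity) hm
  obtain ⟨f, hf, hfiber⟩ := exists_monotone_card_fiber_le (V := V)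
    (Nat.lt_mul_div_succ (Fintype.card V) (Nat.cast_pos.1 hm₀)).le
  refine ⟨f, hf, fun i ↦ ?_⟩
  have hone : (1 : ℝ) ≤ Fintype.card V / m := (one_le_div hm₀).2 (mod_cast hV)
  calc (#{x | f x = i} : ℝ) ≤ (Fintype.card V / m : ℕ) + 1 := mod_cast hfiber i
    _ ≤ Fintype.card V / m + Fintype.card V / m := add_le_add Nat.cast_div_le hone
    _ = 2 / m * Fintype.card V := by ring
    _ ≤ θ * Fintype.card V := by
        gcongr
        exact (div_le_comm₀ hθ hm₀).1 hm

end Intervals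

section CleanedGraph

variable {V ι : Type*} [Fintype V] [DecidableEq V] [DecidableEq ι] {G : SimpleGraph V}
  [DecidableRel G.Adj] {P : Finpartition (univ : Finset V)} {f : V → ι} {δ β α : ℝ}

lemma isUniform_part_of_cleanedGraph_adj {x y : V} (h : (cleanedGraph G P f δ β α).Adj x y) :
    G.IsUniform δ (P.part x) (P.part y) ∧ β ≤ G.edgeDensity (P.part x) (P.part y) := by
  obtain ⟨⟨-, U, hU, W, hW, hx, hy, -, hunif, hdens⟩, -⟩ := h
  rw [P.part_eq_of_mem hU hx, P.part_eq_of_mem hW hy]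
  exact ⟨hunif, hdens⟩

lemma epsRegularPair_cell_of_cleanedGraph_adj {ε : ℝ} {x y : V}
    (h : (cleanedGraph G P f δ (β + δ) α).Adj x y) (hε : 0 ≤ ε) (hδα : δ ≤ α)
    (hδεα : δ ≤ ε * α) (hδε : δ ≤ ε / 2) :
    EpsRegularPair G ε (colorCell P f x) (colorCell P f y) ∧
      β ≤ pairDensity G (colorCell P f x) (colorCell P f y) := by
  obtain ⟨hunif, hdens⟩ := isUniform_part_of_cleanedGraph_adj h
  obtain ⟨-, -, hx, hy⟩ := h
  have hsub (z : V) : colorCell P f z ⊆ P.part z := filter_subset _ _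
  refine ⟨epsRegularPair_of_isUniform hunif hε hδα hδεα hδε (hsub x) (hsub y) hx hy, ?_⟩
  have hpair := abs_lt.1 <| abs_pairDensity_sub_edgeDensity_lt hunif (hsub x) (hsub y)
    (le_trans (by gcongr) hx) (le_trans (by gcongr) hy)
  linarith

end CleanedGraph

theorem exists_isNClique_cleanedGraph {V ι : Type*} [Fintype V] [Nonempty V] [DecidableEq V]
    [Fintype ι] [DecidableEq ι] {G : SimpleGraph V} [DecidableRel G.Adj]
    {P : Finpartition (univ : Finset V)} {f : V → ι} {k : ℕ} {η δ α : ℝ} (hk : 2 ≤ k)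
    (hη : 0 < η) (hδ : 0 < δ) (hα : 0 ≤ α) (hδη : δ ≤ η / 64) (hαη : α * Fintype.card ι ≤ η / 32)
    (hP : P.IsEquipartition) (hunif : P.IsUniform G δ) (hparts : 32 / η ≤ #P.parts)
    (hf : ∀ i, (#{x | f x = i} : ℝ) ≤ η / 16 * Fintype.card V)
    (hG : η * Fintype.card V ^ k ≤ cliqueCount G k) :
    ∃ s, (cleanedGraph G P f δ (η / 2 + δ) α).IsNClique k s := by
  refine exists_isNClique_of_card_deletedPairs_lt hk ?_ hG
  have hinternal : 2 / (#P.parts : ℝ) ≤ η / 16 := by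
    rw [div_le_div_iff₀ (lt_of_lt_of_le (by positivity) hparts) (by norm_num)]
    linarith [(div_le_iff₀' hη).1 hparts]
  calc (#(deletedPairs G (cleanedGraph G P f δ (η / 2 + δ) α)) : ℝ)
      ≤ (4 * δ + 2 / #P.parts + (η / 2 + δ) + η / 16 + 2 * (α * Fintype.card ι)) *
          Fintype.card V ^ 2 :=
        card_deletedPairs_cleanedGraph_le hP hunif hf hδ (by positivity) hα
    _ < η * Fintype.card V ^ 2 := by
        gcongr
        linarith

theorem exists_clique_regular_cells {ι : Type*} [Finite ι] [DecidableEq ι] {k : ℕ} (hk : 2 ≤ k)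
    {η ε : ℝ} (hη : 0 < η) (hε : 0 < ε) :
    ∃ γ : ℝ, 0 < γ ∧ ∃ n₀ : ℕ, ∀ (V : Type*) [Fintype V], n₀ ≤ Fintype.card V →
      ∀ (G : SimpleGraph V) (f : V → ι),
        (∀ i, (#{x | f x = i} : ℝ) ≤ η / 16 * Fintype.card V) →
        η * Fintype.card V ^ k ≤ cliqueCount G k →
        ∃ s : Finset V, #s = k ∧ ∃ A : V → Finset V,
          (∀ x, ∀ v ∈ A x, f v = f x) ∧
          ∀ x ∈ s, ∀ y ∈ s, x ≠ y → f x ≠ f y ∧ γ * Fintype.card V ≤ #(A x) ∧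
            EpsRegularPair G ε (A x) (A y) ∧ η / 2 ≤ pairDensity G (A x) (A y) := by
  classical
  have := Fintype.ofFinite ι
  let α := η / 32 / (Fintype.card ι + 1)
  let δ := min (η / 64) (min α (min (ε * α) (ε / 2)))
  let l := ⌈32 / η⌉₊
  let M := SzemerediRegularity.bound δ l
  have hα : 0 < α := by positivity
  have hδ : 0 < δ := by positivity
  have hM : (0 : ℝ) < M := mod_cast SzemerediRegularity.bound_pos δ l
  have hαη : α * Fintype.card ι ≤ η / 32 :=
    calc α * Fintype.card ι ≤ α * (Fintype.card ι + 1) := by gcongr; linarith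
      _ = η / 32 := div_mul_cancel₀ _ (by positivity)
  refine ⟨α / (2 * M), div_pos hα (mul_pos two_pos hM), l, fun V _ hV G f hf hG ↦ ?_⟩
  have : Nonempty V := Fintype.card_pos_iff.1 ((Nat.ceil_pos.2 (by positivity)).trans_le hV)
  obtain ⟨P, hP, hlP, hPM, hunif⟩ := szemeredi_regularity G hδ hV
  obtain ⟨s, hs, hsk⟩ := exists_isNClique_cleanedGraph hk hη hδ hα.le (min_le_left _ _) hαη hP
    hunif ((Nat.le_ceil _).trans (mod_cast hlP)) hf hG
  refine ⟨s, hsk, colorCell P f, fun x v hv ↦ (mem_filter.1 hv).2, fun x hx y hy hxy ↦ ?_⟩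
  have hadj := hs hx hy hxy
  refine ⟨hadj.2.1, ?_, epsRegularPair_cell_of_cleanedGraph_adj hadj hε.le (by simp [δ])
    (by simp [δ]) (by simp [δ])⟩
  calc α / (2 * M) * Fintype.card V = α * (Fintype.card V / (2 * M)) := by ring
    _ ≤ α * #(P.part x) := by
        gcongr
        exact le_card_part_of_isEquipartition hP hPM x
    _ ≤ #(colorCell P f x) := hadj.2.2.1

theorem stmt_18_general (k : ℕ) (hk : 2 ≤ k) (η ε : ℝ) (hη : 0 < η) (hε : 0 < ε) :
    ∃ γ : ℝ, 0 < γ ∧ ∃ n₀ : ℕ, ∀ (V : Type*) [Fintype V] [LinearOrder V],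
      n₀ ≤ Fintype.card V → ∀ G : SimpleGraph V,
        η * (Fintype.card V : ℝ) ^ k ≤ (cliqueCount G k : ℝ) →
        ∃ A : Fin k → Finset V,
          (∀ i j : Fin k, i < j → ∀ x ∈ A i, ∀ y ∈ A j, x < y) ∧
          (∀ i, γ * (Fintype.card V : ℝ) ≤ ((A i).card : ℝ)) ∧
          (∀ i j : Fin k, i < j →
            EpsRegularPair G ε (A i) (A j) ∧ η / 2 ≤ pairDensity G (A i) (A j)) := by
  obtain ⟨m, hm⟩ := exists_nat_ge (2 / (η / 16))
  obtain ⟨γ, hγ, n₀, h⟩ := exists_clique_regular_cells (ι := Fin m) hk hη hε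
  refine ⟨γ, hγ, max n₀ m, fun V _ _ hV G hG ↦ ?_⟩
  obtain ⟨hn₀, hmV⟩ := max_le_iff.1 hV
  obtain ⟨f, hf, hfiber⟩ := exists_monotone_card_fiber_le_mul_card (by positivity) hm hmV
  obtain ⟨s, hs, A, hAf, hA⟩ := h V hn₀ G f hfiber hG
  let v := s.orderEmbOfFin hs
  have hv {i j : Fin k} (hij : i ≠ j) := hA (v i) (s.orderEmbOfFin_mem hs i) (v j)
    (s.orderEmbOfFin_mem hs j) (v.injective.ne hij)
  refine ⟨fun i ↦ A (v i), fun i j hij x hx y hy ↦ hf.reflect_lt ?_, fun i ↦ ?_,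
    fun i j hij ↦ (hv hij.ne).2.2⟩
  · rw [hAf _ x hx, hAf _ y hy]
    exact (hf (v.monotone hij.le)).lt_of_ne (hv hij.ne).1
  · have : Nontrivial (Fin k) := Fin.nontrivial_iff_two_le.2 hk
    obtain ⟨j, hji⟩ := exists_ne i
    exact (hv hji.symm).2.1

theorem stmt_18 (k : ℕ) (hk : 2 ≤ k) (η ε : ℝ) (hη : 0 < η) (hε : 0 < ε) :
    ∃ γ : ℝ, 0 < γ ∧ ∃ n₀ : ℕ, ∀ n : ℕ, n₀ ≤ n →
      ∀ G : SimpleGraph (Fin n),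
        η * (n : ℝ) ^ k ≤ (cliqueCount G k : ℝ) →
        ∃ A : Fin k → Finset (Fin n),
          (∀ i j : Fin k, i < j → ∀ x ∈ A i, ∀ y ∈ A j, x < y) ∧
          (∀ i, γ * (n : ℝ) ≤ ((A i).card : ℝ)) ∧
          (∀ i j : Fin k, i < j →
            EpsRegularPair G ε (A i) (A j) ∧ η / 2 ≤ pairDensity G (A i) (A j)) := by
  obtain ⟨γ, hγ, n₀, h⟩ := stmt_18_general k hk η ε hη hε
  exact ⟨γ, hγ, n₀, fun n hn G hG ↦ by simpa using h (Fin n) (by simpa using hn) G (by simpa)⟩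
end
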